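/- There exists a C^∞ diffeomorphism T of the torus 𝕋² preserving the Haar–Lebesgue probability measure λ such that T is weakly mixing with respect to λ and the upper topological slow entropy of T with respect to the logarithmic scaling family a^{ln}_m(t) = (ln m)^t equals 1. -/

import Mathlib

open MeasureTheory Filter Set
open scoped Topology ENNReal NNReal

noncomputable section

/-- The Bowen metric `d_n^T(x,y) = max_{0 ≤ i ≤ n-1} d(T^i x, T^i y)`. -/
def bowenDist {X : Type*} [PseudoMetricSpace X] (T : X → X) (n : ℕ) (x y : X) : ℝ :=
  (((Finset.range n).sup fun i => nndist (T^[i] x) (T^[i] y)) : ℝ≥0)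

/-- `N_{d_n^T}(ε)`: the minimal number of `(ε,n)`-Bowen balls of `T` needed to cover the
whole space. -/
def bowenCoverNum {X : Type*} [PseudoMetricSpace X] (T : X → X) (n : ℕ) (ε : ℝ) : ℕ :=
  sInf {N : ℕ | ∃ F : Finset X, F.card = N ∧ ∀ y : X, ∃ x ∈ F, bowenDist T n x y < ε}

/-- `N(ε)`: the supremum (`0` if the set is empty, by the `Real.sSup` convention) of all
`t > 0` such that `limsup_n N_{d_n^T}(ε) / a_n(t) > 0`. -/
def topSlowEntFun {X : Type*} [PseudoMetricSpace X] (T : X → X) (a : ℕ → ℝ → ℝ) (ε : ℝ) : ℝ :=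
  sSup {t : ℝ | 0 < t ∧
    0 < Filter.atTop.limsup fun n => (bowenCoverNum T n ε : ℝ≥0∞) / ENNReal.ofReal (a n t)}

/-- The upper topological slow entropy of `T` with respect to the scaling family `a`
equals `E`, i.e. `N(ε) → E` as `ε → 0⁺`. -/
def HasUpperTopSlowEntropy {X : Type*} [PseudoMetricSpace X] (T : X → X)
    (a : ℕ → ℝ → ℝ) (E : ℝ) : Prop :=
  Filter.Tendsto (topSlowEntFun T a) (𝓝[>] (0 : ℝ)) (𝓝 E)

/-- The circle `𝕋¹ = ℝ/ℤ` with its quotient metric and Haar–Lebesgue probability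
measure `volume`. -/
abbrev Torus1 : Type := AddCircle (1 : ℝ)

/-- The 2-torus `𝕋² = ℝ²/ℤ²`, with its quotient (flat) metric, its Borel σ-algebra and
its Haar–Lebesgue probability measure `volume`. -/
abbrev Torus2 : Type := AddCircle (1 : ℝ) × AddCircle (1 : ℝ)

/-- Canonical projection `ℝ² → 𝕋²`. -/
def torusProj : ℝ × ℝ → Torus2 := fun p => ((p.1 : Torus1), (p.2 : Torus1))

/-- `F : ℝ² → ℝ²` is a lift of `T : 𝕋² → 𝕋²`. -/
def IsLiftOf (F : ℝ × ℝ → ℝ × ℝ) (T : Torus2 → Torus2) : Prop :=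
  ∀ p, torusProj (F p) = T (torusProj p)

/-- `T` is a `C^k` diffeomorphism of the torus: it is a bijection and both `T` and `T⁻¹`
admit `C^k` lifts to the universal cover `ℝ²`. -/
def IsCkTorusDiffeo (k : ℕ∞) (T : Torus2 → Torus2) : Prop :=
  Function.Bijective T ∧
  (∃ F : ℝ × ℝ → ℝ × ℝ, ContDiff ℝ k F ∧ IsLiftOf F T) ∧
  (∃ G : ℝ × ℝ → ℝ × ℝ, ContDiff ℝ k G ∧ IsLiftOf G (Function.invFun T))

/-- `T` is weakly mixing w.r.t. the measure `μ`: `T × T` is ergodic for `μ × μ`. -/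
def WeaklyMixing {X : Type*} [MeasurableSpace X] (T : X → X) (μ : Measure X) : Prop :=
  Ergodic (fun p : X × X => (T p.1, T p.2)) (μ.prod μ)

/-- `T` is uniquely ergodic with the Haar–Lebesgue measure `volume` as its unique
invariant Borel probability measure. -/
def UniquelyErgodicWithVolume (T : Torus2 → Torus2) : Prop :=
  MeasurePreserving T volume volume ∧
  ∀ μ : Measure Torus2, IsProbabilityMeasure μ → MeasurePreserving T μ μ → μ = volume

/-- `T` (preserving the Haar measure `volume` on `𝕋²`) is measure-theoretically isomorphic
to the rotation of the circle `𝕋¹ = ℝ/ℤ` by some irrational number `α`. -/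
def IsoToIrrationalRotation (T : Torus2 → Torus2) : Prop :=
  ∃ α : ℝ, Irrational α ∧
    ∃ (A : Set Torus2) (B : Set Torus1) (ψ : Torus2 → Torus1) (φ : Torus1 → Torus2),
      MeasurableSet A ∧ MeasurableSet B ∧
      volume Aᶜ = 0 ∧ volume Bᶜ = 0 ∧
      Set.MapsTo T A A ∧ Set.MapsTo (fun y : Torus1 => y + (α : Torus1)) B B ∧
      Measurable ψ ∧ Measurable φ ∧
      Set.MapsTo ψ A B ∧ Set.MapsTo φ B A ∧
      (∀ x ∈ A, φ (ψ x) = x) ∧ (∀ y ∈ B, ψ (φ y) = y) ∧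
      Measure.map ψ volume = volume ∧
      (∀ x ∈ A, ψ (T x) = ψ x + (α : Torus1))

/-- A finite measurable partition of `X`. -/
structure FinMeasPartition (X : Type*) [MeasurableSpace X] where
  card : ℕ
  piece : Fin card → Set X
  measurable : ∀ i, MeasurableSet (piece i)
  disjoint : Pairwise fun i j => Disjoint (piece i) (piece j)
  cover : (⋃ i, piece i) = Set.univ

open Classical in
/-- The normalized Hamming distance between the length-`n` `P`-codings of the `T`-orbits
of `x` and `y` (the codings differ at time `k` iff `T^k x` and `T^k y` lie in different
pieces of `P`). -/
def codeHammingDist {X : Type*} [MeasurableSpace X] (T : X → X) (P : FinMeasPartition X)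
    (n : ℕ) (x y : X) : ℝ :=
  (((Finset.range n).filter fun k =>
      ¬ ∃ i, T^[k] x ∈ P.piece i ∧ T^[k] y ∈ P.piece i).card : ℝ) / n

/-- `S^H_P(T,n,ε)`: the minimal number of `(ε,n)`-Hamming balls whose union has
`μ`-measure greater than `1 - ε`. -/
def hammingCoverNum {X : Type*} [MeasurableSpace X] (μ : Measure X) (T : X → X)
    (P : FinMeasPartition X) (n : ℕ) (ε : ℝ) : ℕ :=
  sInf {N : ℕ | ∃ F : Finset X, F.card = N ∧
    ENNReal.ofReal (1 - ε) < μ (⋃ x ∈ F, {y | codeHammingDist T P n x y < ε})}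

/-- For a fixed partition `P` and `ε > 0`: the supremum (with the `Real.sSup` convention,
`0` if the set is empty) of all `t > 0` with `limsup_n S^H_P(T,n,ε)/a_n(t) > 0`. -/
def measSlowEntFun {X : Type*} [MeasurableSpace X] (μ : Measure X) (T : X → X)
    (a : ℕ → ℝ → ℝ) (P : FinMeasPartition X) (ε : ℝ) : ℝ :=
  sSup {t : ℝ | 0 < t ∧
    0 < Filter.atTop.limsup fun n =>
      (hammingCoverNum μ T P n ε : ℝ≥0∞) / ENNReal.ofReal (a n t)}

/-- The upper measure-theoretic slow entropy of `(T,μ)` w.r.t. the scaling family `a`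
equals `E`: for every finite measurable partition the limit as `ε → 0⁺` exists, and the
least upper bound over all partitions of these limits is `E`. -/
def HasUpperMeasSlowEntropy {X : Type*} [MeasurableSpace X] (μ : Measure X) (T : X → X)
    (a : ℕ → ℝ → ℝ) (E : ℝ) : Prop :=
  (∀ P : FinMeasPartition X, ∃ e : ℝ,
      Filter.Tendsto (measSlowEntFun μ T a P) (𝓝[>] (0 : ℝ)) (𝓝 e)) ∧
  IsLUB {e : ℝ | ∃ P : FinMeasPartition X,
      Filter.Tendsto (measSlowEntFun μ T a P) (𝓝[>] (0 : ℝ)) (𝓝 e)} E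

/-- `Γ_r(x) = (Γ(x^{1/r} + 1))^r`, where `Γ` is the Euler Gamma function. -/
def GammaR (r : ℕ) (x : ℝ) : ℝ := (Real.Gamma (x ^ ((r : ℝ)⁻¹) + 1)) ^ r

/-- The inverse of `Γ_r` on `[1,∞)` (where `Γ_r` is strictly increasing with `Γ_r 1 = 1`). -/
def GammaRInv (r : ℕ) (y : ℝ) : ℝ := sSup {x : ℝ | 1 ≤ x ∧ GammaR r x ≤ y}

/-- The intermediate scaling family `a^{int1,r}_m(t) = m^(t / Γ_r⁻¹(ln m / ln q₁))`. -/
def intScale1 (r q₁ : ℕ) (m : ℕ) (t : ℝ) : ℝ :=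
  (m : ℝ) ^ (t / GammaRInv r (Real.log m / Real.log q₁))

/-- The intermediate scaling family
`a^{int2,r}_m(t) = m^(t / (Γ_r⁻¹(ln m / ln q₁))^((r-2)/r))`. -/
def intScale2 (r q₁ : ℕ) (m : ℕ) (t : ℝ) : ℝ :=
  (m : ℝ) ^ (t / GammaRInv r (Real.log m / Real.log q₁) ^ (((r : ℝ) - 2) / (r : ℝ)))

/-- The logarithmic scaling family `a^{ln}_m(t) = (ln m)^t`. -/
def logScale (m : ℕ) (t : ℝ) : ℝ := Real.log m ^ t

/-- The polynomial scaling family `a^{pol}_m(t) = m^t`. -/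
def polScale (m : ℕ) (t : ℝ) : ℝ := (m : ℝ) ^ t

end

/-!
Let `T` be the time-one map of a smooth time change of the linear flow of slope `α` on the torus,
written in coordinates in which its invariant measure is Lebesgue measure. The time change is given
by the travel time along the leaves, in which rational approximations `p k / q k` of `α` with the
small divisors `θ k = q k * α - p k` produce waves of amplitude `A k` and frequency `q k`. In time
`s`, the travel time along a leaf varies with the leaf at a rate of the order of
`∑ k, q k * A k * min 1 (θ k * s)`.

If `α` is approximated superexponentially well, this rate can be kept `O(log s)`, so that
`O(log n)` Bowen balls of length `n` cover the torus. At the time `n k ≈ 1 / (2 * θ k)` the `k`-th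
wave dominates all others. The travel times of different leaves are then spread over an interval of
length about `A k`, so that about `A k` Bowen balls are needed, and `A k` is chosen to outgrow
`log (n k) ^ t` for all `t < 1`. At the same times, transversal segments are stretched along the
irrational flow by a large factor with an almost sinusoidal profile. Integration by parts then
shows that `T` is mixing along `n k`, hence weakly mixing.
-/

open scoped ContDiff Interval

section SmoothAnalysis

variable {E F : Type*} [NormedAddCommGroup E] [NormedSpace ℝ E]
  [NormedAddCommGroup F] [NormedSpace ℝ F]

lemma norm_iteratedFDeriv_cos_comp_le (ℓ : E →L[ℝ] ℝ) (k : ℕ) (x : E) :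
    ‖iteratedFDeriv ℝ k (fun z ↦ Real.cos (ℓ z)) x‖ ≤ ‖ℓ‖ ^ k := by
  have hcos : ‖iteratedFDeriv ℝ k Real.cos (ℓ x)‖ ≤ 1 := by
    rw [norm_iteratedFDeriv_eq_norm_iteratedDeriv]
    exact Real.abs_iteratedDeriv_cos_le_one _ _
  calc ‖iteratedFDeriv ℝ k (Real.cos ∘ ℓ) x‖
      = ‖(iteratedFDeriv ℝ k Real.cos (ℓ x)).compContinuousLinearMap fun _ ↦ ℓ‖ := by
        rw [ℓ.iteratedFDeriv_comp_right Real.contDiff_cos x (n := ∞) (by exact_mod_cast le_top)]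
    _ ≤ ‖iteratedFDeriv ℝ k Real.cos (ℓ x)‖ * ∏ _i : Fin k, ‖ℓ‖ :=
        ContinuousMultilinearMap.norm_compContinuousLinearMap_le _ _
    _ ≤ 1 * ‖ℓ‖ ^ k := by
        rw [Finset.prod_const, Finset.card_univ, Fintype.card_fin]
        gcongr
    _ = ‖ℓ‖ ^ k := one_mul _

lemma contDiff_tsum_mul_cos (c M : ℕ → ℝ) (ℓ : ℕ → E →L[ℝ] ℝ) (hM : ∀ j, ‖ℓ j‖ ≤ M j)
    (hs : ∀ r : ℕ, Summable fun j ↦ |c j| * M j ^ r) :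
    ContDiff ℝ ∞ fun z ↦ ∑' j, c j * Real.cos (ℓ j z) := by
  refine contDiff_tsum (v := fun r j ↦ |c j| * M j ^ r) (fun j ↦ by fun_prop) (fun k _ ↦ hs k) ?_
  intro k j x _
  have hcos : ContDiffAt ℝ k (fun z ↦ Real.cos (ℓ j z)) x := by fun_prop
  calc ‖iteratedFDeriv ℝ k (fun z ↦ c j • Real.cos (ℓ j z)) x‖
      = |c j| * ‖iteratedFDeriv ℝ k (fun z ↦ Real.cos (ℓ j z)) x‖ := by
        rw [iteratedFDeriv_const_smul_apply' hcos, norm_smul, Real.norm_eq_abs]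
    _ ≤ |c j| * M j ^ k := by
        gcongr
        exact (norm_iteratedFDeriv_cos_comp_le _ _ _).trans (by gcongr; exact hM j)

variable {f : E × ℝ → F}

lemma hasFDerivAt_intervalIntegral_param (hf : ContDiff ℝ 1 f) (x : E) (a b : ℝ) :
    HasFDerivAt (fun y ↦ ∫ t in a..b, f (y, t))
      (∫ t in a..b, (fderiv ℝ f (x, t)).comp (.inl ℝ E ℝ)) x := by
  set g : E → ℝ → E →L[ℝ] F := fun y t ↦ (fderiv ℝ f (y, t)).comp (.inl ℝ E ℝ)
  have hg : Continuous fun p : E × ℝ ↦ g p.1 p.2 :=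
    (hf.continuous_fderiv one_ne_zero).clm_comp continuous_const
  have hgx : Continuous (g x) := hg.comp (by fun_prop : Continuous fun t : ℝ ↦ (x, t))
  have hnear : ∀ᶠ y in 𝓝 x, ∀ t ∈ [[a, b]], ‖g y t‖ < ‖g x t‖ + 1 := by
    refine isCompact_uIcc.eventually_forall_of_forall_eventually fun t _ ↦ ?_
    exact (by fun_prop : Continuous fun p : E × ℝ ↦ ‖g p.1 p.2‖).continuousAt.eventually_lt
      (by fun_prop : Continuous fun p : E × ℝ ↦ ‖g x p.2‖ + 1).continuousAt (lt_add_one _)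
  have hcont : ∀ y, Continuous fun t ↦ f (y, t) := fun y ↦ by fun_prop
  refine intervalIntegral.hasFDerivAt_integral_of_dominated_of_fderiv_le
    (s := {y | ∀ t ∈ [[a, b]], ‖g y t‖ < ‖g x t‖ + 1}) (F' := g) (bound := fun t ↦ ‖g x t‖ + 1)
    hnear (.of_forall fun y ↦ (hcont y).aestronglyMeasurable)
    ((hcont x).intervalIntegrable _ _) hgx.aestronglyMeasurable
    (.of_forall fun t ht y hy ↦ (hy t (uIoc_subset_uIcc ht)).le)
    ((hgx.norm.add continuous_const).intervalIntegrable _ _)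
    (.of_forall fun t _ y _ ↦ ?_)
  exact ((hf.differentiable one_ne_zero _).hasFDerivAt).comp y (hasFDerivAt_prodMk_left y t)

end SmoothAnalysis

lemma contDiff_nat_intervalIntegral_param.{u} {E : Type u} [NormedAddCommGroup E]
    [NormedSpace ℝ E] (a b : ℝ) (n : ℕ) :
    ∀ {F : Type u} [NormedAddCommGroup F] [NormedSpace ℝ F] {f : E × ℝ → F},
      ContDiff ℝ ∞ f → ContDiff ℝ n fun x ↦ ∫ t in a..b, f (x, t) := by
  induction n with
  | zero =>
    intro F _ _ f hf
    rw [Nat.cast_zero, contDiff_zero]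
    exact intervalIntegral.continuous_parametric_intervalIntegral_of_continuous' (by fun_prop) a b
  | succ n ih =>
    intro F _ _ f hf
    rw [Nat.cast_succ, contDiff_succ_iff_hasFDerivAt]
    refine ⟨_, ih (f := fun p ↦ (fderiv ℝ f p).comp (.inl ℝ E ℝ)) ?_, fun x ↦
      hasFDerivAt_intervalIntegral_param (hf.of_le (by simp)) x a b⟩
    exact (hf.fderiv_right (by simp)).clm_comp contDiff_const

lemma contDiff_intervalIntegral_param.{u} {E F : Type u} [NormedAddCommGroup E] [NormedSpace ℝ E]
    [NormedAddCommGroup F] [NormedSpace ℝ F] {f : E × ℝ → F} (hf : ContDiff ℝ ∞ f) (a b : ℝ) :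
    ContDiff ℝ ∞ fun x ↦ ∫ t in a..b, f (x, t) :=
  contDiff_infty.2 fun n ↦ contDiff_nat_intervalIntegral_param a b n hf

section FiberIntegral

/-- The primitive `(x, y) ↦ ∫₀^y r(x, t) dt` of `r` along the vertical fibres of the plane. -/
noncomputable def fiberIntegral (r : ℝ × ℝ → ℝ) (z : ℝ × ℝ) : ℝ := ∫ t in (0 : ℝ)..z.2, r (z.1, t)

variable {r : ℝ × ℝ → ℝ} {c C : ℝ}

@[simp]
lemma fiberIntegral_zero (x : ℝ) : fiberIntegral r (x, 0) = 0 := intervalIntegral.integral_same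

lemma contDiff_fiberIntegral (hr : ContDiff ℝ ∞ r) : ContDiff ℝ ∞ (fiberIntegral r) := by
  have hscale : fiberIntegral r = fun z ↦ z.2 * ∫ t in (0 : ℝ)..1, r (z.1, z.2 * t) := by
    ext z
    simpa [fiberIntegral] using (intervalIntegral.mul_integral_comp_mul_left z.2
      (f := fun t ↦ r (z.1, t)) (a := 0) (b := 1)).symm
  rw [hscale]
  refine contDiff_snd.mul (contDiff_intervalIntegral_param
    (f := fun p : (ℝ × ℝ) × ℝ ↦ r (p.1.1, p.1.2 * p.2)) ?_ 0 1)
  fun_prop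

lemma hasDerivAt_fiberIntegral (hr : Continuous r) (x y : ℝ) :
    HasDerivAt (fun t ↦ fiberIntegral r (x, t)) (r (x, y)) y :=
  (by fun_prop : Continuous fun t ↦ r (x, t)).integral_hasStrictDerivAt 0 y |>.hasDerivAt

lemma fiberIntegral_sub (hr : Continuous r) (x y y' : ℝ) :
    fiberIntegral r (x, y') - fiberIntegral r (x, y) = ∫ t in y..y', r (x, t) :=
  intervalIntegral.integral_interval_sub_left
    ((by fun_prop : Continuous fun t ↦ r (x, t)).intervalIntegrable _ _)
    ((by fun_prop : Continuous fun t ↦ r (x, t)).intervalIntegrable _ _)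

lemma mul_sub_le_fiberIntegral_sub (hr : Continuous r) (hcr : ∀ z, c ≤ r z) (x : ℝ) {y y' : ℝ}
    (hy : y ≤ y') : c * (y' - y) ≤ fiberIntegral r (x, y') - fiberIntegral r (x, y) := by
  rw [fiberIntegral_sub hr]
  simpa [mul_comm] using intervalIntegral.integral_mono_on (μ := volume) hy intervalIntegrable_const
    ((by fun_prop : Continuous fun t ↦ r (x, t)).intervalIntegrable _ _) fun t _ ↦ hcr (x, t)

lemma fiberIntegral_sub_le_mul_sub (hr : Continuous r) (hrC : ∀ z, r z ≤ C) (x : ℝ) {y y' : ℝ}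
    (hy : y ≤ y') : fiberIntegral r (x, y') - fiberIntegral r (x, y) ≤ C * (y' - y) := by
  rw [fiberIntegral_sub hr]
  simpa [mul_comm] using intervalIntegral.integral_mono_on (μ := volume) hy
    ((by fun_prop : Continuous fun t ↦ r (x, t)).intervalIntegrable _ _) intervalIntegrable_const
    fun t _ ↦ hrC (x, t)

lemma bijective_fiberIntegral (hr : Continuous r) (hc : 0 < c) (hcr : ∀ z, c ≤ r z) (x : ℝ) :
    Function.Bijective fun y ↦ fiberIntegral r (x, y) := by
  have hmono : StrictMono fun y ↦ fiberIntegral r (x, y) := fun y y' hy ↦ by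
    have h := mul_sub_le_fiberIntegral_sub hr hcr x hy.le
    have := mul_pos hc (sub_pos.2 hy)
    dsimp only
    linarith
  refine ⟨hmono.injective, Continuous.surjective ?_ ?_ ?_⟩
  · exact continuous_iff_continuousAt.2 fun y ↦ (hasDerivAt_fiberIntegral hr x y).continuousAt
  · refine tendsto_atTop_mono' _ ?_ (tendsto_id.const_mul_atTop hc)
    filter_upwards [eventually_ge_atTop 0] with y hy
    simpa using mul_sub_le_fiberIntegral_sub hr hcr x hy
  · refine tendsto_atBot_mono' _ ?_ (tendsto_id.const_mul_atBot hc)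
    filter_upwards [eventually_le_atBot 0] with y hy
    have := mul_sub_le_fiberIntegral_sub hr hcr x hy
    rw [fiberIntegral_zero] at this
    dsimp only [id]
    linarith

lemma hasFDerivAt_fiberIntegral_equiv (hr : ContDiff ℝ ∞ r) {z : ℝ × ℝ} (hz : r z ≠ 0) :
    ∃ e : (ℝ × ℝ) ≃L[ℝ] ℝ × ℝ,
      HasFDerivAt (fun p : ℝ × ℝ ↦ (p.1, fiberIntegral r p)) (e : ℝ × ℝ →L[ℝ] ℝ × ℝ) z := by
  have hd := ((contDiff_fiberIntegral hr).differentiable (by simp) z).hasFDerivAt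
  set L := (ContinuousLinearMap.fst ℝ ℝ ℝ).prod (fderiv ℝ (fiberIntegral r) z) with hL
  have hvert : fderiv ℝ (fiberIntegral r) z (0, 1) = r z := by
    have hline : HasDerivAt (fun y ↦ (z.1, y)) ((0 : ℝ), (1 : ℝ)) z.2 :=
      (hasDerivAt_const _ _).prodMk (hasDerivAt_id _)
    exact (hd.comp_hasDerivAt (f := fun y ↦ (z.1, y)) z.2 hline).unique
      (hasDerivAt_fiberIntegral hr.continuous z.1 z.2)
  have hinj : Function.Injective L := by
    rw [injective_iff_map_eq_zero]
    rintro ⟨u, v⟩ huv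
    obtain ⟨rfl, hv⟩ : u = 0 ∧ fderiv ℝ (fiberIntegral r) z (u, v) = 0 := by
      simpa [hL] using huv
    have hmul : fderiv ℝ (fiberIntegral r) z (0, v) = v * r z := by
      rw [← hvert, ← smul_eq_mul, ← map_smul]
      simp
    simpa [hz] using hmul.symm.trans hv
  exact ⟨(LinearEquiv.ofInjectiveEndo L.toLinearMap hinj).toContinuousLinearEquiv,
    hasFDerivAt_fst.prodMk hd⟩

/-- The homeomorphism `(x, y) ↦ (x, ∫₀^y r(x, t) dt)` of the plane, for a smooth density `r`
bounded below by a positive constant. It straightens `r dx dy` to Lebesgue measure. -/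
noncomputable def fiberHomeo (hr : ContDiff ℝ ∞ r) (hc : 0 < c) (hcr : ∀ z, c ≤ r z) :
    ℝ × ℝ ≃ₜ ℝ × ℝ :=
  (Equiv.ofBijective (fun z : ℝ × ℝ ↦ (z.1, fiberIntegral r z)) (by
    have hbij := bijective_fiberIntegral hr.continuous hc hcr
    refine ⟨fun z w hzw ↦ ?_, fun w ↦ ?_⟩
    · obtain ⟨x, y⟩ := z
      obtain ⟨rfl, h⟩ : x = w.1 ∧ fiberIntegral r (x, y) = fiberIntegral r w := by simpa using hzw
      exact Prod.ext rfl ((hbij w.1).1 h)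
    · obtain ⟨y, hy⟩ := (hbij w.1).2 w.2
      exact ⟨(w.1, y), Prod.ext rfl hy⟩)).toHomeomorphOfContinuousOpen
    (continuous_fst.prodMk (contDiff_fiberIntegral hr).continuous) (by
      choose e he using fun z ↦
        hasFDerivAt_fiberIntegral_equiv hr (z := z) (hc.trans_le (hcr z)).ne'
      exact isOpenMap_of_hasStrictFDerivAt_equiv fun z ↦ (contDiff_fst.prodMk
        (contDiff_fiberIntegral hr)).contDiffAt.hasStrictFDerivAt' (he z) (by simp))

variable (hr : ContDiff ℝ ∞ r) (hc : 0 < c) (hcr : ∀ z, c ≤ r z)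

@[simp]
lemma fiberHomeo_symm_apply_fst (z : ℝ × ℝ) : ((fiberHomeo hr hc hcr).symm z).1 = z.1 := by
  have h := congrArg Prod.fst ((fiberHomeo hr hc hcr).apply_symm_apply z)
  exact h

lemma contDiff_fiberHomeo : ContDiff ℝ ∞ (fiberHomeo hr hc hcr) :=
  contDiff_fst.prodMk (contDiff_fiberIntegral hr)

lemma contDiff_fiberHomeo_symm : ContDiff ℝ ∞ (fiberHomeo hr hc hcr).symm := by
  choose e he using fun z ↦ hasFDerivAt_fiberIntegral_equiv hr (z := z) (hc.trans_le (hcr z)).ne'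
  exact (fiberHomeo hr hc hcr).contDiff_symm he (contDiff_fiberHomeo hr hc hcr)

include hc hcr in
lemma lintegral_comp_fiberIntegral (hr : Continuous r) (x : ℝ) (g : ℝ → ℝ≥0∞) :
    ∫⁻ y, g (fiberIntegral r (x, y)) * ENNReal.ofReal (r (x, y)) = ∫⁻ s, g s := by
  have hbij := bijective_fiberIntegral hr hc hcr x
  have h := lintegral_image_eq_lintegral_abs_deriv_mul MeasurableSet.univ
    (fun y _ ↦ (hasDerivAt_fiberIntegral hr x y).hasDerivWithinAt) hbij.1.injOn g
  rw [image_univ, hbij.2.range_eq, Measure.restrict_univ] at h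
  rw [h]
  exact lintegral_congr fun y ↦ by rw [abs_of_pos (hc.trans_le (hcr _)), mul_comm]

lemma measurePreserving_fiberHomeo :
    MeasurePreserving (fiberHomeo hr hc hcr)
      (volume.withDensity fun z ↦ ENNReal.ofReal (r z)) volume := by
  have hmeas : Measurable fun z ↦ ENNReal.ofReal (r z) := hr.continuous.measurable.ennreal_ofReal
  have hΦ : Measurable (fiberHomeo hr hc hcr) := (fiberHomeo hr hc hcr).continuous.measurable
  refine ⟨hΦ, Measure.ext_of_lintegral _ fun g hg ↦ ?_⟩
  calc ∫⁻ w, g w ∂(volume.withDensity fun z ↦ ENNReal.ofReal (r z)).map (fiberHomeo hr hc hcr)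
      = ∫⁻ z, ENNReal.ofReal (r z) * g (fiberHomeo hr hc hcr z) := by
        rw [lintegral_map hg hΦ]
        exact lintegral_withDensity_eq_lintegral_mul _ hmeas (hg.comp hΦ)
    _ = ∫⁻ x, ∫⁻ y, ENNReal.ofReal (r (x, y)) * g (x, fiberIntegral r (x, y)) :=
        lintegral_prod _ (hmeas.mul (hg.comp hΦ)).aemeasurable
    _ = ∫⁻ x, ∫⁻ s, g (x, s) :=
        lintegral_congr fun x ↦ (lintegral_congr fun y ↦ mul_comm _ _).trans
          (lintegral_comp_fiberIntegral hc hcr hr.continuous x fun s ↦ g (x, s))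
    _ = ∫⁻ w, g w := (lintegral_prod _ hg.aemeasurable).symm

end FiberIntegral

section Torus

/-- The lattice `ℤ²` of integer translations of the plane. -/
def intLattice : AddSubgroup (ℝ × ℝ) :=
  ((Int.castAddHom ℝ).prodMap (Int.castAddHom ℝ)).range

lemma mem_intLattice {v : ℝ × ℝ} : v ∈ intLattice ↔ ∃ m n : ℤ, v = ((m : ℝ), (n : ℝ)) := by
  rw [intLattice, AddMonoidHom.mem_range, Prod.exists]
  exact exists₂_congr fun m n ↦ eq_comm

instance : Countable intLattice :=
  ((Int.castAddHom ℝ).prodMap (Int.castAddHom ℝ)).rangeRestrict_surjective.countable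

lemma torusProj_eq_torusProj_iff {z w : ℝ × ℝ} :
    torusProj z = torusProj w ↔ w - z ∈ intLattice := by
  have hcoe (x y : ℝ) : (x : Torus1) = (y : Torus1) ↔ ∃ m : ℤ, y - x = m := by
    rw [eq_comm, ← sub_eq_zero, ← AddCircle.coe_sub, AddCircle.coe_eq_zero_iff]
    simp [eq_comm]
  rw [torusProj, torusProj, Prod.mk.injEq, hcoe, hcoe, mem_intLattice]
  simp [Prod.ext_iff]

lemma torusProj_add_of_mem {v : ℝ × ℝ} (hv : v ∈ intLattice) (z : ℝ × ℝ) :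
    torusProj (z + v) = torusProj z :=
  (torusProj_eq_torusProj_iff.2 (by simpa)).symm

lemma isOpenQuotientMap_torusProj : IsOpenQuotientMap torusProj :=
  QuotientAddGroup.isOpenQuotientMap_mk.prodMap QuotientAddGroup.isOpenQuotientMap_mk

/-- The half-open unit square, a fundamental domain of `ℤ²`. -/
def unitSquare : Set (ℝ × ℝ) := Ioc 0 1 ×ˢ Ioc 0 1

lemma measurableSet_unitSquare : MeasurableSet unitSquare :=
  measurableSet_Ioc.prod measurableSet_Ioc

lemma measurePreserving_torusProj :
    MeasurePreserving torusProj (volume.restrict unitSquare) volume := by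
  have h := (AddCircle.measurePreserving_mk 1 0).prod (AddCircle.measurePreserving_mk 1 0)
  rwa [zero_add, Measure.prod_restrict] at h

lemma isAddFundamentalDomain_unitSquare : IsAddFundamentalDomain intLattice unitSquare := by
  refine IsAddFundamentalDomain.mk' measurableSet_unitSquare.nullMeasurableSet fun z ↦ ?_
  obtain ⟨m, hm, hm'⟩ := existsUnique_add_zsmul_mem_Ioc one_pos z.1 0
  obtain ⟨n, hn, hn'⟩ := existsUnique_add_zsmul_mem_Ioc one_pos z.2 0
  simp only [zsmul_eq_mul, mul_one, zero_add] at hm hm' hn hn'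
  refine ⟨⟨(m, n), mem_intLattice.2 ⟨m, n, rfl⟩⟩, ?_, ?_⟩
  · simp [unitSquare, AddSubgroup.vadd_def, add_comm _ z.1, add_comm _ z.2, -mem_Ioc, hm, hn]
  · rintro ⟨v, hv⟩ hvz
    obtain ⟨m', n', rfl⟩ := mem_intLattice.1 hv
    have hvz' : z.1 + m' ∈ Ioc (0 : ℝ) 1 ∧ z.2 + n' ∈ Ioc (0 : ℝ) 1 := by
      simpa [unitSquare, AddSubgroup.vadd_def, add_comm] using hvz
    simp [hm' _ hvz'.1, hn' _ hvz'.2]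

/-- Invariance of a function on the plane under integer translations. -/
def IsIntInvariant {X : Type*} (F : ℝ × ℝ → X) : Prop := ∀ z, ∀ v ∈ intLattice, F (z + v) = F z

/-- Equivariance of a self-map of the plane under integer translations. -/
def IsIntEquivariant (F : ℝ × ℝ → ℝ × ℝ) : Prop := ∀ z, ∀ v ∈ intLattice, F (z + v) = F z + v

lemma isIntInvariant_iff {X : Type*} {F : ℝ × ℝ → X} :
    IsIntInvariant F ↔ ∀ (x y : ℝ) (m n : ℤ), F (x + m, y + n) = F (x, y) := by
  refine ⟨fun h x y m n ↦ h (x, y) _ (mem_intLattice.2 ⟨m, n, rfl⟩), fun h z v hv ↦ ?_⟩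
  obtain ⟨m, n, rfl⟩ := mem_intLattice.1 hv
  exact h z.1 z.2 m n

lemma isIntEquivariant_iff {F : ℝ × ℝ → ℝ × ℝ} :
    IsIntEquivariant F ↔ ∀ (x y : ℝ) (m n : ℤ),
      F (x + m, y + n) = F (x, y) + ((m : ℝ), (n : ℝ)) := by
  refine ⟨fun h x y m n ↦ h (x, y) _ (mem_intLattice.2 ⟨m, n, rfl⟩), fun h z v hv ↦ ?_⟩
  obtain ⟨m, n, rfl⟩ := mem_intLattice.1 hv
  exact h z.1 z.2 m n

/-- The function on the torus induced by an invariant function on the plane (for a function that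
is not invariant, its values on an arbitrary set of representatives). -/
noncomputable def torusDescend {X : Type*} (F : ℝ × ℝ → X) : Torus2 → X :=
  F ∘ Function.surjInv isOpenQuotientMap_torusProj.surjective

/-- The self-map of the torus induced by an equivariant self-map of the plane. -/
noncomputable def torusEndo (F : ℝ × ℝ → ℝ × ℝ) : Torus2 → Torus2 := torusDescend (torusProj ∘ F)

section Descend

variable {X : Type*} {f : ℝ × ℝ → X} {F G : ℝ × ℝ → ℝ × ℝ}

lemma IsIntInvariant.torusDescend_torusProj (hf : IsIntInvariant f) (z : ℝ × ℝ) :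
    torusDescend f (torusProj z) = f z := by
  have h := torusProj_eq_torusProj_iff.1
    (Function.surjInv_eq isOpenQuotientMap_torusProj.surjective (torusProj z)).symm
  simpa [torusDescend] using hf z _ h

lemma IsIntInvariant.continuous_torusDescend [TopologicalSpace X] (hf : IsIntInvariant f)
    (hc : Continuous f) : Continuous (torusDescend f) := by
  rwa [isOpenQuotientMap_torusProj.isQuotientMap.continuous_iff,
    show torusDescend f ∘ torusProj = f from funext hf.torusDescend_torusProj]

lemma IsIntEquivariant.isIntInvariant_torusProj_comp (hF : IsIntEquivariant F) :
    IsIntInvariant (torusProj ∘ F) := fun z v hv ↦ by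
  rw [Function.comp_apply, hF z v hv, torusProj_add_of_mem hv, Function.comp_apply]

lemma IsIntEquivariant.torusProj_vertical_one (hF : IsIntEquivariant F) (a : ℝ) :
    torusProj (F (a, 1)) = torusProj (F (a, 0)) := by
  have h := hF.isIntInvariant_torusProj_comp (a, 0) (0, 1) (mem_intLattice.2 ⟨0, 1, by simp⟩)
  rwa [Prod.mk_add_mk, add_zero, zero_add] at h

lemma IsIntEquivariant.torusEndo_torusProj (hF : IsIntEquivariant F) (z : ℝ × ℝ) :
    torusEndo F (torusProj z) = torusProj (F z) :=
  hF.isIntInvariant_torusProj_comp.torusDescend_torusProj z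

lemma IsIntEquivariant.continuous_torusEndo (hF : IsIntEquivariant F) (hc : Continuous F) :
    Continuous (torusEndo F) :=
  hF.isIntInvariant_torusProj_comp.continuous_torusDescend
    (isOpenQuotientMap_torusProj.continuous.comp hc)

lemma IsIntEquivariant.symm {F : ℝ × ℝ ≃ₜ ℝ × ℝ} (hF : IsIntEquivariant F) :
    IsIntEquivariant F.symm := fun z v hv ↦ by
  rw [Homeomorph.symm_apply_eq, hF _ v hv, Homeomorph.apply_symm_apply]

lemma IsIntEquivariant.leftInverse_torusEndo (hF : IsIntEquivariant F) (hG : IsIntEquivariant G)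
    (h : Function.LeftInverse G F) : Function.LeftInverse (torusEndo G) (torusEndo F) := fun p ↦ by
  obtain ⟨z, rfl⟩ := isOpenQuotientMap_torusProj.surjective p
  rw [hF.torusEndo_torusProj, hG.torusEndo_torusProj, h z]

lemma IsIntEquivariant.isCkTorusDiffeo {k : ℕ∞} {F : ℝ × ℝ ≃ₜ ℝ × ℝ} (hF : IsIntEquivariant F)
    (hk : ContDiff ℝ k F) (hk' : ContDiff ℝ k F.symm) : IsCkTorusDiffeo k (torusEndo F) := by
  have hleft := hF.leftInverse_torusEndo hF.symm F.symm_apply_apply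
  have hright := hF.symm.leftInverse_torusEndo hF F.apply_symm_apply
  have hbij : Function.Bijective (torusEndo F) := ⟨hleft.injective, hright.surjective⟩
  have hinv : Function.invFun (torusEndo F) = torusEndo F.symm := by
    exact (hleft.eq_rightInverse (Function.rightInverse_invFun hbij.2)).symm
  refine ⟨hbij, ⟨F, hk, fun z ↦ (hF.torusEndo_torusProj z).symm⟩, F.symm, hk', fun z ↦ ?_⟩
  rw [hinv, hF.symm.torusEndo_torusProj]

lemma IsIntEquivariant.measurePreserving_torusEndo {F : ℝ × ℝ ≃ₜ ℝ × ℝ} (hF : IsIntEquivariant F)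
    (hvol : MeasurePreserving F volume volume) :
    MeasurePreserving (torusEndo F) volume volume := by
  have hmeas : Measurable (torusEndo F) := (hF.continuous_torusEndo F.continuous).measurable
  have himage : IsAddFundamentalDomain intLattice (F '' unitSquare) :=
    isAddFundamentalDomain_unitSquare.image_of_equiv F.toEquiv
      (hvol.symm F.toMeasurableEquiv).quasiMeasurePreserving (Equiv.refl _) fun v z ↦ by
        simpa [AddSubgroup.vadd_def, add_comm] using hF z v v.2
  refine ⟨hmeas, Measure.ext fun A hA ↦ ?_⟩
  have hB : MeasurableSet (torusProj ⁻¹' A) := measurePreserving_torusProj.measurable hA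
  have hpre : torusProj ⁻¹' (torusEndo F ⁻¹' A) ∩ unitSquare =
      F ⁻¹' (torusProj ⁻¹' A ∩ F '' unitSquare) := by
    rw [preimage_inter, F.injective.preimage_image]
    congr 1
    ext z
    simp only [mem_preimage, hF.torusEndo_torusProj]
  have hinvariant (v : intLattice) :
      (fun z ↦ v +ᵥ z) ⁻¹' (torusProj ⁻¹' A) = torusProj ⁻¹' A := by
    ext z
    rw [mem_preimage, mem_preimage, mem_preimage, AddSubgroup.vadd_def, vadd_eq_add, add_comm,
      torusProj_add_of_mem v.2]
  have hsquare (B : Set Torus2) (hB : MeasurableSet B) :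
      volume B = volume (torusProj ⁻¹' B ∩ unitSquare) := by
    rw [← measurePreserving_torusProj.measure_preimage hB.nullMeasurableSet,
      Measure.restrict_apply (measurePreserving_torusProj.measurable hB)]
  rw [Measure.map_apply hmeas hA, hsquare _ (hmeas hA), hpre, hsquare A hA,
    hvol.measure_preimage_emb F.measurableEmbedding]
  exact (himage.measure_set_eq isAddFundamentalDomain_unitSquare hB hinvariant)

end Descend

end Torus

lemma measurePreserving_withDensity_comp {X Y : Type*} [MeasurableSpace X] [MeasurableSpace Y]
    {μ : Measure X} {ν : Measure Y} {f : X → Y} (hf : MeasurePreserving f μ ν) {r : Y → ℝ≥0∞}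
    (hr : Measurable r) : MeasurePreserving f (μ.withDensity (r ∘ f)) (ν.withDensity r) := by
  refine ⟨hf.measurable, Measure.ext fun s hs ↦ ?_⟩
  rw [Measure.map_apply hf.measurable hs, withDensity_apply _ (hf.measurable hs),
    withDensity_apply _ hs]
  exact hf.setLIntegral_comp_preimage hs hr

/-- A smooth time change of the linear flow of direction `(1, slope)` on the torus. The flow line
through `(a, b)` is traversed at horizontal speed `1 / density (a, b)`, so that `density da db` is
an invariant measure. -/
structure TimeChange where
  /-- The slope of the flow lines. -/
  slope : ℝ
  abs_slope_le_one : |slope| ≤ 1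
  /-- The density of the invariant measure, as a periodic function on the plane. -/
  density : ℝ × ℝ → ℝ
  contDiff_density : ContDiff ℝ ∞ density
  isIntInvariant_density : IsIntInvariant density
  abs_density_sub_one_le : ∀ z, |density z - 1| ≤ 1 / 10
  integral_density_vertical : ∀ a, ∫ b in (0 : ℝ)..1, density (a, b) = 1

namespace TimeChange

variable (Θ : TimeChange)

@[fun_prop]
lemma continuous_density : Continuous Θ.density := Θ.contDiff_density.continuous

lemma le_density (z : ℝ × ℝ) : 9 / 10 ≤ Θ.density z := by
  linarith [(abs_le.1 (Θ.abs_density_sub_one_le z)).1]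

lemma density_le (z : ℝ × ℝ) : Θ.density z ≤ 11 / 10 := by
  linarith [(abs_le.1 (Θ.abs_density_sub_one_le z)).2]

lemma density_pos (z : ℝ × ℝ) : 0 < Θ.density z := by linarith [Θ.le_density z]

lemma density_add_int (a b : ℝ) (m n : ℤ) : Θ.density (a + m, b + n) = Θ.density (a, b) :=
  isIntInvariant_iff.1 Θ.isIntInvariant_density a b m n

/-- The shear `(w, a) ↦ (a, w + slope * a)`, which maps the vertical line over `w` to the flow line
that crosses the vertical axis at height `w`. -/
def shear : ℝ × ℝ ≃ₜ ℝ × ℝ where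
  toFun z := (z.2, z.1 + Θ.slope * z.2)
  invFun z := (z.2 - Θ.slope * z.1, z.1)
  left_inv z := by simp
  right_inv z := by simp

@[simp]
lemma shear_apply (z : ℝ × ℝ) : Θ.shear z = (z.2, z.1 + Θ.slope * z.2) := rfl

lemma contDiff_shear : ContDiff ℝ ∞ Θ.shear :=
  contDiff_snd.prodMk (contDiff_fst.add (contDiff_const.mul contDiff_snd))

lemma contDiff_shear_symm : ContDiff ℝ ∞ Θ.shear.symm :=
  (contDiff_snd.sub (contDiff_const.mul contDiff_fst)).prodMk contDiff_fst

lemma measurePreserving_shear : MeasurePreserving Θ.shear volume volume :=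
  ((MeasurePreserving.id volume).skew_product (g := fun a w ↦ w + Θ.slope * a)
    (by fun_prop) (ae_of_all _ fun a ↦ (measurePreserving_add_right volume _).map_eq)).comp
    Measure.measurePreserving_swap

/-- The density along the flow lines, in the coordinates straightened by `shear`. -/
def leafDensity : ℝ × ℝ → ℝ := Θ.density ∘ Θ.shear

lemma contDiff_leafDensity : ContDiff ℝ ∞ Θ.leafDensity :=
  Θ.contDiff_density.comp Θ.contDiff_shear

/-- The time needed to travel from `(0, w)` to `(a, w + slope * a)`. -/
noncomputable def travelTime (w a : ℝ) : ℝ := ∫ s in (0 : ℝ)..a, Θ.density (s, w + Θ.slope * s)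

/-- The coordinate change `(w, a) ↦ (w, travelTime w a)`. -/
noncomputable def travelTimeHomeo : ℝ × ℝ ≃ₜ ℝ × ℝ :=
  fiberHomeo Θ.contDiff_leafDensity (c := 9 / 10) (by norm_num) fun z ↦ Θ.le_density (Θ.shear z)

lemma travelTimeHomeo_apply (z : ℝ × ℝ) : Θ.travelTimeHomeo z = (z.1, Θ.travelTime z.1 z.2) := rfl

lemma contDiff_travelTimeHomeo : ContDiff ℝ ∞ Θ.travelTimeHomeo := contDiff_fiberHomeo ..

lemma contDiff_travelTimeHomeo_symm : ContDiff ℝ ∞ Θ.travelTimeHomeo.symm :=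
  contDiff_fiberHomeo_symm ..

/-- The horizontal coordinate reached at time `s` when starting from `(0, w)` at time `0`. -/
noncomputable def position (w s : ℝ) : ℝ := (Θ.travelTimeHomeo.symm (w, s)).2

lemma travelTimeHomeo_symm_apply (z : ℝ × ℝ) :
    Θ.travelTimeHomeo.symm z = (z.1, Θ.position z.1 z.2) :=
  Prod.ext (fiberHomeo_symm_apply_fst ..) rfl

@[simp]
lemma travelTime_zero (w : ℝ) : Θ.travelTime w 0 = 0 := intervalIntegral.integral_same

@[simp]
lemma travelTime_position (w s : ℝ) : Θ.travelTime w (Θ.position w s) = s := by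
  have h := Θ.travelTimeHomeo.apply_symm_apply (w, s)
  rw [travelTimeHomeo_symm_apply, travelTimeHomeo_apply] at h
  exact congrArg Prod.snd h

@[simp]
lemma position_travelTime (w a : ℝ) : Θ.position w (Θ.travelTime w a) = a := by
  have h := Θ.travelTimeHomeo.symm_apply_apply (w, a)
  rw [travelTimeHomeo_apply, travelTimeHomeo_symm_apply] at h
  exact congrArg Prod.snd h

@[simp]
lemma position_zero (w : ℝ) : Θ.position w 0 = 0 := by
  simpa using Θ.position_travelTime w 0

lemma mul_sub_le_travelTime_sub (w : ℝ) {a a' : ℝ} (ha : a ≤ a') :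
    9 / 10 * (a' - a) ≤ Θ.travelTime w a' - Θ.travelTime w a :=
  mul_sub_le_fiberIntegral_sub Θ.contDiff_leafDensity.continuous (fun _ ↦ Θ.le_density _) w ha

lemma travelTime_sub_le_mul_sub (w : ℝ) {a a' : ℝ} (ha : a ≤ a') :
    Θ.travelTime w a' - Θ.travelTime w a ≤ 11 / 10 * (a' - a) :=
  fiberIntegral_sub_le_mul_sub Θ.contDiff_leafDensity.continuous (fun _ ↦ Θ.density_le _) w ha

lemma travelTime_add_int (w a : ℝ) (m n : ℤ) :
    Θ.travelTime (w + n - Θ.slope * m) (a + m) =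
      Θ.travelTime w a + Θ.travelTime (w + n - Θ.slope * m) m := by
  set g : ℝ → ℝ := fun s ↦ Θ.density (s, w + n - Θ.slope * m + Θ.slope * s) with hg
  have hint (a b : ℝ) : IntervalIntegrable g volume a b :=
    (by fun_prop : Continuous g).intervalIntegrable a b
  have hshift : Θ.travelTime w a = ∫ s in (m : ℝ)..a + m, g s := by
    have h := intervalIntegral.integral_comp_add_right g (a := 0) (b := a) (m : ℝ)
    rw [zero_add] at h
    rw [← h]
    refine intervalIntegral.integral_congr fun s _ ↦ ?_
    rw [hg, ← Θ.density_add_int s _ m n]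
    ring_nf
  rw [hshift, add_comm (∫ s in (m : ℝ)..a + m, g s)]
  exact (intervalIntegral.integral_add_adjacent_intervals (hint _ _) (hint _ _)).symm

/-- The coordinate change `(a, b) ↦ (a, ∫₀^b density (a, t) dt)`, which turns the invariant measure
of the time change into Lebesgue measure. -/
noncomputable def normalizer : ℝ × ℝ ≃ₜ ℝ × ℝ :=
  fiberHomeo Θ.contDiff_density (c := 9 / 10) (by norm_num) Θ.le_density

lemma normalizer_apply (z : ℝ × ℝ) :
    Θ.normalizer z = (z.1, ∫ t in (0 : ℝ)..z.2, Θ.density (z.1, t)) := rfl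

lemma contDiff_normalizer : ContDiff ℝ ∞ Θ.normalizer := contDiff_fiberHomeo ..

lemma contDiff_normalizer_symm : ContDiff ℝ ∞ Θ.normalizer.symm := contDiff_fiberHomeo_symm ..

lemma isIntEquivariant_normalizer : IsIntEquivariant Θ.normalizer := by
  refine isIntEquivariant_iff.2 fun a b m n ↦ ?_
  have hper : Function.Periodic (fun t ↦ Θ.density (a, t)) 1 := fun t ↦ by
    simpa using Θ.density_add_int a t 0 1
  have hint (t t' : ℝ) : IntervalIntegrable (fun t ↦ Θ.density (a, t)) volume t t' :=
    (by fun_prop : Continuous _).intervalIntegrable t t'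
  have hshift (t : ℝ) : Θ.density (a + m, t) = Θ.density (a, t) := by
    simpa using Θ.density_add_int a t m 0
  have hn : ∫ t in b..b + n, Θ.density (a, t) = n := by
    have h := hper.intervalIntegral_add_zsmul_eq n b hint
    rw [hper.intervalIntegral_add_eq b 0, zero_add, Θ.integral_density_vertical] at h
    simpa using h
  simp only [normalizer_apply, hshift, Prod.mk_add_mk]
  rw [← intervalIntegral.integral_add_adjacent_intervals (hint 0 b) (hint b _), hn]

/-- The coordinate change `(w, s) ↦ (a, w + slope * a)`, where `a` is the position at time `s`. It
turns the time-changed flow into the vertical translation flow. -/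
noncomputable def flowChart : ℝ × ℝ ≃ₜ ℝ × ℝ := Θ.travelTimeHomeo.symm.trans Θ.shear

lemma flowChart_apply (w s : ℝ) :
    Θ.flowChart (w, s) = (Θ.position w s, w + Θ.slope * Θ.position w s) := by
  simp [flowChart, travelTimeHomeo_symm_apply]

lemma flowChart_symm_apply (a b : ℝ) :
    Θ.flowChart.symm (a, b) = (b - Θ.slope * a, Θ.travelTime (b - Θ.slope * a) a) := rfl

/-- The lift to the plane of the time-changed flow at time `t`. -/
noncomputable def flow (t : ℝ) : ℝ × ℝ ≃ₜ ℝ × ℝ :=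
  Θ.flowChart.symm.trans ((Homeomorph.addRight ((0 : ℝ), t)).trans Θ.flowChart)

lemma flow_flowChart (t w s : ℝ) : Θ.flow t (Θ.flowChart (w, s)) = Θ.flowChart (w, s + t) := by
  simp [flow]

lemma flow_add (t t' : ℝ) (z : ℝ × ℝ) : Θ.flow (t + t') z = Θ.flow t' (Θ.flow t z) := by
  obtain ⟨⟨w, s⟩, rfl⟩ := Θ.flowChart.surjective z
  rw [flow_flowChart, flow_flowChart, flow_flowChart, add_assoc]

lemma flow_symm (t : ℝ) : (Θ.flow t).symm = Θ.flow (-t) := by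
  ext1 z
  rw [Homeomorph.symm_apply_eq]
  obtain ⟨⟨w, s⟩, rfl⟩ := Θ.flowChart.surjective z
  rw [flow_flowChart, flow_flowChart, neg_add_cancel_right]

lemma isIntEquivariant_flow (t : ℝ) : IsIntEquivariant (Θ.flow t) := by
  have hchart (w s : ℝ) (m n : ℤ) : Θ.flowChart (w, s) + ((m : ℝ), (n : ℝ)) = Θ.flowChart
      (w + n - Θ.slope * m, s + Θ.travelTime (w + n - Θ.slope * m) m) := by
    rw [← Homeomorph.symm_apply_eq, flowChart_apply, Prod.mk_add_mk, flowChart_symm_apply]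
    have hleaf : w + Θ.slope * Θ.position w s + n - Θ.slope * (Θ.position w s + m) =
        w + n - Θ.slope * m := by ring
    rw [hleaf, travelTime_add_int, travelTime_position]
  intro z v hv
  obtain ⟨m, n, rfl⟩ := mem_intLattice.1 hv
  obtain ⟨⟨w, s⟩, rfl⟩ := Θ.flowChart.surjective z
  rw [hchart, flow_flowChart, flow_flowChart, hchart, add_right_comm]

lemma contDiff_flow (t : ℝ) : ContDiff ℝ ∞ (Θ.flow t) :=
  (Θ.contDiff_shear.comp Θ.contDiff_travelTimeHomeo_symm).comp
    ((contDiff_id.add contDiff_const).comp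
      (Θ.contDiff_travelTimeHomeo.comp Θ.contDiff_shear_symm))

/-- The lift to the plane of the time-changed flow at time `t`, in the coordinates in which it
preserves Lebesgue measure. -/
noncomputable def lift (t : ℝ) : ℝ × ℝ ≃ₜ ℝ × ℝ :=
  Θ.normalizer.symm.trans ((Θ.flow t).trans Θ.normalizer)

lemma lift_normalizer (t : ℝ) (z : ℝ × ℝ) :
    Θ.lift t (Θ.normalizer z) = Θ.normalizer (Θ.flow t z) := by
  simp [lift]

lemma lift_symm (t : ℝ) : (Θ.lift t).symm = Θ.lift (-t) := by
  rw [lift, lift, ← flow_symm]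
  rfl

lemma isIntEquivariant_lift (t : ℝ) : IsIntEquivariant (Θ.lift t) := fun z v hv ↦ by
  simp only [lift, Homeomorph.trans_apply]
  rw [Θ.isIntEquivariant_normalizer.symm z v hv, Θ.isIntEquivariant_flow t _ v hv,
    Θ.isIntEquivariant_normalizer _ v hv]

lemma contDiff_lift (t : ℝ) : ContDiff ℝ ∞ (Θ.lift t) :=
  Θ.contDiff_normalizer.comp ((Θ.contDiff_flow t).comp Θ.contDiff_normalizer_symm)

lemma measurePreserving_flow (t : ℝ) :
    MeasurePreserving (Θ.flow t) (volume.withDensity fun z ↦ ENNReal.ofReal (Θ.density z))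
      (volume.withDensity fun z ↦ ENNReal.ofReal (Θ.density z)) := by
  have htime : MeasurePreserving Θ.travelTimeHomeo
      (volume.withDensity fun z ↦ ENNReal.ofReal (Θ.leafDensity z)) volume :=
    measurePreserving_fiberHomeo ..
  have hshear : MeasurePreserving Θ.shear
      (volume.withDensity fun z ↦ ENNReal.ofReal (Θ.leafDensity z))
      (volume.withDensity fun z ↦ ENNReal.ofReal (Θ.density z)) :=
    measurePreserving_withDensity_comp (r := fun z ↦ ENNReal.ofReal (Θ.density z))
      Θ.measurePreserving_shear Θ.continuous_density.measurable.ennreal_ofReal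
  have htime_symm : MeasurePreserving Θ.travelTimeHomeo.symm volume
      (volume.withDensity fun z ↦ ENNReal.ofReal (Θ.leafDensity z)) :=
    MeasurePreserving.symm Θ.travelTimeHomeo.toMeasurableEquiv htime
  have hshear_symm : MeasurePreserving Θ.shear.symm
      (volume.withDensity fun z ↦ ENNReal.ofReal (Θ.density z))
      (volume.withDensity fun z ↦ ENNReal.ofReal (Θ.leafDensity z)) :=
    MeasurePreserving.symm Θ.shear.toMeasurableEquiv hshear
  exact (hshear.comp htime_symm).comp
    ((measurePreserving_add_right volume ((0 : ℝ), t)).comp (htime.comp hshear_symm))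

lemma measurePreserving_lift (t : ℝ) : MeasurePreserving (Θ.lift t) volume volume := by
  have hnorm : MeasurePreserving Θ.normalizer
      (volume.withDensity fun z ↦ ENNReal.ofReal (Θ.density z)) volume :=
    measurePreserving_fiberHomeo ..
  exact hnorm.comp ((Θ.measurePreserving_flow t).comp
    (hnorm.symm Θ.normalizer.toMeasurableEquiv))

/-- The time-changed flow on the torus at time `t`, in the coordinates in which it preserves
Lebesgue measure. -/
noncomputable def torusFlow (t : ℝ) : Torus2 → Torus2 := torusEndo (Θ.lift t)

lemma torusFlow_torusProj_normalizer (t : ℝ) (z : ℝ × ℝ) :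
    Θ.torusFlow t (torusProj (Θ.normalizer z)) = torusProj (Θ.normalizer (Θ.flow t z)) := by
  rw [torusFlow, (Θ.isIntEquivariant_lift t).torusEndo_torusProj, lift_normalizer]

lemma surjective_torusProj_normalizer :
    Function.Surjective fun z ↦ torusProj (Θ.normalizer z) :=
  isOpenQuotientMap_torusProj.surjective.comp Θ.normalizer.surjective

lemma torusFlow_one_iterate (n : ℕ) : (Θ.torusFlow 1)^[n] = Θ.torusFlow n := by
  induction n with
  | zero =>
    ext1 p
    obtain ⟨z, rfl⟩ := Θ.surjective_torusProj_normalizer p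
    obtain ⟨⟨w, s⟩, rfl⟩ := Θ.flowChart.surjective z
    simp [torusFlow_torusProj_normalizer, flow_flowChart]
  | succ n ih =>
    ext1 p
    obtain ⟨z, rfl⟩ := Θ.surjective_torusProj_normalizer p
    rw [Function.iterate_succ_apply', ih, torusFlow_torusProj_normalizer,
      torusFlow_torusProj_normalizer, torusFlow_torusProj_normalizer, ← flow_add, Nat.cast_succ]

lemma continuous_torusFlow (t : ℝ) : Continuous (Θ.torusFlow t) :=
  (Θ.isIntEquivariant_lift t).continuous_torusEndo (Θ.lift t).continuous

lemma isCkTorusDiffeo_torusFlow (t : ℝ) : IsCkTorusDiffeo ⊤ (Θ.torusFlow t) :=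
  (Θ.isIntEquivariant_lift t).isCkTorusDiffeo (Θ.contDiff_lift t)
    (by rw [lift_symm]; exact Θ.contDiff_lift (-t))

lemma measurePreserving_torusFlow (t : ℝ) : MeasurePreserving (Θ.torusFlow t) volume volume :=
  (Θ.isIntEquivariant_lift t).measurePreserving_torusEndo (Θ.measurePreserving_lift t)

end TimeChange

section SlowEntropy

variable {X : Type*} [PseudoMetricSpace X] {T : X → X} {n : ℕ} {ε : ℝ}

lemma bowenDist_lt_iff (hε : 0 < ε) {x y : X} :
    bowenDist T n x y < ε ↔ ∀ i < n, dist (T^[i] x) (T^[i] y) < ε := by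
  lift ε to ℝ≥0 using hε.le
  rw [bowenDist, NNReal.coe_lt_coe, Finset.sup_lt_iff (NNReal.coe_pos.1 hε)]
  simp only [Finset.mem_range, ← NNReal.coe_lt_coe, coe_nndist]

lemma bowenCoverNum_le {F : Finset X} (hF : ∀ y, ∃ x ∈ F, bowenDist T n x y < ε) :
    bowenCoverNum T n ε ≤ F.card :=
  Nat.sInf_le ⟨F, rfl, hF⟩

lemma exists_finset_bowenDist_lt [CompactSpace X] (hT : Continuous T) (n : ℕ) (hε : 0 < ε) :
    ∃ F : Finset X, ∀ y, ∃ x ∈ F, bowenDist T n x y < ε := by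
  have hopen (x : X) : IsOpen {y | bowenDist T n x y < ε} := by
    simp only [bowenDist_lt_iff hε, ofPred_forall]
    exact (finite_Iio n).isOpen_biInter fun i _ ↦
      isOpen_lt (continuous_const.dist (hT.iterate i)) continuous_const
  obtain ⟨F, hF⟩ := isCompact_univ.elim_finite_subcover (fun x ↦ {y | bowenDist T n x y < ε}) hopen
    fun y _ ↦ mem_iUnion.2 ⟨y, by simpa [bowenDist_lt_iff hε] using fun _ _ ↦ hε⟩
  exact ⟨F, fun y ↦ by simpa using hF (mem_univ y)⟩

lemma le_bowenCoverNum [CompactSpace X] (hT : Continuous T) (hε : 0 < ε) {M : ℕ} (x : ℕ → X)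
    (hx : ∀ i < M, ∀ j < M, bowenDist T n (x i) (x j) < 2 * ε → i = j) :
    M ≤ bowenCoverNum T n ε := by
  obtain ⟨F₀, hF₀⟩ := exists_finset_bowenDist_lt hT n hε
  refine le_csInf ⟨_, F₀, rfl, hF₀⟩ ?_
  rintro _ ⟨F, rfl, hF⟩
  choose c hcF hc using hF
  rw [← Finset.card_range M]
  refine Finset.card_le_card_of_injOn (fun i ↦ c (x i)) (fun i _ ↦ hcF _) fun i hi j hj hij ↦ ?_
  refine hx i (by simpa using hi) j (by simpa using hj) ((bowenDist_lt_iff (by positivity)).2 ?_)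
  intro m hm
  have hi' := (bowenDist_lt_iff hε).1 (hc (x i)) m hm
  have hj' := (bowenDist_lt_iff hε).1 (hc (x j)) m hm
  rw [← show c (x i) = c (x j) from hij] at hj'
  linarith [dist_triangle_left (T^[m] (x i)) (T^[m] (x j)) (T^[m] (c (x i)))]

lemma exists_finset_net {b δ : ℝ} (hb : 0 ≤ b) (hδ : 0 < δ) :
    ∃ F : Finset ℝ, (F.card : ℝ) ≤ b / δ + 1 ∧
      ∀ x ∈ Icc 0 b, ∃ y ∈ F, y ∈ Icc 0 b ∧ |y - x| ≤ δ := by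
  refine ⟨(Finset.range (⌊b / δ⌋₊ + 1)).image fun i : ℕ ↦ i * δ, ?_, fun x hx ↦ ?_⟩
  · calc (((Finset.range (⌊b / δ⌋₊ + 1)).image fun i : ℕ ↦ (i : ℝ) * δ).card : ℝ)
        ≤ (⌊b / δ⌋₊ + 1 : ℕ) := by
          exact_mod_cast Finset.card_image_le.trans (Finset.card_range _).le
      _ ≤ b / δ + 1 := by
          push_cast
          gcongr
          exact Nat.floor_le (by positivity)
  · have hle : (⌊x / δ⌋₊ : ℝ) * δ ≤ x := (le_div_iff₀ hδ).1 (Nat.floor_le (div_nonneg hx.1 hδ.le))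
    have hlt : x < (⌊x / δ⌋₊ + 1) * δ := (div_lt_iff₀ hδ).1 (Nat.lt_floor_add_one _)
    refine ⟨⌊x / δ⌋₊ * δ, Finset.mem_image_of_mem _ ?_, ⟨by positivity, hle.trans hx.2⟩, ?_⟩
    · rw [Finset.mem_range, Nat.lt_succ_iff]
      gcongr
      exact hx.2
    · rw [abs_le]
      constructor <;> linarith

lemma bowenCoverNum_le_of_param {κ : ℝ → ℝ → X} {b c δ η : ℝ} (hb : 0 ≤ b) (hc : 0 ≤ c)
    (hδ : 0 < δ) (hη : 0 < η) (hκ : ∀ p, ∃ w ∈ Icc 0 b, ∃ s ∈ Icc 0 c, κ w s = p)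
    (hclose : ∀ w w', |w - w'| ≤ δ → ∀ s ∈ Icc 0 c, ∀ s' ∈ Icc 0 c, |s - s'| ≤ η →
      bowenDist T n (κ w s) (κ w' s') < ε) :
    (bowenCoverNum T n ε : ℝ) ≤ (b / δ + 1) * (c / η + 1) := by
  classical
  obtain ⟨F, hF, hFnet⟩ := exists_finset_net hb hδ
  obtain ⟨G, hG, hGnet⟩ := exists_finset_net hc hη
  calc (bowenCoverNum T n ε : ℝ) ≤ (F ×ˢ G).card := by
        refine Nat.cast_le.2 ((bowenCoverNum_le (F := (F ×ˢ G).image fun z ↦ κ z.1 z.2)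
          fun p ↦ ?_).trans Finset.card_image_le)
        obtain ⟨w, hw, s, hs, rfl⟩ := hκ p
        obtain ⟨w', hw'F, -, hww'⟩ := hFnet w hw
        obtain ⟨s', hs'G, hs', hss'⟩ := hGnet s hs
        exact ⟨κ w' s', Finset.mem_image_of_mem (fun z ↦ κ z.1 z.2)
          (Finset.mk_mem_product hw'F hs'G), hclose w' w hww' s' hs' s hs hss'⟩
    _ ≤ (b / δ + 1) * (c / η + 1) := by
        rw [Finset.card_product, Nat.cast_mul]
        gcongr

lemma topSlowEntFun_eq {a : ℕ → ℝ → ℝ} {E : ℝ} (hE : 0 < E)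
    (hlow : ∀ t, 0 < t → t < E →
      0 < atTop.limsup fun n ↦ (bowenCoverNum T n ε : ℝ≥0∞) / ENNReal.ofReal (a n t))
    (hup : ∀ t, E < t →
      atTop.limsup (fun n ↦ (bowenCoverNum T n ε : ℝ≥0∞) / ENNReal.ofReal (a n t)) = 0) :
    topSlowEntFun T a ε = E := by
  have hmem {t : ℝ} (ht : 0 < t) (htE : t < E) := And.intro ht (hlow t ht htE)
  refine IsLUB.csSup_eq ⟨fun t ht ↦ ?_, fun b hb ↦ ?_⟩ ⟨E / 2, hmem (by linarith) (by linarith)⟩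
  · by_contra! htE
    exact ht.2.ne' (hup t htE)
  · have hb₀ : E / 2 ≤ b := hb (hmem (by linarith) (by linarith))
    by_contra! hbE
    linarith [hb (hmem (t := (b + E) / 2) (by linarith) (by linarith))]

lemma tendsto_one_add_log_div_log_rpow {t : ℝ} (ht : 1 < t) :
    Tendsto (fun n : ℕ ↦ (1 + Real.log n) / Real.log n ^ t) atTop (𝓝 0) := by
  have hlog : Tendsto (fun n : ℕ ↦ Real.log n) atTop atTop :=
    Real.tendsto_log_atTop.comp tendsto_natCast_atTop_atTop
  have hpow : Tendsto (fun x : ℝ ↦ x ^ (-t) + x ^ (-(t - 1))) atTop (𝓝 0) := by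
    simpa using (tendsto_rpow_neg_atTop (by linarith : 0 < t)).add
      (tendsto_rpow_neg_atTop (by linarith : 0 < t - 1))
  refine (hpow.comp hlog).congr' ?_
  filter_upwards [hlog.eventually_gt_atTop 0] with n hn
  rw [Function.comp_apply, add_div, Real.rpow_neg hn.le, one_div, neg_sub, Real.rpow_sub hn,
    Real.rpow_one]

lemma limsup_bowenCoverNum_div_logScale_eq_zero {C t : ℝ} (ht : 1 < t)
    (hup : ∀ n : ℕ, 2 ≤ n → (bowenCoverNum T n ε : ℝ) ≤ C * (1 + Real.log n)) :
    atTop.limsup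
      (fun n ↦ (bowenCoverNum T n ε : ℝ≥0∞) / ENNReal.ofReal (logScale n t)) = 0 := by
  have hlim := ENNReal.tendsto_ofReal ((tendsto_one_add_log_div_log_rpow ht).const_mul C)
  rw [mul_zero, ENNReal.ofReal_zero] at hlim
  refine Tendsto.limsup_eq (tendsto_of_tendsto_of_tendsto_of_le_of_le' tendsto_const_nhds hlim
    (.of_forall fun _ ↦ zero_le) ?_)
  filter_upwards [eventually_ge_atTop 2] with n hn
  have hpos : 0 < logScale n t :=
    Real.rpow_pos_of_pos (Real.log_pos (by exact_mod_cast hn)) _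
  rw [← ENNReal.ofReal_natCast, ← ENNReal.ofReal_div_of_pos hpos, ← mul_div_assoc]
  exact ENNReal.ofReal_le_ofReal (div_le_div_of_nonneg_right (hup n hn) hpos.le)

lemma hasUpperTopSlowEntropy_logScale_one {ε₀ : ℝ} (hε₀ : 0 < ε₀)
    (hup : ∀ ε > 0, ∃ C, ∀ n : ℕ, 2 ≤ n → (bowenCoverNum T n ε : ℝ) ≤ C * (1 + Real.log n))
    (hlow : ∀ ε > 0, ε ≤ ε₀ → ∀ t : ℝ, 0 < t → t < 1 →
      ∃ᶠ n : ℕ in atTop, 1 < n ∧ Real.log n ^ t ≤ bowenCoverNum T n ε) :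
    HasUpperTopSlowEntropy T logScale 1 := by
  refine Tendsto.congr' (f₁ := fun _ ↦ 1) ?_ tendsto_const_nhds
  filter_upwards [Ioo_mem_nhdsGT hε₀] with ε hε
  refine (topSlowEntFun_eq one_pos (fun t ht₀ ht₁ ↦ ?_) fun t ht ↦ ?_).symm
  · refine one_pos.trans_le (le_limsup_of_frequently_le ?_)
    refine (hlow ε hε.1 hε.2.le t ht₀ ht₁).mono fun n hn ↦ ?_
    have hpos : 0 < logScale n t := Real.rpow_pos_of_pos (Real.log_pos (by exact_mod_cast hn.1)) _
    rw [ENNReal.le_div_iff_mul_le (.inl (by simpa using hpos)) (.inl ENNReal.ofReal_ne_top),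
      one_mul, ← ENNReal.ofReal_natCast]
    exact ENNReal.ofReal_le_ofReal hn.2
  · obtain ⟨C, hC⟩ := hup ε hε.1
    exact limsup_bowenCoverNum_div_logScale_eq_zero ht hC

end SlowEntropy

lemma lipschitzWith_torusProj : LipschitzWith 1 torusProj := by
  have hcoe (x y : ℝ) : dist (x : Torus1) (y : Torus1) ≤ dist x y := by
    rw [dist_eq_norm, ← AddCircle.coe_sub, dist_eq_norm]
    exact QuotientAddGroup.norm_mk_le_norm
  exact LipschitzWith.mk_one fun z w ↦ max_le_max (hcoe z.1 w.1) (hcoe z.2 w.2)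

lemma dist_circle_eq_abs {x y : ℝ} (h : |x - y| ≤ 1 / 2) :
    dist (x : Torus1) (y : Torus1) = |x - y| := by
  rw [dist_eq_norm, ← AddCircle.coe_sub, AddCircle.norm_coe_eq_abs_iff 1 one_ne_zero]
  simpa using h

namespace TimeChange

variable (Θ : TimeChange)

/-- The point of the torus at time `s` on the orbit that starts from `(0, w)` at time `0`. -/
noncomputable def torusChart (w s : ℝ) : Torus2 := torusProj (Θ.normalizer (Θ.flowChart (w, s)))

lemma torusFlow_torusChart (t w s : ℝ) :
    Θ.torusFlow t (Θ.torusChart w s) = Θ.torusChart w (s + t) := by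
  rw [torusChart, torusFlow_torusProj_normalizer, flow_flowChart, torusChart]

lemma torusFlow_one_iterate_torusChart (n : ℕ) (w s : ℝ) :
    (Θ.torusFlow 1)^[n] (Θ.torusChart w s) = Θ.torusChart w (s + n) := by
  rw [torusFlow_one_iterate, torusFlow_torusChart]

lemma fst_torusChart (w s : ℝ) : (Θ.torusChart w s).1 = (Θ.position w s : Torus1) := by
  rw [torusChart, flowChart_apply, normalizer_apply, torusProj]

lemma continuous_position : Continuous fun z : ℝ × ℝ ↦ Θ.position z.1 z.2 :=
  continuous_snd.comp Θ.travelTimeHomeo.symm.continuous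

lemma mul_abs_sub_le_abs_travelTime_sub (w a a' : ℝ) :
    9 / 10 * |a - a'| ≤ |Θ.travelTime w a - Θ.travelTime w a'| := by
  wlog h : a' ≤ a generalizing a a'
  · rw [abs_sub_comm, abs_sub_comm (Θ.travelTime w a)]
    exact this a' a (le_of_not_ge h)
  rw [abs_of_nonneg (sub_nonneg.2 h)]
  exact (Θ.mul_sub_le_travelTime_sub w h).trans (le_abs_self _)

lemma abs_travelTime_sub_le_mul_abs_sub (w a a' : ℝ) :
    |Θ.travelTime w a - Θ.travelTime w a'| ≤ 11 / 10 * |a - a'| := by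
  wlog h : a' ≤ a generalizing a a'
  · rw [abs_sub_comm, abs_sub_comm a]
    exact this a' a (le_of_not_ge h)
  have hlow := Θ.mul_sub_le_travelTime_sub w h
  rw [abs_of_nonneg (sub_nonneg.2 h), abs_of_nonneg (by linarith)]
  exact Θ.travelTime_sub_le_mul_sub w h

lemma abs_position_sub_le (w w' s s' : ℝ) :
    |Θ.position w s - Θ.position w' s'| ≤ 10 / 9 * (|s - s'| +
      |Θ.travelTime w (Θ.position w' s') - Θ.travelTime w' (Θ.position w' s')|) := by
  have hlow := Θ.mul_abs_sub_le_abs_travelTime_sub w (Θ.position w s) (Θ.position w' s')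
  have htri := abs_sub_le s s' (Θ.travelTime w (Θ.position w' s'))
  rw [travelTime_position] at hlow ⊢
  rw [abs_sub_comm s'] at htri
  linarith

lemma mul_abs_position_sub_le (w s s' : ℝ) :
    10 / 11 * |s - s'| ≤ |Θ.position w s - Θ.position w s'| := by
  have h := Θ.abs_travelTime_sub_le_mul_abs_sub w (Θ.position w s) (Θ.position w s')
  rw [travelTime_position, travelTime_position] at h
  linarith

lemma abs_position_sub_le_mul (w s s' : ℝ) :
    |Θ.position w s - Θ.position w s'| ≤ 10 / 9 * |s - s'| := by
  simpa using Θ.abs_position_sub_le w w s s'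

lemma position_mono (w : ℝ) : Monotone (Θ.position w) := fun s s' hs ↦ by
  by_contra! hlt
  have h := Θ.mul_sub_le_travelTime_sub w hlt.le
  rw [travelTime_position, travelTime_position] at h
  linarith

lemma exists_torusChart_eq (p : Torus2) :
    ∃ w ∈ Icc (0 : ℝ) 1, ∃ s ∈ Icc (0 : ℝ) 2, Θ.torusChart w s = p := by
  obtain ⟨⟨a, b⟩, rfl⟩ := Θ.surjective_torusProj_normalizer p
  set w := Int.fract (b - Θ.slope * Int.fract a) with hw
  have hs := Θ.abs_travelTime_sub_le_mul_abs_sub w (Int.fract a) 0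
  have hs₀ := Θ.mul_sub_le_travelTime_sub w (Int.fract_nonneg a)
  rw [travelTime_zero, sub_zero, sub_zero, abs_of_nonneg (Int.fract_nonneg a)] at hs
  rw [travelTime_zero, sub_zero, sub_zero] at hs₀
  refine ⟨w, ⟨Int.fract_nonneg _, (Int.fract_lt_one _).le⟩, Θ.travelTime w (Int.fract a), ⟨?_, ?_⟩,
    ?_⟩
  · linarith [Int.fract_nonneg a]
  · linarith [(abs_le.1 hs).2, Int.fract_lt_one a]
  · have hshift : ((a, b) : ℝ × ℝ) = Θ.flowChart (w, Θ.travelTime w (Int.fract a)) +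
        ((⌊a⌋ : ℝ), (⌊b - Θ.slope * Int.fract a⌋ : ℝ)) := by
      rw [flowChart_apply, position_travelTime, Prod.mk_add_mk, Int.fract_add_floor, hw,
        add_right_comm, Int.fract_add_floor, sub_add_cancel]
    have hmem := mem_intLattice.2 ⟨⌊a⌋, ⌊b - Θ.slope * Int.fract a⌋, rfl⟩
    dsimp only
    rw [hshift, Θ.isIntEquivariant_normalizer _ _ hmem, torusProj_add_of_mem hmem, torusChart]

lemma exists_dist_torusChart_lt {ε : ℝ} (hε : 0 < ε) :
    ∃ δ > 0, ∀ w w' s s', |w - w'| < δ → |Θ.position w s - Θ.position w' s'| < δ →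
      dist (Θ.torusChart w s) (Θ.torusChart w' s') < ε := by
  have hnorm := Θ.isIntEquivariant_normalizer
  have hcont := hnorm.continuous_torusEndo Θ.normalizer.continuous
  obtain ⟨δ, hδ, hδε⟩ :=
    Metric.uniformContinuous_iff.1 (CompactSpace.uniformContinuous_of_continuous hcont) ε hε
  refine ⟨δ / 2, half_pos hδ, fun w w' s s' hw hs ↦ ?_⟩
  rw [torusChart, torusChart, ← hnorm.torusEndo_torusProj, ← hnorm.torusEndo_torusProj]
  refine hδε ((lipschitzWith_torusProj.dist_le_mul _ _).trans_lt ?_)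
  rw [NNReal.coe_one, one_mul, flowChart_apply, flowChart_apply, Prod.dist_eq, Real.dist_eq,
    Real.dist_eq]
  have hslope : |Θ.slope * (Θ.position w s - Θ.position w' s')| < δ / 2 := by
    rw [abs_mul]
    exact (mul_le_of_le_one_left (abs_nonneg _) Θ.abs_slope_le_one).trans_lt hs
  have hheight : w + Θ.slope * Θ.position w s - (w' + Θ.slope * Θ.position w' s') =
      (w - w') + Θ.slope * (Θ.position w s - Θ.position w' s') := by ring
  refine max_lt (by linarith) ?_
  dsimp only
  rw [hheight]
  linarith [abs_add_le (w - w') (Θ.slope * (Θ.position w s - Θ.position w' s'))]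

lemma bowenDist_torusChart_lt {K δ ε w w' s s' : ℝ} {n : ℕ} (hε : 0 < ε) (hK₀ : 0 ≤ K)
    (hδε : ∀ v v' r r', |v - v'| < δ → |Θ.position v r - Θ.position v' r'| < δ →
      dist (Θ.torusChart v r) (Θ.torusChart v' r') < ε)
    (hK : ∀ a : ℝ, |a| ≤ 4 * n → |Θ.travelTime w a - Θ.travelTime w' a| ≤ K * |w - w'|)
    (hδ : 0 < δ) (hw : (1 + K) * |w - w'| ≤ δ / 4) (hss' : |s - s'| ≤ δ / 4)
    (hs' : s' ∈ Icc (0 : ℝ) 2) :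
    bowenDist (Θ.torusFlow 1) n (Θ.torusChart w s) (Θ.torusChart w' s') < ε := by
  rw [bowenDist_lt_iff hε]
  intro i hi
  rw [torusFlow_one_iterate_torusChart, torusFlow_one_iterate_torusChart]
  have hi' : (i : ℝ) + 1 ≤ n := by exact_mod_cast hi
  have hpos : |Θ.position w' (s' + i)| ≤ 4 * n := by
    have h := Θ.abs_position_sub_le_mul w' (s' + i) 0
    rw [position_zero, sub_zero, sub_zero, abs_of_nonneg (add_nonneg hs'.1 i.cast_nonneg)] at h
    linarith [hs'.2]
  have hdiff := Θ.abs_position_sub_le w w' (s + i) (s' + i)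
  rw [add_sub_add_right_eq_sub] at hdiff
  have hKw₀ : 0 ≤ K * |w - w'| := by positivity
  exact hδε _ _ _ _ (by linarith) (by linarith [hK _ hpos, abs_nonneg (w - w')])

lemma exists_bowenCoverNum_le {C : ℝ} (hC : ∀ n : ℕ, 1 ≤ n → ∀ w w' a : ℝ, |a| ≤ 4 * n →
      |Θ.travelTime w a - Θ.travelTime w' a| ≤ C * (1 + Real.log n) * |w - w'|)
    {ε : ℝ} (hε : 0 < ε) :
    ∃ C', ∀ n : ℕ, 2 ≤ n → (bowenCoverNum (Θ.torusFlow 1) n ε : ℝ) ≤ C' * (1 + Real.log n) := by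
  obtain ⟨δ, hδ, hδε⟩ := Θ.exists_dist_torusChart_lt hε
  refine ⟨(4 * (1 + |C|) / δ + 1) * (2 / (δ / 4) + 1), fun n hn ↦ ?_⟩
  have hlog : 0 ≤ Real.log n := Real.log_natCast_nonneg n
  set K := |C| * (1 + Real.log n) with hK
  have hK₀ : 0 ≤ K := by positivity
  have hspread (w w' a : ℝ) (ha : |a| ≤ 4 * n) :
      |Θ.travelTime w a - Θ.travelTime w' a| ≤ K * |w - w'| := by
    refine (hC n (by omega) w w' a ha).trans ?_
    rw [hK]
    gcongr
    exact le_abs_self C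
  have hK_le : 1 + K ≤ (1 + |C|) * (1 + Real.log n) := by rw [hK]; linarith
  calc (bowenCoverNum (Θ.torusFlow 1) n ε : ℝ)
      ≤ (1 / (δ / (4 * (1 + K))) + 1) * (2 / (δ / 4) + 1) := by
        refine bowenCoverNum_le_of_param zero_le_one zero_le_two (by positivity) (by positivity)
          Θ.exists_torusChart_eq fun w w' hw s _ s' hs' hss' ↦
            Θ.bowenDist_torusChart_lt hε hK₀ hδε (hspread w w') hδ ?_ hss' hs'
        linarith [(le_div_iff₀ (by positivity)).1 hw]
    _ ≤ (4 * ((1 + |C|) * (1 + Real.log n)) / δ + (1 + Real.log n)) * (2 / (δ / 4) + 1) := by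
        rw [one_div_div]
        gcongr
        linarith
    _ = _ := by ring

lemma abs_position_sub_lt_of_bowenDist_lt {w w' ε : ℝ} {n : ℕ} (hε : 0 < ε) (hε' : ε ≤ 1 / 10)
    (h : bowenDist (Θ.torusFlow 1) (n + 1) (Θ.torusChart w 0) (Θ.torusChart w' 0) < ε) :
    |Θ.position w n - Θ.position w' n| < ε := by
  rw [bowenDist_lt_iff hε] at h
  suffices hm : ∀ m ≤ n, |Θ.position w m - Θ.position w' m| < ε from hm n le_rfl
  intro m
  induction m with
  | zero => simpa using hε
  | succ m ih =>
    intro hm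
    have hprev := abs_lt.1 (ih (by omega))
    have hcircle : dist (Θ.position w (m + 1 : ℕ) : Torus1) (Θ.position w' (m + 1 : ℕ)) < ε := by
      have hdist := h (m + 1) (by omega)
      rw [torusFlow_one_iterate_torusChart, torusFlow_one_iterate_torusChart, zero_add,
        Prod.dist_eq, fst_torusChart, fst_torusChart] at hdist
      exact (le_max_left _ _).trans_lt hdist
    have hstep (v : ℝ) : Θ.position v m + 10 / 11 ≤ Θ.position v (m + 1 : ℕ) ∧
        Θ.position v (m + 1 : ℕ) ≤ Θ.position v m + 10 / 9 := by
      have hmono := Θ.position_mono v (Nat.cast_le.2 m.le_succ)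
      have hlow := Θ.mul_abs_position_sub_le v (m + 1 : ℕ) m
      have hup := Θ.abs_position_sub_le_mul v (m + 1 : ℕ) m
      rw [abs_of_nonneg (sub_nonneg.2 hmono)] at hlow hup
      rw [Nat.cast_succ, add_sub_cancel_left, abs_one] at hlow hup
      constructor <;> push_cast at * <;> linarith
    rwa [dist_circle_eq_abs] at hcircle
    rw [abs_le]
    have hw := hstep w
    have hw' := hstep w'
    constructor <;> linarith [hw.1, hw.2, hw'.1, hw'.2, hprev.1, hprev.2]

lemma le_bowenCoverNum_of_le_abs_position_sub {w w' A ε : ℝ} {n : ℕ} (hε : 0 < ε)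
    (hε' : ε ≤ 1 / 20) (hA : A ≤ |Θ.position w n - Θ.position w' n|) :
    A ≤ bowenCoverNum (Θ.torusFlow 1) (n + 1) ε := by
  rcases lt_or_ge A 0 with hA₀ | hA₀
  · exact hA₀.le.trans (Nat.cast_nonneg _)
  set M := ⌊A⌋₊ + 1
  set p := min (Θ.position w n) (Θ.position w' n)
  have hrange : ∀ i < M, ∃ v, Θ.position v n = p + i := fun i hi ↦ by
    have hiA : (i : ℝ) ≤ A := (Nat.le_floor_iff hA₀).1 (Nat.lt_succ_iff.1 hi)
    have hmem : p + i ∈ uIcc (Θ.position w n) (Θ.position w' n) := by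
      refine ⟨le_add_of_nonneg_right i.cast_nonneg, ?_⟩
      have h := max_sub_min_eq_abs (Θ.position w n) (Θ.position w' n)
      rw [abs_sub_comm] at h
      change p + i ≤ max (Θ.position w n) (Θ.position w' n)
      linarith
    obtain ⟨v, -, hv⟩ := intermediate_value_uIcc
      (Θ.continuous_position.comp (by fun_prop : Continuous fun v : ℝ ↦ (v, (n : ℝ)))).continuousOn
      hmem
    exact ⟨v, hv⟩
  choose! v hv using hrange
  have hcard : M ≤ bowenCoverNum (Θ.torusFlow 1) (n + 1) ε := by
    refine le_bowenCoverNum (Θ.continuous_torusFlow 1) hε (fun i ↦ Θ.torusChart (v i) 0)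
      fun i hi j hj hij ↦ ?_
    have h := Θ.abs_position_sub_lt_of_bowenDist_lt (by linarith) (by linarith) hij
    rw [hv i hi, hv j hj, add_sub_add_left_eq_sub] at h
    have hlt : |(i : ℤ) - j| < 1 := by
      have : |(i : ℝ) - j| < 1 := by linarith
      exact_mod_cast this
    have := Int.abs_lt_one_iff.1 hlt
    omega
  calc A ≤ M := by
        rw [Nat.cast_succ]
        exact (Nat.lt_floor_add_one A).le
    _ ≤ _ := Nat.cast_le.2 hcard

theorem hasUpperTopSlowEntropy_torusFlow {C : ℝ}
    (hC : ∀ n : ℕ, 1 ≤ n → ∀ w w' a : ℝ, |a| ≤ 4 * n →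
      |Θ.travelTime w a - Θ.travelTime w' a| ≤ C * (1 + Real.log n) * |w - w'|)
    {N : ℕ → ℕ} (hN : Tendsto N atTop atTop) (w w' : ℕ → ℝ)
    (hspread : ∀ t : ℝ, 0 < t → t < 1 → ∀ᶠ k in atTop,
      Real.log (N k + 1) ^ t ≤ |Θ.position (w k) (N k) - Θ.position (w' k) (N k)|) :
    HasUpperTopSlowEntropy (Θ.torusFlow 1) logScale 1 := by
  refine hasUpperTopSlowEntropy_logScale_one (ε₀ := 1 / 20) (by norm_num)
    (fun ε hε ↦ Θ.exists_bowenCoverNum_le hC hε) fun ε hε hε' t ht₀ ht₁ ↦ ?_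
  refine ((tendsto_add_atTop_nat 1).comp hN).frequently (Eventually.frequently ?_)
  filter_upwards [hspread t ht₀ ht₁, hN.eventually_ge_atTop 1] with k hk hNk
  refine ⟨Nat.lt_succ_of_le hNk, ?_⟩
  rw [Function.comp_apply, Nat.cast_succ]
  exact Θ.le_bowenCoverNum_of_le_abs_position_sub hε hε' hk

end TimeChange

section Density

lemma tendsto_zero_of_topologicalClosure_span_eq_top {E : Type*} [SeminormedAddCommGroup E]
    [NormedSpace ℂ E] {φ : ℕ → E →ₗ[ℂ] ℂ} {C : ℝ≥0} (hφ : ∀ k f, ‖φ k f‖ ≤ C * ‖f‖) {S : Set E}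
    (hS : (Submodule.span ℂ S).topologicalClosure = ⊤)
    (hS_lim : ∀ f ∈ S, Tendsto (fun k ↦ φ k f) atTop (𝓝 0)) (f : E) :
    Tendsto (fun k ↦ φ k f) atTop (𝓝 0) := by
  let N : Submodule ℂ E :=
    { carrier := {f | Tendsto (fun k ↦ φ k f) atTop (𝓝 0)}
      zero_mem' := by simp
      add_mem' := fun hf hg ↦ by simpa using hf.add hg
      smul_mem' := fun c f hf ↦ by simpa using hf.const_mul c }
  have hequi : Equicontinuous fun k ↦ ⇑(φ k) := by
    refine (LipschitzWith.uniformEquicontinuous _ C fun k ↦ ?_).equicontinuous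
    refine LipschitzWith.of_dist_le_mul fun f g ↦ ?_
    rw [dist_eq_norm, dist_eq_norm, ← map_sub]
    exact hφ k (f - g)
  have hN : IsClosed (N : Set E) := hequi.isClosed_setOfPred_tendsto continuous_const
  exact Submodule.topologicalClosure_minimal _ (Submodule.span_le.2 fun f hf ↦ hS_lim f hf)
    hN (hS ▸ Submodule.mem_top)

lemma topologicalClosure_span_insert_eq_top {ι E : Type*} [SeminormedAddCommGroup E]
    [NormedSpace ℂ E] {e : ι → E} (he : (Submodule.span ℂ (range e)).topologicalClosure = ⊤)
    {i₀ : ι} {ℓ : E →L[ℂ] ℂ} (hℓ : ∀ i ≠ i₀, ℓ (e i) = 0) (hℓ₀ : ℓ (e i₀) = 1) {v : E}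
    (hv : ℓ v = 1) :
    (Submodule.span ℂ (insert v (e '' {i₀}ᶜ))).topologicalClosure = ⊤ := by
  set K := (Submodule.span ℂ (insert v (e '' {i₀}ᶜ))).topologicalClosure
  have hspan : insert v (e '' {i₀}ᶜ) ⊆ K :=
    Submodule.subset_span.trans (Submodule.span ℂ _).le_topologicalClosure
  have hmem (i : ι) (hi : i ≠ i₀) : e i ∈ K := hspan (mem_insert_of_mem _ ⟨i, hi, rfl⟩)
  have hproj (f : E) : f - ℓ f • e i₀ ∈ K := by
    let P : E →L[ℂ] E := ContinuousLinearMap.id ℂ E - ℓ.smulRight (e i₀)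
    have hP : Submodule.span ℂ (range e) ≤ K.comap P.toLinearMap := by
      rw [Submodule.span_le]
      rintro _ ⟨i, rfl⟩
      change e i - ℓ (e i) • e i₀ ∈ K
      by_cases hi : i = i₀
      · simp [hi, hℓ₀]
      · simpa [hℓ i hi] using hmem i hi
    have hclosed : IsClosed (K.comap P.toLinearMap : Set E) :=
      (Submodule.isClosed_topologicalClosure _).preimage P.continuous
    exact Submodule.topologicalClosure_minimal _ hP hclosed (he ▸ Submodule.mem_top (x := f))
  have he₀ : e i₀ ∈ K := by
    have h := K.sub_mem (hspan (mem_insert v _)) (hproj v)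
    rwa [hv, one_smul, sub_sub_cancel] at h
  refine eq_top_iff.2 fun f _ ↦ ?_
  simpa using K.add_mem (hproj f) (K.smul_mem (ℓ f) he₀)

lemma topologicalClosure_span_image_eq_top {E F : Type*} [SeminormedAddCommGroup E]
    [NormedSpace ℂ E] [SeminormedAddCommGroup F] [NormedSpace ℂ F] {Λ : E →L[ℂ] F}
    (hΛ : Function.Surjective Λ) {S : Set E}
    (hS : (Submodule.span ℂ S).topologicalClosure = ⊤) :
    (Submodule.span ℂ (Λ '' S)).topologicalClosure = ⊤ := by
  rw [← Submodule.dense_iff_topologicalClosure_eq_top] at hS ⊢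
  have h := hΛ.denseRange.dense_image Λ.continuous hS
  rwa [← ContinuousLinearMap.coe_coe, ← Submodule.map_coe, Submodule.map_span] at h

lemma topologicalClosure_span_image2_eq_top {E F G : Type*} [SeminormedAddCommGroup E]
    [NormedSpace ℂ E] [SeminormedAddCommGroup F] [NormedSpace ℂ F] [SeminormedAddCommGroup G]
    [NormedSpace ℂ G] {B : E →L[ℂ] F →L[ℂ] G} {S : Set E} {S' : Set F}
    (hB : (Submodule.span ℂ (range fun p : E × F ↦ B p.1 p.2)).topologicalClosure = ⊤)
    (hS : (Submodule.span ℂ S).topologicalClosure = ⊤)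
    (hS' : (Submodule.span ℂ S').topologicalClosure = ⊤) :
    (Submodule.span ℂ (image2 (fun f g ↦ B f g) S S')).topologicalClosure = ⊤ := by
  set K := (Submodule.span ℂ (image2 (fun f g ↦ B f g) S S')).topologicalClosure
  have hK : IsClosed (K : Set G) := Submodule.isClosed_topologicalClosure _
  have hleft (f : E) {g : F} (hg : g ∈ S') : B f g ∈ K := by
    suffices (Submodule.span ℂ S).topologicalClosure ≤ K.comap (B.flip g).toLinearMap from
      this (hS ▸ Submodule.mem_top)
    refine Submodule.topologicalClosure_minimal _ (Submodule.span_le.2 fun f hf ↦ ?_)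
      (hK.preimage (B.flip g).continuous)
    exact Submodule.le_topologicalClosure _ (Submodule.subset_span (mem_image2_of_mem hf hg))
  have hmem (f : E) (g : F) : B f g ∈ K := by
    suffices (Submodule.span ℂ S').topologicalClosure ≤ K.comap (B f).toLinearMap from
      this (hS' ▸ Submodule.mem_top)
    exact Submodule.topologicalClosure_minimal _ (Submodule.span_le.2 fun g hg ↦ hleft f hg)
      (hK.preimage (B f).continuous)
  rw [eq_top_iff, ← hB]
  refine Submodule.topologicalClosure_minimal _ (Submodule.span_le.2 ?_) hK
  rintro _ ⟨p, rfl⟩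
  exact hmem p.1 p.2

end Density

section ContinuousFunctions

variable {X Y : Type*} [TopologicalSpace X] [TopologicalSpace Y]

lemma topologicalClosure_span_submonoid_eq_top [CompactSpace X] {S : Submonoid C(X, ℂ)}
    (hstar : ∀ f ∈ S, star f ∈ S) (hsep : ∀ x y : X, x ≠ y → ∃ f ∈ S, f x ≠ f y) :
    (Submodule.span ℂ (S : Set C(X, ℂ))).topologicalClosure = ⊤ := by
  let A := StarAlgebra.adjoin ℂ (S : Set C(X, ℂ))
  have hA : Subalgebra.toSubmodule A.toSubalgebra = Submodule.span ℂ (S : Set C(X, ℂ)) := by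
    have hS : (S : Set C(X, ℂ)) ∪ star (S : Set C(X, ℂ)) = S :=
      union_eq_left.2 fun f hf ↦ by simpa using hstar _ (Set.mem_star.1 hf)
    rw [StarAlgebra.adjoin_toSubalgebra, hS, Algebra.adjoin_eq_span, Submonoid.closure_eq]
  have htop : A.topologicalClosure = ⊤ := by
    refine ContinuousMap.starSubalgebra_topologicalClosure_eq_top_of_separatesPoints A ?_
    intro x y hxy
    obtain ⟨f, hf, hne⟩ := hsep x y hxy
    exact ⟨f, ⟨f, StarAlgebra.subset_adjoin ℂ _ hf, rfl⟩, hne⟩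
  rw [← hA, eq_top_iff]
  intro f _
  exact (htop ▸ StarSubalgebra.mem_top : f ∈ A.topologicalClosure)

/-- Composition with a fixed continuous map, as a continuous linear map. -/
noncomputable def precompL (R : C(X, Y)) : C(Y, ℂ) →L[ℂ] C(X, ℂ) where
  toLinearMap := (ContinuousMap.compRightAlgHom ℂ ℂ R).toLinearMap
  cont := ContinuousMap.continuous_precomp R

@[simp]
lemma precompL_apply (R : C(X, Y)) (f : C(Y, ℂ)) (x : X) : precompL R f x = f (R x) := rfl

lemma norm_precompL_le [CompactSpace X] [CompactSpace Y] (R : C(X, Y)) (f : C(Y, ℂ)) :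
    ‖precompL R f‖ ≤ ‖f‖ :=
  (ContinuousMap.norm_le _ (norm_nonneg f)).2 fun x ↦ f.norm_coe_le_norm (R x)

/-- The bilinear map sending `f` and `g` to the function `(x, y) ↦ f x * g y`. -/
noncomputable def tensorMulL [CompactSpace X] [CompactSpace Y] :
    C(X, ℂ) →L[ℂ] C(Y, ℂ) →L[ℂ] C(X × Y, ℂ) :=
  (ContinuousLinearMap.mul ℂ C(X × Y, ℂ)).bilinearComp (precompL .fst) (precompL .snd)

@[simp]
lemma tensorMulL_apply [CompactSpace X] [CompactSpace Y] (f : C(X, ℂ)) (g : C(Y, ℂ))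
    (x : X × Y) : tensorMulL f g x = f x.1 * g x.2 := rfl

end ContinuousFunctions

section MetricProduct

variable {X Y : Type*} [MetricSpace X] [CompactSpace X] [MetricSpace Y] [CompactSpace Y]

lemma topologicalClosure_span_range_tensorMulL :
    (Submodule.span ℂ (range fun p : C(X, ℂ) × C(Y, ℂ) ↦ tensorMulL p.1 p.2)).topologicalClosure =
      ⊤ := by
  let S : Submonoid C(X × Y, ℂ) :=
    { carrier := range fun p : C(X, ℂ) × C(Y, ℂ) ↦ tensorMulL p.1 p.2
      one_mem' := ⟨1, by ext; simp⟩
      mul_mem' := by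
        rintro _ _ ⟨p, rfl⟩ ⟨p', rfl⟩
        exact ⟨p * p', by ext x; simp [mul_mul_mul_comm]⟩ }
  refine topologicalClosure_span_submonoid_eq_top (S := S) ?_ fun x y hxy ↦ ?_
  · rintro _ ⟨p, rfl⟩
    exact ⟨star p, by ext x; simp⟩
  · by_cases h₁ : x.1 = y.1
    · have h₂ : x.2 ≠ y.2 := fun h ↦ hxy (Prod.ext h₁ h)
      let f : C(Y, ℂ) := ⟨fun v ↦ (dist v y.2 : ℂ), by fun_prop⟩
      exact ⟨_, ⟨(1, f), rfl⟩, by simp [f, h₂]⟩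
    · let f : C(X, ℂ) := ⟨fun v ↦ (dist v y.1 : ℂ), by fun_prop⟩
      exact ⟨_, ⟨(f, 1), rfl⟩, by simp [f, h₁]⟩

lemma topologicalClosure_span_image2_tensorMulL {S : Set C(X, ℂ)} {S' : Set C(Y, ℂ)}
    (hS : (Submodule.span ℂ S).topologicalClosure = ⊤)
    (hS' : (Submodule.span ℂ S').topologicalClosure = ⊤) :
    (Submodule.span ℂ (image2 (fun f g ↦ tensorMulL f g) S S')).topologicalClosure = ⊤ :=
  topologicalClosure_span_image2_eq_top topologicalClosure_span_range_tensorMulL hS hS'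

end MetricProduct

section Mixing

variable {X : Type*} [MetricSpace X] [CompactSpace X] [MeasurableSpace X] [BorelSpace X]
  {μ : Measure X} [IsProbabilityMeasure μ]

/-- The sequence of maps `R` decorrelates continuous functions: for the powers
`R k = T ^ (n k)` of a transformation this is mixing of `T` along the sequence `n`. -/
def IsMixingAlong (μ : Measure X) (R : ℕ → C(X, X)) : Prop :=
  ∀ F G : C(X, ℂ), Tendsto (fun k ↦ ∫ x, F (R k x) * G x ∂μ) atTop
    (𝓝 ((∫ x, F x ∂μ) * ∫ x, G x ∂μ))

lemma integrable_continuousMap (μ : Measure X) [IsProbabilityMeasure μ] (F : C(X, ℂ)) :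
    Integrable F μ :=
  F.continuous.integrable_of_hasCompactSupport (HasCompactSupport.of_compactSpace F)

omit [BorelSpace X] in
lemma norm_integral_continuousMap_le (μ : Measure X) [IsProbabilityMeasure μ] (F : C(X, ℂ)) :
    ‖∫ x, F x ∂μ‖ ≤ ‖F‖ := by
  simpa using norm_integral_le_of_norm_le_const (μ := μ) (ae_of_all μ F.norm_coe_le_norm)

/-- Integration against a probability measure, as a continuous linear functional. -/
noncomputable def integralL (μ : Measure X) [IsProbabilityMeasure μ] : C(X, ℂ) →L[ℂ] ℂ :=
  LinearMap.mkContinuous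
    { toFun := fun F ↦ ∫ x, F x ∂μ
      map_add' := fun F G ↦
        integral_add (integrable_continuousMap μ F) (integrable_continuousMap μ G)
      map_smul' := fun c F ↦ integral_const_mul c _ }
    1 fun F ↦ by simpa using norm_integral_continuousMap_le μ F

lemma integralL_apply (F : C(X, ℂ)) : integralL μ F = ∫ x, F x ∂μ := rfl

/-- The covariance `∫ F ∘ R * G - ∫ F * ∫ G` as a bilinear form in `F` and `G`. -/
noncomputable def covarianceL (μ : Measure X) [IsProbabilityMeasure μ] (R : C(X, X)) :
    C(X, ℂ) →ₗ[ℂ] C(X, ℂ) →ₗ[ℂ] ℂ :=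
  LinearMap.mk₂ ℂ
    (fun F G ↦ integralL μ (precompL R F * G) - integralL μ F * integralL μ G)
    (fun F F' G ↦ by simp only [map_add, add_mul]; ring)
    (fun c F G ↦ by simp only [map_smul, smul_mul_assoc, smul_sub])
    (fun F G G' ↦ by simp only [map_add, mul_add]; ring)
    (fun c F G ↦ by simp only [map_smul, mul_smul_comm, smul_sub])

lemma covarianceL_apply (R : C(X, X)) (F G : C(X, ℂ)) :
    covarianceL μ R F G = (∫ x, F (R x) * G x ∂μ) - (∫ x, F x ∂μ) * ∫ x, G x ∂μ := rfl

lemma norm_covarianceL_le (R : C(X, X)) (F G : C(X, ℂ)) :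
    ‖covarianceL μ R F G‖ ≤ 2 * ‖F‖ * ‖G‖ := by
  have hcorr : ‖integralL μ (precompL R F * G)‖ ≤ ‖F‖ * ‖G‖ :=
    (norm_integral_continuousMap_le μ _).trans <| (norm_mul_le _ _).trans <| by
      gcongr
      exact norm_precompL_le R F
  have hmean : ‖integralL μ F * integralL μ G‖ ≤ ‖F‖ * ‖G‖ := by
    rw [norm_mul]
    gcongr <;> exact norm_integral_continuousMap_le μ _
  calc ‖integralL μ (precompL R F * G) - integralL μ F * integralL μ G‖
      ≤ ‖F‖ * ‖G‖ + ‖F‖ * ‖G‖ := (norm_sub_le _ _).trans (add_le_add hcorr hmean)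
    _ = 2 * ‖F‖ * ‖G‖ := by ring

lemma isMixingAlong_iff_tendsto_covarianceL {R : ℕ → C(X, X)} :
    IsMixingAlong μ R ↔ ∀ F G, Tendsto (fun k ↦ covarianceL μ (R k) F G) atTop (𝓝 0) := by
  simp only [IsMixingAlong, covarianceL_apply, tendsto_sub_nhds_zero_iff]

lemma isMixingAlong_of_topologicalClosure_span_eq_top {R : ℕ → C(X, X)} {S S' : Set C(X, ℂ)}
    (hS : (Submodule.span ℂ S).topologicalClosure = ⊤)
    (hS' : (Submodule.span ℂ S').topologicalClosure = ⊤)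
    (h : ∀ F ∈ S, ∀ G ∈ S', Tendsto (fun k ↦ covarianceL μ (R k) F G) atTop (𝓝 0)) :
    IsMixingAlong μ R := by
  rw [isMixingAlong_iff_tendsto_covarianceL]
  have hleft (F : C(X, ℂ)) {G : C(X, ℂ)} (hG : G ∈ S') :
      Tendsto (fun k ↦ covarianceL μ (R k) F G) atTop (𝓝 0) := by
    refine tendsto_zero_of_topologicalClosure_span_eq_top (C := 2 * ‖G‖₊)
      (φ := fun k ↦ (covarianceL μ (R k)).flip G) (fun k F ↦ ?_) hS (fun F hF ↦ h F hF G hG) F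
    simpa [mul_right_comm] using norm_covarianceL_le (R k) F G
  refine fun F ↦ tendsto_zero_of_topologicalClosure_span_eq_top (C := 2 * ‖F‖₊)
    (φ := fun k ↦ covarianceL μ (R k) F) (fun k G ↦ ?_) hS' fun G hG ↦ hleft F hG
  simpa using norm_covarianceL_le (R k) F G

lemma IsMixingAlong.prodMap {R : ℕ → C(X, X)} (hR : IsMixingAlong μ R) :
    IsMixingAlong (μ.prod μ) fun k ↦ (R k).prodMap (R k) := by
  have hdense := topologicalClosure_span_range_tensorMulL (X := X) (Y := X)
  refine isMixingAlong_of_topologicalClosure_span_eq_top hdense hdense ?_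
  rintro _ ⟨⟨f, g⟩, rfl⟩ _ ⟨⟨f', g'⟩, rfl⟩
  have hcorr (k : ℕ) : ∫ x, f (R k x.1) * g (R k x.2) * (f' x.1 * g' x.2) ∂μ.prod μ =
      (∫ x, f (R k x) * f' x ∂μ) * ∫ x, g (R k x) * g' x ∂μ := by
    rw [← integral_prod_mul]
    exact integral_congr_ae (ae_of_all _ fun x ↦ mul_mul_mul_comm _ _ _ _)
  have hlim := (hR f f').mul (hR g g')
  rw [mul_mul_mul_comm] at hlim
  simpa only [covarianceL_apply, tensorMulL_apply, ContinuousMap.prodMap_apply, Prod.map,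
    hcorr, integral_prod_mul, tendsto_sub_nhds_zero_iff] using hlim

lemma integral_continuousMap_mul_sub_le {f : X → ℂ} (hf : Integrable f μ) (F G : C(X, ℂ)) :
    ‖∫ x, f x * G x ∂μ - ∫ x, F x * G x ∂μ‖ ≤ ‖G‖ * ∫ x, ‖f x - F x‖ ∂μ := by
  have hG : ∀ᵐ x ∂μ, ‖G x‖ ≤ ‖G‖ := ae_of_all μ G.norm_coe_le_norm
  have hmeas : AEStronglyMeasurable G μ := G.continuous.aestronglyMeasurable
  rw [← integral_sub (hf.mul_bdd hmeas hG) ((integrable_continuousMap μ F).mul_bdd hmeas hG),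
    ← integral_const_mul]
  refine norm_integral_le_of_norm_le
    ((hf.sub (integrable_continuousMap μ F)).norm.const_mul _) (ae_of_all μ fun x ↦ ?_)
  rw [← sub_mul, norm_mul, mul_comm]
  gcongr
  exact G.norm_coe_le_norm x

lemma exists_continuousMap_integral_norm_sub_le {f : X → ℂ} (hf : Integrable f μ) {ε : ℝ}
    (hε : 0 < ε) : ∃ F : C(X, ℂ), ∫ x, ‖f x - F x‖ ∂μ ≤ ε := by
  obtain ⟨F, hF, -⟩ := hf.exists_boundedContinuous_integral_sub_le hε
  exact ⟨F.toContinuousMap, hF⟩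

lemma integral_norm_sub_comp_eq {R : C(X, X)} (hR : MeasurePreserving R μ μ) {f : X → ℂ}
    (hf : Integrable f μ) (hfR : f ∘ R = f) (F : C(X, ℂ)) :
    ∫ x, ‖f x - F (R x)‖ ∂μ = ∫ x, ‖f x - F x‖ ∂μ := by
  have hmeas : AEStronglyMeasurable (fun x ↦ ‖f x - F x‖) (μ.map R) := by
    rw [hR.map_eq]
    exact (hf.sub (integrable_continuousMap μ F)).norm.aestronglyMeasurable
  calc _ = ∫ x, ‖f (R x) - F (R x)‖ ∂μ :=
        integral_congr_ae (ae_of_all μ fun x ↦ by rw [← congrFun hfR x]; rfl)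
    _ = ∫ x, ‖f x - F x‖ ∂μ := by rw [← integral_map hR.aemeasurable hmeas, hR.map_eq]

lemma IsMixingAlong.integral_mul_eq {R : ℕ → C(X, X)} (hR : IsMixingAlong μ R)
    (hRμ : ∀ k, MeasurePreserving (R k) μ μ) {f : X → ℂ} (hf : Integrable f μ)
    (hfR : ∀ k, f ∘ R k = f) (G : C(X, ℂ)) :
    ∫ x, f x * G x ∂μ = (∫ x, f x ∂μ) * ∫ x, G x ∂μ := by
  suffices h : ∀ ε > 0, ‖∫ x, f x * G x ∂μ - (∫ x, f x ∂μ) * ∫ x, G x ∂μ‖ ≤ ‖G‖ * ε + ε * ‖G‖ by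
    have hlim : Tendsto (fun ε ↦ ‖G‖ * ε + ε * ‖G‖) (𝓝[>] 0) (𝓝 0) :=
      (Continuous.tendsto' (by fun_prop) 0 0 (by simp)).mono_left nhdsWithin_le_nhds
    exact eq_of_sub_eq_zero (norm_le_zero_iff.1
      (ge_of_tendsto hlim (eventually_mem_nhdsWithin.mono h)))
  intro ε hε
  obtain ⟨F, hF⟩ := exists_continuousMap_integral_norm_sub_le hf hε
  have hcorr (k : ℕ) : ‖∫ x, f x * G x ∂μ - ∫ x, F (R k x) * G x ∂μ‖ ≤ ‖G‖ * ε := by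
    refine (integral_continuousMap_mul_sub_le hf (F.comp (R k)) G).trans ?_
    gcongr
    exact (integral_norm_sub_comp_eq (hRμ k) hf (hfR k) F).trans_le hF
  have hlim : ‖∫ x, f x * G x ∂μ - (∫ x, F x ∂μ) * ∫ x, G x ∂μ‖ ≤ ‖G‖ * ε :=
    le_of_tendsto (tendsto_const_nhds.sub (hR F G)).norm (Eventually.of_forall hcorr)
  have hmean : ‖∫ x, F x ∂μ - ∫ x, f x ∂μ‖ ≤ ε := by
    have h := integral_continuousMap_mul_sub_le hf F 1
    simp only [ContinuousMap.one_apply, mul_one] at h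
    calc _ ≤ ‖(1 : C(X, ℂ))‖ * ∫ x, ‖f x - F x‖ ∂μ := by rwa [norm_sub_rev]
      _ ≤ 1 * ε := by
        gcongr
        exact (ContinuousMap.norm_le _ zero_le_one).2 fun x ↦ by simp
      _ = ε := one_mul ε
  calc _ = ‖(∫ x, f x * G x ∂μ - (∫ x, F x ∂μ) * ∫ x, G x ∂μ) +
        (∫ x, F x ∂μ - ∫ x, f x ∂μ) * ∫ x, G x ∂μ‖ := by ring_nf
    _ ≤ ‖G‖ * ε + ε * ‖G‖ := by
      refine (norm_add_le _ _).trans (add_le_add hlim ((norm_mul_le _ _).trans ?_))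
      gcongr
      exact norm_integral_continuousMap_le μ G

lemma IsMixingAlong.restrict_eq_smul {R : ℕ → C(X, X)} (hR : IsMixingAlong μ R)
    (hRμ : ∀ k, MeasurePreserving (R k) μ μ) {A : Set X} (hA : MeasurableSet A)
    (hAR : ∀ k, R k ⁻¹' A = A) : μ.restrict A = μ A • μ := by
  have : IsFiniteMeasure (μ A • μ) := Measure.smul_finite μ (measure_ne_top μ A)
  refine ext_of_forall_integral_eq_of_IsFiniteMeasure fun g ↦ ?_
  let f : X → ℂ := A.indicator 1
  have hf : Integrable f μ := (integrable_const 1).indicator hA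
  have hfR (k : ℕ) : f ∘ R k = f := by
    change ((R k) ⁻¹' A).indicator 1 = _
    rw [hAR k]
  have h := hR.integral_mul_eq hRμ hf hfR ⟨fun x ↦ (g x : ℂ), by fun_prop⟩
  have hmul (x : X) : f x * (g x : ℂ) = A.indicator (fun x ↦ (g x : ℂ)) x := by
    by_cases hx : x ∈ A <;> simp [f, hx]
  have hmean : ∫ x, f x ∂μ = μ.real A := by simp [f, integral_indicator hA]
  simp only [ContinuousMap.coe_mk, hmul, hmean, integral_indicator hA, integral_complex_ofReal] at h
  rw [integral_smul_measure]
  exact_mod_cast h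

lemma IsMixingAlong.ergodic {S : X → X} (hS : MeasurePreserving S μ μ) {n : ℕ → ℕ}
    {R : ℕ → C(X, X)} (hR : IsMixingAlong μ R) (hRS : ∀ k, ⇑(R k) = S^[n k]) : Ergodic S μ := by
  refine ⟨hS, ⟨fun A hA hinv ↦ ?_⟩⟩
  have hrestrict : μ.restrict A = μ A • μ := by
    refine hR.restrict_eq_smul (fun k ↦ hRS k ▸ hS.iterate (n k)) hA fun k ↦ ?_
    rw [hRS k, preimage_iterate_eq]
    exact Function.iterate_fixed hinv (n k)
  have hprod : μ A * μ Aᶜ = 0 := by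
    simpa [Measure.restrict_apply hA.compl] using (congrArg (fun ν ↦ ν Aᶜ) hrestrict).symm
  rw [eventuallyConst_set', ae_eq_empty, ae_eq_univ]
  exact mul_eq_zero.1 hprod

theorem IsMixingAlong.weaklyMixing {T : X → X} (hT : MeasurePreserving T μ μ) {n : ℕ → ℕ}
    {R : ℕ → C(X, X)} (hR : IsMixingAlong μ R) (hRT : ∀ k, ⇑(R k) = T^[n k]) :
    WeaklyMixing T μ := by
  refine hR.prodMap.ergodic (n := n) (hT.prod hT) fun k ↦ ?_
  change Prod.map (R k) (R k) = (Prod.map T T)^[n k]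
  rw [hRT, Prod.map_iterate]

end Mixing

section RegularizedInverse

/-- A smooth bounded regularization of the inverse `x⁻¹`, which is recovered as `δ → 0`. -/
noncomputable def regInv (δ x : ℝ) : ℝ := x / (x ^ 2 + δ ^ 2)

variable {δ : ℝ}

lemma abs_regInv_le (hδ : 0 < δ) (x : ℝ) : |regInv δ x| ≤ 1 / δ := by
  have hden : 0 < x ^ 2 + δ ^ 2 := by positivity
  rw [regInv, abs_div, abs_of_pos hden, div_le_div_iff₀ hden hδ, ← sq_abs x]
  nlinarith [sq_nonneg (|x| - δ), abs_nonneg x]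

lemma one_sub_mul_regInv (hδ : 0 < δ) (x : ℝ) :
    1 - x * regInv δ x = δ ^ 2 / (x ^ 2 + δ ^ 2) := by
  have hden : x ^ 2 + δ ^ 2 ≠ 0 := by positivity
  rw [regInv]
  field_simp
  ring

lemma contDiff_regInv (hδ : 0 < δ) {n : ℕ∞ω} : ContDiff ℝ n (regInv δ) :=
  contDiff_id.div (by fun_prop) fun x ↦ by positivity

lemma abs_deriv_regInv_le (hδ : 0 < δ) (x : ℝ) : |deriv (regInv δ) x| ≤ 1 / δ ^ 2 := by
  have hden : 0 < x ^ 2 + δ ^ 2 := by positivity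
  have hderiv : deriv (regInv δ) x = (δ ^ 2 - x ^ 2) / (x ^ 2 + δ ^ 2) ^ 2 := by
    have h := (hasDerivAt_id x).div (((hasDerivAt_id x).pow 2).add_const (δ ^ 2)) hden.ne'
    refine (h.congr_deriv ?_).deriv
    simp only [Pi.pow_apply, id, Nat.cast_ofNat]
    ring
  have hnum : |δ ^ 2 - x ^ 2| ≤ x ^ 2 + δ ^ 2 :=
    abs_le.2 ⟨by linarith [sq_nonneg δ], by linarith [sq_nonneg x]⟩
  calc |deriv (regInv δ) x| = |δ ^ 2 - x ^ 2| / (x ^ 2 + δ ^ 2) ^ 2 := by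
        rw [hderiv, abs_div, abs_of_pos (pow_pos hden 2)]
    _ ≤ (x ^ 2 + δ ^ 2) / (x ^ 2 + δ ^ 2) ^ 2 := by gcongr
    _ = 1 / (x ^ 2 + δ ^ 2) := by field_simp
    _ ≤ 1 / δ ^ 2 := by
      gcongr
      exact le_add_of_nonneg_left (sq_nonneg x)

end RegularizedInverse

section OscillatoryIntegral

variable {E u : ℝ → ℂ}

lemma norm_integral_deriv_mul_le (hE : ContDiff ℝ 1 E) (hu : ContDiff ℝ 1 u)
    (hE₁ : ∀ b, ‖E b‖ ≤ 1) (hE_per : E 1 = E 0) (hu_per : u 1 = u 0) {C : ℝ}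
    (hu' : ∀ b, ‖deriv u b‖ ≤ C) : ‖∫ b in (0 : ℝ)..1, deriv E b * u b‖ ≤ C := by
  have hparts : ∫ b in (0 : ℝ)..1, deriv E b * u b = -∫ b in (0 : ℝ)..1, E b * deriv u b := by
    rw [intervalIntegral.integral_mul_deriv_eq_deriv_mul
      (fun b _ ↦ (hE.differentiable one_ne_zero b).hasDerivAt)
      (fun b _ ↦ (hu.differentiable one_ne_zero b).hasDerivAt)
      ((hE.continuous_deriv le_rfl).intervalIntegrable ..)
      ((hu.continuous_deriv le_rfl).intervalIntegrable ..), hE_per, hu_per, sub_self, zero_sub,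
      neg_neg]
  have hbound : ∀ b ∈ Ι (0 : ℝ) 1, ‖E b * deriv u b‖ ≤ C := fun b _ ↦ by
    rw [norm_mul]
    exact (mul_le_of_le_one_left (norm_nonneg _) (hE₁ b)).trans (hu' b)
  simpa [hparts] using intervalIntegral.norm_integral_le_of_norm_le_const hbound

lemma norm_integral_mul_phase_le (hE : ContDiff ℝ 1 E) (hu : ContDiff ℝ 1 u)
    (hE₁ : ∀ b, ‖E b‖ ≤ 1) (hE_per : E 1 = E 0) (hu_per : u 1 = u 0) {B B' : ℝ}
    (hu₀ : ∀ b, ‖u b‖ ≤ B) (hu' : ∀ b, ‖deriv u b‖ ≤ B') {φ : ℝ → ℝ} {m κ : ℝ}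
    (hκ : κ ≠ 0)
    (hE' : ∀ b, deriv E b = 2 * Real.pi * Complex.I * (m - κ * φ b) * E b) :
    ‖∫ b in (0 : ℝ)..1, E b * φ b * u b‖ ≤ (|m| * B + B' / (2 * Real.pi)) / |κ| := by
  have hsplit : 2 * Real.pi * Complex.I * κ * ∫ b in (0 : ℝ)..1, E b * φ b * u b =
      2 * Real.pi * Complex.I * m * (∫ b in (0 : ℝ)..1, E b * u b) -
        ∫ b in (0 : ℝ)..1, deriv E b * u b := by
    simp only [← intervalIntegral.integral_const_mul]
    rw [← intervalIntegral.integral_sub (f := fun b ↦ 2 * Real.pi * Complex.I * m * (E b * u b))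
      (g := fun b ↦ deriv E b * u b)
      ((continuous_const.mul (hE.continuous.mul hu.continuous)).intervalIntegrable ..)
      (((hE.continuous_deriv le_rfl).mul hu.continuous).intervalIntegrable ..)]
    refine intervalIntegral.integral_congr fun b _ ↦ ?_
    simp only [hE']
    ring
  have hmean : ‖∫ b in (0 : ℝ)..1, E b * u b‖ ≤ B := by
    have hbound : ∀ b ∈ Ι (0 : ℝ) 1, ‖E b * u b‖ ≤ B := fun b _ ↦ by
      rw [norm_mul]
      exact (mul_le_of_le_one_left (norm_nonneg _) (hE₁ b)).trans (hu₀ b)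
    simpa using intervalIntegral.norm_integral_le_of_norm_le_const hbound
  have hnorm : 2 * Real.pi * |κ| * ‖∫ b in (0 : ℝ)..1, E b * φ b * u b‖ ≤
      2 * Real.pi * |m| * B + B' := by
    calc _ = ‖2 * Real.pi * Complex.I * κ * ∫ b in (0 : ℝ)..1, E b * φ b * u b‖ := by
          simp [abs_of_pos Real.pi_pos]
      _ ≤ ‖2 * Real.pi * Complex.I * m * ∫ b in (0 : ℝ)..1, E b * u b‖ +
          ‖∫ b in (0 : ℝ)..1, deriv E b * u b‖ := hsplit ▸ norm_sub_le _ _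
      _ = 2 * Real.pi * |m| * ‖∫ b in (0 : ℝ)..1, E b * u b‖ +
          ‖∫ b in (0 : ℝ)..1, deriv E b * u b‖ := by simp [abs_of_pos Real.pi_pos]
      _ ≤ 2 * Real.pi * |m| * B + B' := by
        gcongr
        exact norm_integral_deriv_mul_le hE hu hE₁ hE_per hu_per hu'
  have hκ₀ : 0 < |κ| := abs_pos.2 hκ
  rw [le_div_iff₀ hκ₀]
  refine le_of_mul_le_mul_left (a := 2 * Real.pi) ?_ (by positivity)
  calc _ = 2 * Real.pi * |κ| * ‖∫ b in (0 : ℝ)..1, E b * φ b * u b‖ := by ring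
    _ ≤ 2 * Real.pi * |m| * B + B' := hnorm
    _ = 2 * Real.pi * (|m| * B + B' / (2 * Real.pi)) := by field_simp

lemma norm_deriv_mul_regInv_le {g : ℝ → ℂ} (hg : ContDiff ℝ 1 g) {c : ℝ → ℝ}
    (hc : ContDiff ℝ 1 c) {G C δ : ℝ} (hδ : 0 < δ) (hg₁ : ∀ b, ‖g b‖ ≤ 1)
    (hg' : ∀ b, ‖deriv g b‖ ≤ G) (hc' : ∀ b, |deriv c b| ≤ C) (b : ℝ) :
    ‖deriv (fun b ↦ g b * regInv δ (c b)) b‖ ≤ G / δ + C / δ ^ 2 := by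
  have hreg : HasDerivAt (fun b ↦ regInv δ (c b)) (deriv (regInv δ) (c b) * deriv c b) b :=
    ((contDiff_regInv hδ (n := 1)).differentiable one_ne_zero (c b)).hasDerivAt.comp b
      (hc.differentiable one_ne_zero b).hasDerivAt
  have hprod : HasDerivAt (fun b ↦ g b * regInv δ (c b)) _ b :=
    (hg.differentiable one_ne_zero b).hasDerivAt.mul hreg.ofReal_comp
  rw [hprod.deriv]
  refine (norm_add_le _ _).trans ?_
  simp only [norm_mul, Complex.norm_real, Real.norm_eq_abs]
  have hG : 0 ≤ G := (norm_nonneg _).trans (hg' 0)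
  calc _ ≤ G * (1 / δ) + 1 * (1 / δ ^ 2 * C) := by
        gcongr
        exacts [hg' b, abs_regInv_le hδ _, hg₁ b, abs_deriv_regInv_le hδ _, hc' b]
    _ = G / δ + C / δ ^ 2 := by ring

lemma abs_one_sub_mul_regInv_le {δ L η c D : ℝ} (hδ : 0 < δ) (hL : 0 < L)
    (hD : |D - L * c| ≤ η * L) :
    |1 - D / L * regInv δ c| ≤ δ ^ 2 / (c ^ 2 + δ ^ 2) + η / δ := by
  have hη : |D / L - c| ≤ η := by
    rw [show D / L - c = (D - L * c) / L by field_simp, abs_div, abs_of_pos hL, div_le_iff₀ hL]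
    exact hD
  calc |1 - D / L * regInv δ c| = |(1 - c * regInv δ c) - (D / L - c) * regInv δ c| := by
        congr 1
        ring
    _ ≤ |1 - c * regInv δ c| + |D / L - c| * |regInv δ c| :=
      (abs_sub _ _).trans_eq (by rw [abs_mul])
    _ ≤ δ ^ 2 / (c ^ 2 + δ ^ 2) + η * (1 / δ) := by
      rw [one_sub_mul_regInv hδ, abs_of_nonneg (by positivity)]
      gcongr
      exacts [(abs_nonneg _).trans hη, abs_regInv_le hδ c]
    _ = _ := by rw [mul_one_div]

lemma norm_integral_mul_one_sub_mul_regInv_le {F : ℝ → ℂ} {D c : ℝ → ℝ} {K L δ η : ℝ}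
    (hF : ∀ b, ‖F b‖ ≤ K) (hc : Continuous c) (hL : 0 < L) (hδ : 0 < δ)
    (hDc : ∀ b, |D b - L * c b| ≤ η * L) :
    ‖∫ b in (0 : ℝ)..1, F b * ↑(1 - D b / L * regInv δ (c b))‖ ≤
      K * ((∫ b in (0 : ℝ)..1, δ ^ 2 / (c b ^ 2 + δ ^ 2)) + η / δ) := by
  have hbound : ∀ b, ‖F b * ↑(1 - D b / L * regInv δ (c b))‖ ≤
      K * (δ ^ 2 / (c b ^ 2 + δ ^ 2) + η / δ) := fun b ↦ by
    rw [norm_mul, Complex.norm_real]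
    exact mul_le_mul (hF b) (abs_one_sub_mul_regInv_le hδ hL (hDc b)) (norm_nonneg _)
      ((norm_nonneg _).trans (hF b))
  have hmajor : Continuous fun b ↦ δ ^ 2 / (c b ^ 2 + δ ^ 2) :=
    continuous_const.div ((hc.pow 2).add continuous_const) fun b ↦ by positivity
  refine (intervalIntegral.norm_integral_le_of_norm_le zero_le_one
    (Eventually.of_forall fun b _ ↦ hbound b)
    ((continuous_const.mul (hmajor.add continuous_const)).intervalIntegrable ..)).trans_eq ?_
  rw [intervalIntegral.integral_const_mul, intervalIntegral.integral_add
    (hmajor.intervalIntegrable ..) intervalIntegrable_const]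
  simp

-- Multiplying the integrand by `D / L * regInv δ c ≈ 1` exposes the derivative of the phase.
lemma norm_integral_mul_le_of_phase_near {E g : ℝ → ℂ} {r D c : ℝ → ℝ} {m κ L δ η G C : ℝ}
    (hE : ContDiff ℝ 1 E) (hE₁ : ∀ b, ‖E b‖ ≤ 1) (hE_per : E 1 = E 0)
    (hE' : ∀ b, deriv E b = 2 * Real.pi * Complex.I * (m - κ * ↑(D b * r b)) * E b)
    (hg : ContDiff ℝ 1 g) (hg₁ : ∀ b, ‖g b‖ ≤ 1) (hg_per : g 1 = g 0) (hg' : ∀ b, ‖deriv g b‖ ≤ G)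
    (hc : ContDiff ℝ 1 c) (hc_per : c 1 = c 0) (hc' : ∀ b, |deriv c b| ≤ C)
    (hr : Continuous r) (hr₂ : ∀ b, |r b| ≤ 2) (hD : Continuous D) (hκ : κ ≠ 0) (hL : 0 < L)
    (hδ : 0 < δ) (hDc : ∀ b, |D b - L * c b| ≤ η * L) :
    ‖∫ b in (0 : ℝ)..1, E b * r b * g b‖ ≤
      (|m| * (1 / δ) + (G / δ + C / δ ^ 2) / (2 * Real.pi)) / |κ| / L +
        2 * ((∫ b in (0 : ℝ)..1, δ ^ 2 / (c b ^ 2 + δ ^ 2)) + η / δ) := by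
  set v : ℝ → ℝ := fun b ↦ regInv δ (c b) with hv
  have hv_smooth : ContDiff ℝ 1 v := (contDiff_regInv hδ).comp hc
  have hu : ContDiff ℝ 1 fun b ↦ g b * v b :=
    hg.mul (Complex.ofRealCLM.contDiff.comp hv_smooth)
  have hcont : Continuous fun b ↦ E b * ↑(D b * r b) * (g b * v b) :=
    (hE.continuous.mul (Complex.continuous_ofReal.comp (hD.mul hr))).mul hu.continuous
  have hrem_cont : Continuous fun b ↦ E b * r b * g b * ↑(1 - D b / L * v b) :=
    ((hE.continuous.mul (Complex.continuous_ofReal.comp hr)).mul hg.continuous).mul <|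
      Complex.continuous_ofReal.comp <|
        continuous_const.sub ((hD.div_const L).mul hv_smooth.continuous)
  have hsplit : ∫ b in (0 : ℝ)..1, E b * r b * g b =
      (∫ b in (0 : ℝ)..1, E b * ↑(D b * r b) * (g b * v b)) / L +
        ∫ b in (0 : ℝ)..1, E b * r b * g b * ↑(1 - D b / L * v b) := by
    rw [← intervalIntegral.integral_div, ← intervalIntegral.integral_add
      ((hcont.div_const _).intervalIntegrable ..) (hrem_cont.intervalIntegrable ..)]
    refine intervalIntegral.integral_congr fun b _ ↦ ?_
    push_cast
    ring
  have hmain : ‖∫ b in (0 : ℝ)..1, E b * ↑(D b * r b) * (g b * v b)‖ ≤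
      (|m| * (1 / δ) + (G / δ + C / δ ^ 2) / (2 * Real.pi)) / |κ| := by
    refine norm_integral_mul_phase_le hE hu hE₁ hE_per (by simp only [hv, hg_per, hc_per])
      (fun b ↦ ?_) (norm_deriv_mul_regInv_le hg hc hδ hg₁ hg' hc') hκ hE'
    rw [norm_mul, Complex.norm_real]
    exact (mul_le_of_le_one_left (norm_nonneg _) (hg₁ b)).trans (abs_regInv_le hδ _)
  have hrem : ‖∫ b in (0 : ℝ)..1, E b * r b * g b * ↑(1 - D b / L * v b)‖ ≤
      2 * ((∫ b in (0 : ℝ)..1, δ ^ 2 / (c b ^ 2 + δ ^ 2)) + η / δ) := by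
    refine norm_integral_mul_one_sub_mul_regInv_le (fun b ↦ ?_) hc.continuous hL hδ hDc
    rw [norm_mul, norm_mul, Complex.norm_real, ← one_mul 2, ← mul_one (1 * 2)]
    gcongr
    exacts [hE₁ b, hr₂ b, hg₁ b]
  calc _ ≤ ‖∫ b in (0 : ℝ)..1, E b * ↑(D b * r b) * (g b * v b)‖ / L +
        ‖∫ b in (0 : ℝ)..1, E b * r b * g b * ↑(1 - D b / L * v b)‖ := by
        rw [hsplit]
        refine (norm_add_le _ _).trans_eq ?_
        rw [norm_div, Complex.norm_real, Real.norm_of_nonneg hL.le]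
    _ ≤ _ := by gcongr

end OscillatoryIntegral

section Profile

/-- The mean over `x` of the defect `δ² / (c² + δ²)` of the regularized inverse of
`c = -4π cos (2πx)`, the limiting profile of the phase derivatives. -/
noncomputable def profileDefect (δ : ℝ) : ℝ :=
  ∫ x in (0 : ℝ)..1, δ ^ 2 / ((-4 * Real.pi * Real.cos (2 * Real.pi * x)) ^ 2 + δ ^ 2)

lemma ae_cos_two_pi_mul_ne_zero : ∀ᵐ x : ℝ, Real.cos (2 * Real.pi * x) ≠ 0 := by
  have hcount : (range fun k : ℤ ↦ (2 * (k : ℝ) + 1) / 4).Countable := countable_range _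
  filter_upwards [hcount.ae_notMem volume] with x hx hcos
  obtain ⟨k, hk⟩ := Real.cos_eq_zero_iff.1 hcos
  refine hx ⟨k, ?_⟩
  have hpi := Real.pi_pos.ne'
  field_simp at hk ⊢
  linarith

lemma tendsto_profileDefect : Tendsto profileDefect (𝓝[>] 0) (𝓝 0) := by
  suffices h : Tendsto profileDefect (𝓝[>] 0) (𝓝 (∫ _ in (0 : ℝ)..1, (0 : ℝ))) by simpa using h
  refine intervalIntegral.tendsto_integral_filter_of_dominated_convergence (fun _ ↦ 1) ?_ ?_
    intervalIntegrable_const ?_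
  · filter_upwards [self_mem_nhdsWithin] with δ (hδ : 0 < δ)
    exact (continuous_const.div (by fun_prop) fun x ↦ by positivity).aestronglyMeasurable
  · refine Eventually.of_forall fun δ ↦ Eventually.of_forall fun x _ ↦ ?_
    rw [Real.norm_of_nonneg (by positivity)]
    exact div_le_one_of_le₀ (le_add_of_nonneg_left (sq_nonneg _)) (by positivity)
  · filter_upwards [ae_cos_two_pi_mul_ne_zero] with x hx _
    have hc : -4 * Real.pi * Real.cos (2 * Real.pi * x) ≠ 0 :=
      mul_ne_zero (mul_ne_zero (by norm_num) Real.pi_ne_zero) hx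
    have hcont : ContinuousAt (fun δ : ℝ ↦
        δ ^ 2 / ((-4 * Real.pi * Real.cos (2 * Real.pi * x)) ^ 2 + δ ^ 2)) 0 :=
      ContinuousAt.div (by fun_prop) (by fun_prop) (by simpa using hc)
    simpa using hcont.tendsto.mono_left (nhdsWithin_le_nhds (s := Ioi 0))

lemma intervalIntegral_comp_natCast_mul_sub_of_periodic {F : ℝ → ℝ}
    (hF : Function.Periodic F 1) (hFc : Continuous F) {q : ℕ} (hq : q ≠ 0) (s : ℝ) :
    ∫ b in (0 : ℝ)..1, F (q * (b - s)) = ∫ x in (0 : ℝ)..1, F x := by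
  have hq' : (q : ℝ) ≠ 0 := Nat.cast_ne_zero.2 hq
  have hper := hF.intervalIntegral_add_zsmul_eq q (q * (0 - s))
    (fun _ _ ↦ hFc.intervalIntegrable ..)
  rw [show (q : ℝ) * (0 - s) + (q : ℤ) • (1 : ℝ) = q * (1 - s) by simp; ring] at hper
  rw [intervalIntegral.integral_comp_sub_right (fun x ↦ F (q * x)) s,
    intervalIntegral.integral_comp_mul_left F hq', hper,
    hF.intervalIntegral_add_eq (q * (0 - s)) 0]
  simp [hq']

lemma integral_defect_eq_profileDefect {q : ℕ} (hq : q ≠ 0) (s : ℝ) {δ : ℝ} (hδ : 0 < δ) :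
    ∫ b in (0 : ℝ)..1,
        δ ^ 2 / ((-4 * Real.pi * Real.cos (2 * Real.pi * (q * (b - s)))) ^ 2 + δ ^ 2) =
      profileDefect δ := by
  refine intervalIntegral_comp_natCast_mul_sub_of_periodic (F := fun x ↦
    δ ^ 2 / ((-4 * Real.pi * Real.cos (2 * Real.pi * x)) ^ 2 + δ ^ 2)) (fun x ↦ ?_) ?_ hq s
  · simp only [mul_add, mul_one, Real.cos_add_two_pi]
  · exact continuous_const.div (by fun_prop) fun x ↦ by positivity

lemma norm_integral_mul_le_of_cos_phase {E g : ℝ → ℂ} {r D : ℝ → ℝ} {m κ L δ η G s : ℝ} {q : ℕ}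
    (hE : ContDiff ℝ 1 E) (hE₁ : ∀ b, ‖E b‖ ≤ 1) (hE_per : E 1 = E 0)
    (hE' : ∀ b, deriv E b = 2 * Real.pi * Complex.I * (m - κ * ↑(D b * r b)) * E b)
    (hg : ContDiff ℝ 1 g) (hg₁ : ∀ b, ‖g b‖ ≤ 1) (hg_per : g 1 = g 0) (hg' : ∀ b, ‖deriv g b‖ ≤ G)
    (hr : Continuous r) (hr₂ : ∀ b, |r b| ≤ 2) (hD : Continuous D) (hκ : κ ≠ 0) (hL : 0 < L)
    (hδ : 0 < δ) (hq : q ≠ 0)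
    (hDc : ∀ b, |D b - L * (-4 * Real.pi * Real.cos (2 * Real.pi * (q * (b - s))))| ≤ η * L) :
    ‖∫ b in (0 : ℝ)..1, E b * r b * g b‖ ≤
      (|m| * (1 / δ) + (G / δ + 8 * Real.pi ^ 2 * q / δ ^ 2) / (2 * Real.pi)) / |κ| / L +
        2 * (profileDefect δ + η / δ) := by
  rw [← integral_defect_eq_profileDefect hq s hδ]
  refine norm_integral_mul_le_of_phase_near hE hE₁ hE_per hE' hg hg₁ hg_per hg' (by fun_prop) ?_
    (fun b ↦ ?_) hr hr₂ hD hκ hL hδ hDc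
  · rw [show 2 * Real.pi * (q * (1 - s)) = 2 * Real.pi * (q * (0 - s)) + q * (2 * Real.pi) by ring,
      Real.cos_add_nat_mul_two_pi]
  · have hderiv : HasDerivAt (fun b ↦ -4 * Real.pi * Real.cos (2 * Real.pi * (q * (b - s))))
        (-4 * Real.pi * (-Real.sin (2 * Real.pi * (q * (b - s))) * (2 * Real.pi * (q * 1)))) b :=
      ((((hasDerivAt_id b).sub_const s).const_mul (q : ℝ)).const_mul (2 * Real.pi)).cos.const_mul _
    rw [hderiv.deriv]
    calc _ = 8 * Real.pi ^ 2 * q * |Real.sin (2 * Real.pi * (q * (b - s)))| := by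
          rw [← abs_of_nonneg (by positivity : 0 ≤ 8 * Real.pi ^ 2 * (q : ℝ)), ← abs_mul]
          congr 1
          ring
      _ ≤ 8 * Real.pi ^ 2 * q * 1 := by
        gcongr
        exact Real.abs_sin_le_one _
      _ = _ := mul_one _

end Profile

section TorusFourier

instance : IsProbabilityMeasure (volume : Measure Torus1) :=
  ⟨by simp⟩

/-- The character `(x, y) ↦ exp (2πi (m.1 x + m.2 y))` of the torus. -/
noncomputable def torusChar (m : ℤ × ℤ) : C(Torus2, ℂ) := tensorMulL (fourier m.1) (fourier m.2)

lemma torusChar_torusProj (m : ℤ × ℤ) (z : ℝ × ℝ) : torusChar m (torusProj z) =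
    Complex.exp (2 * Real.pi * Complex.I * (m.1 * z.1 + m.2 * z.2)) := by
  rw [torusChar, tensorMulL_apply, torusProj, fourier_coe_apply, fourier_coe_apply,
    ← Complex.exp_add]
  congr 1
  push_cast
  ring

lemma norm_torusChar_apply (m : ℤ × ℤ) (p : Torus2) : ‖torusChar m p‖ = 1 := by
  simp [torusChar, fourier_apply, Circle.norm_coe]

lemma topologicalClosure_span_range_torusChar :
    (Submodule.span ℂ (range torusChar)).topologicalClosure = ⊤ := by
  have h := topologicalClosure_span_image2_tensorMulL (span_fourier_closure_eq_top (T := 1))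
    (span_fourier_closure_eq_top (T := 1))
  rwa [image2_range] at h

lemma integral_torusChar_of_ne_zero {m : ℤ × ℤ} (hm : m ≠ 0) : ∫ p, torusChar m p = 0 := by
  have : Fact ((0 : ℝ) < 1) := ⟨one_pos⟩
  have hfourier {n : ℤ} (hn : n ≠ 0) : ∫ x : Torus1, fourier n x = 0 :=
    integral_eq_zero_of_add_right_eq_neg (μ := volume) (fourier_add_half_inv_index hn one_pos)
  calc ∫ p, torusChar m p = (∫ x : Torus1, fourier m.1 x) * ∫ y : Torus1, fourier m.2 y :=
        integral_prod_mul (μ := volume) (ν := volume) (fourier m.1) (fourier m.2)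
    _ = 0 := by
      by_cases hm₁ : m.1 = 0
      · rw [hfourier fun hm₂ ↦ hm (Prod.ext hm₁ hm₂), mul_zero]
      · rw [hfourier hm₁, zero_mul]

lemma integral_torus_eq (F : C(Torus2, ℂ)) :
    ∫ p, F p = ∫ a in Ioc (0 : ℝ) 1, ∫ b in (0 : ℝ)..1, F (torusProj (a, b)) := by
  have hint : IntegrableOn (fun z ↦ F (torusProj z)) unitSquare :=
    measurePreserving_torusProj.integrable_comp_of_integrable (integrable_continuousMap volume F)
  rw [← measurePreserving_torusProj.map_eq, integral_map
    measurePreserving_torusProj.measurable.aemeasurable F.continuous.aestronglyMeasurable]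
  simp only [intervalIntegral.integral_of_le zero_le_one]
  exact setIntegral_prod _ hint

end TorusFourier

namespace TimeChange

variable (Θ : TimeChange)

section NormalizedTestFunctions

lemma isIntInvariant_ofReal_density : IsIntInvariant fun z ↦ (Θ.density z : ℂ) :=
  fun z v hv ↦ congrArg Complex.ofReal (Θ.isIntInvariant_density z v hv)

/-- The density of the invariant measure, as a function on the torus. -/
noncomputable def torusDensity : C(Torus2, ℂ) where
  toFun := torusDescend fun z ↦ (Θ.density z : ℂ)
  continuous_toFun := Θ.isIntInvariant_ofReal_density.continuous_torusDescend (by fun_prop)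

lemma torusDensity_torusProj (z : ℝ × ℝ) : Θ.torusDensity (torusProj z) = Θ.density z :=
  Θ.isIntInvariant_ofReal_density.torusDescend_torusProj z

lemma torusDensity_ne_zero (p : Torus2) : Θ.torusDensity p ≠ 0 := by
  obtain ⟨z, rfl⟩ := isOpenQuotientMap_torusProj.surjective p
  rw [torusDensity_torusProj]
  exact_mod_cast (Θ.density_pos z).ne'

/-- The self-map of the torus induced by `normalizer`. -/
noncomputable def torusNormalizer : C(Torus2, Torus2) where
  toFun := torusEndo Θ.normalizer
  continuous_toFun :=
    Θ.isIntEquivariant_normalizer.continuous_torusEndo Θ.normalizer.continuous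

lemma torusNormalizer_torusProj (z : ℝ × ℝ) :
    Θ.torusNormalizer (torusProj z) = torusProj (Θ.normalizer z) :=
  Θ.isIntEquivariant_normalizer.torusEndo_torusProj z

/-- The self-map of the torus induced by the inverse of `normalizer`. -/
noncomputable def torusNormalizerInv : C(Torus2, Torus2) where
  toFun := torusEndo Θ.normalizer.symm
  continuous_toFun :=
    Θ.isIntEquivariant_normalizer.symm.continuous_torusEndo Θ.normalizer.symm.continuous

/-- Division by the density, read in the coordinates given by `normalizer`. Since `normalizer` maps
`density da db` to Lebesgue measure, this operator preserves the Lebesgue integral. -/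
noncomputable def divDensityL : C(Torus2, ℂ) →L[ℂ] C(Torus2, ℂ) :=
  (precompL Θ.torusNormalizerInv).comp (ContinuousLinearMap.mul ℂ C(Torus2, ℂ)
    ⟨fun p ↦ (Θ.torusDensity p)⁻¹, Θ.torusDensity.continuous.inv₀ Θ.torusDensity_ne_zero⟩)

lemma divDensityL_apply (g : C(Torus2, ℂ)) (p : Torus2) :
    Θ.divDensityL g (Θ.torusNormalizer p) = (Θ.torusDensity p)⁻¹ * g p := by
  have hinv : Θ.torusNormalizerInv (Θ.torusNormalizer p) = p :=
    Θ.isIntEquivariant_normalizer.leftInverse_torusEndo Θ.isIntEquivariant_normalizer.symm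
      Θ.normalizer.symm_apply_apply p
  change (Θ.torusDensity (Θ.torusNormalizerInv _))⁻¹ * g (Θ.torusNormalizerInv _) = _
  rw [hinv]

lemma divDensityL_torusProj_normalizer (g : C(Torus2, ℂ)) (z : ℝ × ℝ) :
    Θ.divDensityL g (torusProj (Θ.normalizer z)) = (Θ.density z : ℂ)⁻¹ * g (torusProj z) := by
  rw [← torusNormalizer_torusProj, divDensityL_apply, torusDensity_torusProj]

lemma surjective_torusNormalizer : Function.Surjective Θ.torusNormalizer :=
  (Θ.isIntEquivariant_normalizer.symm.leftInverse_torusEndo Θ.isIntEquivariant_normalizer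
    Θ.normalizer.apply_symm_apply).surjective

lemma surjective_divDensityL : Function.Surjective Θ.divDensityL := fun F ↦ by
  refine ⟨Θ.torusDensity * precompL Θ.torusNormalizer F, ContinuousMap.ext fun p ↦ ?_⟩
  obtain ⟨p, rfl⟩ := Θ.surjective_torusNormalizer p
  rw [divDensityL_apply, ContinuousMap.mul_apply, precompL_apply,
    inv_mul_cancel_left₀ (Θ.torusDensity_ne_zero p)]

lemma divDensityL_torusDensity : Θ.divDensityL Θ.torusDensity = 1 := by
  refine ContinuousMap.ext fun p ↦ ?_
  obtain ⟨p, rfl⟩ := Θ.surjective_torusNormalizer p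
  rw [divDensityL_apply, inv_mul_cancel₀ (Θ.torusDensity_ne_zero p), ContinuousMap.one_apply]

lemma integral_torus_eq_integral_normalizer (F : C(Torus2, ℂ)) :
    ∫ p, F p = ∫ a in Ioc (0 : ℝ) 1, ∫ b in (0 : ℝ)..1,
      Θ.density (a, b) * F (torusProj (Θ.normalizer (a, b))) := by
  rw [integral_torus_eq]
  refine integral_congr_ae (ae_of_all _ fun a ↦ ?_)
  have hcont : Continuous fun t ↦ Θ.density (a, t) := by fun_prop
  have hF : Continuous fun t ↦ F (torusProj (a, t)) :=
    F.continuous.comp (isOpenQuotientMap_torusProj.continuous.comp (by fun_prop))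
  have hsubst := intervalIntegral.integral_deriv_smul_comp (a := 0) (b := 1)
    (f := fun b ↦ ∫ t in (0 : ℝ)..b, Θ.density (a, t)) (g := fun t ↦ F (torusProj (a, t)))
    (fun b _ ↦ hcont.integral_hasStrictDerivAt 0 b |>.hasDerivAt) hcont.continuousOn hF
  rw [Θ.integral_density_vertical, intervalIntegral.integral_same] at hsubst
  exact hsubst.symm

lemma integral_divDensityL (g : C(Torus2, ℂ)) : ∫ p, Θ.divDensityL g p = ∫ p, g p := by
  have hne (z : ℝ × ℝ) : (Θ.density z : ℂ) ≠ 0 := mod_cast (Θ.density_pos z).ne'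
  simp only [Θ.integral_torus_eq_integral_normalizer (Θ.divDensityL g),
    divDensityL_torusProj_normalizer, mul_inv_cancel_left₀ (hne _), ← integral_torus_eq]

lemma integral_torusDensity : ∫ p, Θ.torusDensity p = 1 := by
  rw [← integral_divDensityL, divDensityL_torusDensity]
  simp

/-- The map `torusFlow t` bundled with its continuity. -/
noncomputable def torusFlowMap (t : ℝ) : C(Torus2, Torus2) :=
  ⟨Θ.torusFlow t, Θ.continuous_torusFlow t⟩

lemma covarianceL_one (t : ℝ) (G : C(Torus2, ℂ)) :
    covarianceL volume (Θ.torusFlowMap t) 1 G = 0 := by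
  simp [covarianceL_apply]

lemma covarianceL_divDensityL_torusChar {m : ℤ × ℤ} (hm : m ≠ 0) (t : ℝ) (g : C(Torus2, ℂ)) :
    covarianceL volume (Θ.torusFlowMap t) (Θ.divDensityL (torusChar m)) (Θ.divDensityL g) =
      ∫ a in Ioc (0 : ℝ) 1, ∫ b in (0 : ℝ)..1, torusChar m (torusProj (Θ.flow t (a, b))) *
        ↑(Θ.density (Θ.flow t (a, b)))⁻¹ * g (torusProj (a, b)) := by
  have hne (z : ℝ × ℝ) : (Θ.density z : ℂ) ≠ 0 := mod_cast (Θ.density_pos z).ne'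
  have hmean : ∫ p, Θ.divDensityL (torusChar m) p = 0 := by
    rw [integral_divDensityL, integral_torusChar_of_ne_zero hm]
  rw [covarianceL_apply, hmean, zero_mul, sub_zero]
  refine (Θ.integral_torus_eq_integral_normalizer
    (precompL (Θ.torusFlowMap t) (Θ.divDensityL (torusChar m)) * Θ.divDensityL g)).trans ?_
  simp only [ContinuousMap.mul_apply, precompL_apply, torusFlowMap, ContinuousMap.coe_mk,
    torusFlow_torusProj_normalizer, divDensityL_torusProj_normalizer, Complex.ofReal_inv]
  refine integral_congr_ae (ae_of_all _ fun a ↦ intervalIntegral.integral_congr fun b _ ↦ ?_)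
  field_simp [hne (a, b)]

lemma isMixingAlong_torusFlowMap {t : ℕ → ℝ}
    (h : ∀ m l : ℤ × ℤ, m ≠ 0 → Tendsto (fun k ↦ ∫ a in Ioc (0 : ℝ) 1, ∫ b in (0 : ℝ)..1,
      torusChar m (torusProj (Θ.flow (t k) (a, b))) * ↑(Θ.density (Θ.flow (t k) (a, b)))⁻¹ *
        torusChar l (torusProj (a, b))) atTop (𝓝 0)) :
    IsMixingAlong volume fun k ↦ Θ.torusFlowMap (t k) := by
  have hspan : (Submodule.span ℂ (insert Θ.torusDensity (torusChar '' {0}ᶜ))).topologicalClosure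
      = ⊤ := by
    refine topologicalClosure_span_insert_eq_top topologicalClosure_span_range_torusChar
      (ℓ := integralL volume) (fun m hm ↦ integral_torusChar_of_ne_zero hm) ?_
      Θ.integral_torusDensity
    simp [integralL_apply, torusChar]
  refine isMixingAlong_of_topologicalClosure_span_eq_top
    (topologicalClosure_span_image_eq_top Θ.surjective_divDensityL hspan)
    (topologicalClosure_span_image_eq_top Θ.surjective_divDensityL
      topologicalClosure_span_range_torusChar) ?_
  rintro _ ⟨f, rfl | ⟨m, hm, rfl⟩, rfl⟩ _ ⟨_, ⟨l, rfl⟩, rfl⟩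
  · simp only [divDensityL_torusDensity, covarianceL_one, tendsto_const_nhds]
  · simpa only [Θ.covarianceL_divDensityL_torusChar hm] using h m l hm

end NormalizedTestFunctions

section FlowDerivative

/-- The derivative of `travelTime` with respect to the leaf. -/
noncomputable def travelTimeDeriv (w a : ℝ) : ℝ := deriv (fun w ↦ Θ.travelTime w a) w

lemma contDiff_uncurry_travelTime : ContDiff ℝ ∞ fun z : ℝ × ℝ ↦ Θ.travelTime z.1 z.2 :=
  contDiff_snd.comp Θ.contDiff_travelTimeHomeo

lemma hasDerivAt_travelTimeDeriv (w a : ℝ) :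
    HasDerivAt (fun w ↦ Θ.travelTime w a) (Θ.travelTimeDeriv w a) w := by
  have hdiff : Differentiable ℝ fun w ↦ Θ.travelTime w a :=
    (Θ.contDiff_uncurry_travelTime.differentiable (by simp)).comp (f := fun w ↦ (w, a))
      (by fun_prop)
  exact (hdiff w).hasDerivAt

lemma hasDerivAt_travelTime_comp {w a : ℝ → ℝ} {w' a' b : ℝ} (hw : HasDerivAt w w' b)
    (ha : HasDerivAt a a' b) : HasDerivAt (fun b ↦ Θ.travelTime (w b) (a b))
      (w' * Θ.travelTimeDeriv (w b) (a b) + a' * Θ.density (a b, w b + Θ.slope * a b)) b := by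
  have hT := (Θ.contDiff_uncurry_travelTime.differentiable (by simp) (w b, a b)).hasFDerivAt
  set L := fderiv ℝ (fun z : ℝ × ℝ ↦ Θ.travelTime z.1 z.2) (w b, a b)
  have hleaf : L (1, 0) = Θ.travelTimeDeriv (w b) (a b) :=
    (hT.comp_hasDerivAt (f := fun x ↦ (x, a b)) (w b) ((hasDerivAt_id' (w b)).prodMk
      (hasDerivAt_const (w b) (a b)))).unique (Θ.hasDerivAt_travelTimeDeriv (w b) (a b))
  have hspeed : L (0, 1) = Θ.density (a b, w b + Θ.slope * a b) :=
    (hT.comp_hasDerivAt (f := fun x ↦ (w b, x)) (a b) ((hasDerivAt_const (a b) (w b)).prodMk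
      (hasDerivAt_id' (a b)))).unique
        (hasDerivAt_fiberIntegral Θ.contDiff_leafDensity.continuous (w b) (a b))
  refine (hT.comp_hasDerivAt b (hw.prodMk ha)).congr_deriv ?_
  rw [← hleaf, ← hspeed, ← smul_eq_mul, ← smul_eq_mul, ← map_smul, ← map_smul, ← map_add]
  simp

lemma flow_snd (t : ℝ) (z : ℝ × ℝ) :
    (Θ.flow t z).2 = z.2 - Θ.slope * z.1 + Θ.slope * (Θ.flow t z).1 := by
  obtain ⟨⟨w, s⟩, rfl⟩ := Θ.flowChart.surjective z
  rw [flow_flowChart]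
  simp [flowChart_apply]

lemma travelTime_flow_fst (t : ℝ) (z : ℝ × ℝ) :
    Θ.travelTime (z.2 - Θ.slope * z.1) (Θ.flow t z).1 =
      Θ.travelTime (z.2 - Θ.slope * z.1) z.1 + t := by
  obtain ⟨⟨w, s⟩, rfl⟩ := Θ.flowChart.surjective z
  rw [flow_flowChart]
  simp [flowChart_apply]

/-- The variation in the leaf of the time that the orbit of `z` spends between time `0` and `t`. It
measures how strongly the flow shears vertical segments along its orbits. -/
noncomputable def flowShear (t : ℝ) (z : ℝ × ℝ) : ℝ :=
  Θ.travelTimeDeriv (z.2 - Θ.slope * z.1) (Θ.flow t z).1 -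
    Θ.travelTimeDeriv (z.2 - Θ.slope * z.1) z.1

lemma contDiff_flow_vertical (t a : ℝ) : ContDiff ℝ ∞ fun b ↦ Θ.flow t (a, b) :=
  (Θ.contDiff_flow t).comp (contDiff_const.prodMk contDiff_id)

lemma hasDerivAt_flow_fst (t a b : ℝ) : HasDerivAt (fun b ↦ (Θ.flow t (a, b)).1)
    (-(Θ.flowShear t (a, b) * (Θ.density (Θ.flow t (a, b)))⁻¹)) b := by
  have hfst : HasDerivAt (fun b ↦ (Θ.flow t (a, b)).1) _ b :=
    ((contDiff_fst.comp (Θ.contDiff_flow_vertical t a)).differentiable (by simp) b).hasDerivAt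
  have hleaf : HasDerivAt (fun b ↦ b - Θ.slope * a) 1 b := (hasDerivAt_id b).sub_const _
  have hend := Θ.hasDerivAt_travelTime_comp hleaf hfst
  have hstart := (Θ.hasDerivAt_travelTime_comp hleaf (hasDerivAt_const b a)).add_const t
  simp only [fun b ↦ Θ.travelTime_flow_fst t (a, b)] at hend
  have heq := hend.unique hstart
  rw [← Θ.flow_snd t (a, b), Prod.mk.eta] at heq
  refine hfst.congr_deriv ?_
  rw [← div_eq_mul_inv, ← neg_div, eq_div_iff (Θ.density_pos _).ne', flowShear]
  linarith

lemma continuous_flowShear_vertical (t a : ℝ) : Continuous fun b ↦ Θ.flowShear t (a, b) := by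
  have hderiv : Continuous (deriv fun b ↦ (Θ.flow t (a, b)).1) :=
    (contDiff_fst.comp (Θ.contDiff_flow_vertical t a)).continuous_deriv (by simp)
  have heq (b : ℝ) : Θ.flowShear t (a, b) =
      -(deriv (fun b ↦ (Θ.flow t (a, b)).1) b * Θ.density (Θ.flow t (a, b))) := by
    rw [(Θ.hasDerivAt_flow_fst t a b).deriv, neg_mul, neg_neg,
      inv_mul_cancel_right₀ (Θ.density_pos _).ne']
  have hflow := (Θ.contDiff_flow_vertical t a).continuous
  simp only [heq]
  fun_prop

end FlowDerivative

end TimeChange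

section Characters

lemma contDiff_torusChar_comp (m : ℤ × ℤ) {γ : ℝ → ℝ × ℝ} (hγ : ContDiff ℝ ∞ γ) :
    ContDiff ℝ 1 fun b ↦ torusChar m (torusProj (γ b)) := by
  have hγ₁ : ContDiff ℝ 1 fun b ↦ ((γ b).1 : ℂ) :=
    Complex.ofRealCLM.contDiff.comp (contDiff_fst.comp (hγ.of_le (by simp)))
  have hγ₂ : ContDiff ℝ 1 fun b ↦ ((γ b).2 : ℂ) :=
    Complex.ofRealCLM.contDiff.comp (contDiff_snd.comp (hγ.of_le (by simp)))
  simp only [torusChar_torusProj]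
  exact (contDiff_const.mul
    ((contDiff_const.mul hγ₁).add (contDiff_const.mul hγ₂))).cexp

lemma hasDerivAt_torusChar_comp (m : ℤ × ℤ) {x y : ℝ → ℝ} {x' y' b : ℝ} (hx : HasDerivAt x x' b)
    (hy : HasDerivAt y y' b) : HasDerivAt (fun b ↦ torusChar m (torusProj (x b, y b)))
      (2 * Real.pi * Complex.I * (m.1 * x' + m.2 * y') * torusChar m (torusProj (x b, y b))) b := by
  simp only [torusChar_torusProj]
  exact ((((hx.ofReal_comp.const_mul (m.1 : ℂ)).add
    (hy.ofReal_comp.const_mul (m.2 : ℂ))).const_mul (2 * Real.pi * Complex.I)).cexp).congr_deriv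
    (mul_comm _ _)

end Characters

namespace TimeChange

variable (Θ : TimeChange)

section WeakMixing

lemma deriv_torusChar_flow (m : ℤ × ℤ) (t a b : ℝ) :
    deriv (fun b ↦ torusChar m (torusProj (Θ.flow t (a, b)))) b =
      2 * Real.pi * Complex.I * ((m.2 : ℝ) - ((m.1 + m.2 * Θ.slope : ℝ) : ℂ) *
        ↑(Θ.flowShear t (a, b) * (Θ.density (Θ.flow t (a, b)))⁻¹)) *
          torusChar m (torusProj (Θ.flow t (a, b))) := by
  have hsnd : HasDerivAt (fun b ↦ (Θ.flow t (a, b)).2)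
      (1 + Θ.slope * -(Θ.flowShear t (a, b) * (Θ.density (Θ.flow t (a, b)))⁻¹)) b := by
    simp only [flow_snd]
    exact ((hasDerivAt_id b).sub_const (Θ.slope * a)).add
      ((Θ.hasDerivAt_flow_fst t a b).const_mul Θ.slope)
  refine ((hasDerivAt_torusChar_comp m (Θ.hasDerivAt_flow_fst t a b) hsnd).congr_deriv ?_).deriv
  push_cast
  ring

lemma norm_integral_torusChar_flow_le {m l : ℤ × ℤ} {t a L η δ : ℝ} {q : ℕ} (hq : q ≠ 0)
    (hL : 0 < L) (hδ : 0 < δ) (hm : (m.1 + m.2 * Θ.slope : ℝ) ≠ 0)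
    (hshear : ∀ b, |Θ.flowShear t (a, b) -
      L * (-4 * Real.pi * Real.cos (2 * Real.pi * (q * (b - Θ.slope * a))))| ≤ η * L) :
    ‖∫ b in (0 : ℝ)..1, torusChar m (torusProj (Θ.flow t (a, b))) *
        ↑(Θ.density (Θ.flow t (a, b)))⁻¹ * torusChar l (torusProj (a, b))‖ ≤
      (|(m.2 : ℝ)| * (1 / δ) + (2 * Real.pi * |(l.2 : ℝ)| / δ + 8 * Real.pi ^ 2 * q / δ ^ 2) /
        (2 * Real.pi)) / |(m.1 + m.2 * Θ.slope : ℝ)| / L + 2 * (profileDefect δ + η / δ) := by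
  have hflow := (Θ.contDiff_flow_vertical t a).continuous
  have hderiv (b : ℝ) : deriv (fun b ↦ torusChar l (torusProj (a, b))) b =
      2 * Real.pi * Complex.I * (l.1 * (0 : ℝ) + l.2 * (1 : ℝ)) * torusChar l (torusProj (a, b)) :=
    (hasDerivAt_torusChar_comp l (hasDerivAt_const b a) (hasDerivAt_id b)).deriv
  refine norm_integral_mul_le_of_cos_phase
    (contDiff_torusChar_comp m (Θ.contDiff_flow_vertical t a))
    (fun b ↦ (norm_torusChar_apply m _).le)
    (congrArg (torusChar m) ((Θ.isIntEquivariant_flow t).torusProj_vertical_one a))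
    (Θ.deriv_torusChar_flow m t a)
    (contDiff_torusChar_comp l (contDiff_const.prodMk contDiff_id))
    (fun b ↦ (norm_torusChar_apply l _).le) ?_ (fun b ↦ ?_) ?_ (fun b ↦ ?_)
    (Θ.continuous_flowShear_vertical t a) hm hL hδ hq hshear
  · exact congrArg (torusChar l)
      (IsIntEquivariant.torusProj_vertical_one (F := id) (fun _ _ _ ↦ rfl) a)
  · rw [hderiv]
    simp [norm_torusChar_apply, abs_of_pos Real.pi_pos]
  · exact (Θ.continuous_density.comp hflow).inv₀ fun b ↦ (Θ.density_pos _).ne'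
  · rw [abs_of_pos (inv_pos.2 (Θ.density_pos _))]
    exact inv_le_of_inv_le₀ two_pos (by linarith [Θ.le_density (Θ.flow t (a, b))])

lemma intCast_add_intCast_mul_slope_ne_zero (hirr : Irrational Θ.slope) {m : ℤ × ℤ} (hm : m ≠ 0) :
    (m.1 + m.2 * Θ.slope : ℝ) ≠ 0 := by
  by_cases hm₂ : m.2 = 0
  · have hm₁ : m.1 ≠ 0 := fun hm₁ ↦ hm (Prod.ext hm₁ hm₂)
    simpa [hm₂] using hm₁
  · exact ((hirr.intCast_mul hm₂).intCast_add m.1).ne_zero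

variable {Θ}

lemma tendsto_integral_torusChar_flow {t : ℕ → ℝ} {q : ℕ → ℕ} {L η : ℕ → ℝ} (hq : ∀ k, q k ≠ 0)
    (hL : Tendsto L atTop atTop)
    (hqL : Tendsto (fun k ↦ q k / L k) atTop (𝓝 0)) (hη : Tendsto η atTop (𝓝 0))
    (hshear : ∀ᶠ k in atTop, ∀ a ∈ Icc (0 : ℝ) 1, ∀ b, |Θ.flowShear (t k) (a, b) -
      L k * (-4 * Real.pi * Real.cos (2 * Real.pi * (q k * (b - Θ.slope * a))))| ≤ η k * L k)
    {m l : ℤ × ℤ} (hm : (m.1 + m.2 * Θ.slope : ℝ) ≠ 0) :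
    Tendsto (fun k ↦ ∫ a in Ioc (0 : ℝ) 1, ∫ b in (0 : ℝ)..1,
      torusChar m (torusProj (Θ.flow (t k) (a, b))) * ↑(Θ.density (Θ.flow (t k) (a, b)))⁻¹ *
        torusChar l (torusProj (a, b))) atTop (𝓝 0) := by
  set B : ℝ → ℕ → ℝ := fun δ k ↦ (|(m.2 : ℝ)| * (1 / δ) +
    (2 * Real.pi * |(l.2 : ℝ)| / δ + 8 * Real.pi ^ 2 * q k / δ ^ 2) / (2 * Real.pi)) /
      |(m.1 + m.2 * Θ.slope : ℝ)| / L k + 2 * (profileDefect δ + η k / δ) with hB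
  have hbound {δ : ℝ} (hδ : 0 < δ) : ∀ᶠ k in atTop, ‖∫ a in Ioc (0 : ℝ) 1, ∫ b in (0 : ℝ)..1,
      torusChar m (torusProj (Θ.flow (t k) (a, b))) * ↑(Θ.density (Θ.flow (t k) (a, b)))⁻¹ *
        torusChar l (torusProj (a, b))‖ ≤ B δ k := by
    filter_upwards [hshear, hL.eventually_gt_atTop 0] with k hk hLk
    have h := norm_setIntegral_le_of_norm_le_const (μ := volume) (s := Ioc (0 : ℝ) 1) (by simp)
      fun a ha ↦ Θ.norm_integral_torusChar_flow_le (l := l) (hq k) hLk hδ hm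
        (hk a (Ioc_subset_Icc_self ha))
    rwa [Real.volume_real_Ioc_of_le zero_le_one, sub_zero, mul_one] at h
  have hBlim (δ : ℝ) : Tendsto (B δ) atTop (𝓝 (2 * profileDefect δ)) := by
    have hLinv := hL.inv_tendsto_atTop
    have hlim := ((hLinv.const_mul ((|(m.2 : ℝ)| * (1 / δ) + 2 * Real.pi * |(l.2 : ℝ)| / δ /
      (2 * Real.pi)) / |(m.1 + m.2 * Θ.slope : ℝ)|)).add (hqL.const_mul (8 * Real.pi ^ 2 / δ ^ 2 /
        (2 * Real.pi) / |(m.1 + m.2 * Θ.slope : ℝ)|))).add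
          (((hη.div_const δ).const_add (profileDefect δ)).const_mul 2)
    rw [mul_zero, mul_zero, zero_div, add_zero, add_zero, zero_add] at hlim
    refine hlim.congr fun k ↦ ?_
    simp only [hB, Pi.inv_apply]
    ring
  rw [Metric.tendsto_nhds]
  intro ε hε
  have hdefect := tendsto_profileDefect.const_mul 2
  rw [mul_zero] at hdefect
  obtain ⟨δ, hδε, hδ⟩ := ((hdefect.eventually_lt_const hε).and self_mem_nhdsWithin).exists
  filter_upwards [hbound hδ, (hBlim δ).eventually_lt_const hδε] with k hk hkε
  rw [dist_zero_right]
  exact hk.trans_lt hkε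

theorem weaklyMixing_torusFlow (hirr : Irrational Θ.slope) {N q : ℕ → ℕ} {L η : ℕ → ℝ}
    (hq : ∀ k, q k ≠ 0) (hL : Tendsto L atTop atTop)
    (hqL : Tendsto (fun k ↦ q k / L k) atTop (𝓝 0)) (hη : Tendsto η atTop (𝓝 0))
    (hshear : ∀ᶠ k in atTop, ∀ a ∈ Icc (0 : ℝ) 1, ∀ b, |Θ.flowShear (N k) (a, b) -
      L k * (-4 * Real.pi * Real.cos (2 * Real.pi * (q k * (b - Θ.slope * a))))| ≤ η k * L k) :
    WeaklyMixing (Θ.torusFlow 1) volume := by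
  have hmix : IsMixingAlong volume fun k ↦ Θ.torusFlowMap (N k) :=
    Θ.isMixingAlong_torusFlowMap fun m l hm ↦ tendsto_integral_torusChar_flow hq hL hqL hη hshear
      (Θ.intCast_add_intCast_mul_slope_ne_zero hirr hm)
  exact hmix.weaklyMixing (Θ.measurePreserving_torusFlow 1) fun k ↦
    (Θ.torusFlow_one_iterate (N k)).symm

end WeakMixing

end TimeChange

section Waves

lemma mul_integral_cos_add_mul (u v a : ℝ) :
    2 * Real.pi * v * ∫ s in (0 : ℝ)..a, Real.cos (2 * Real.pi * (u + v * s)) =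
      Real.sin (2 * Real.pi * (u + v * a)) - Real.sin (2 * Real.pi * u) := by
  have hderiv (s : ℝ) : HasDerivAt (fun s ↦ Real.sin (2 * Real.pi * (u + v * s)))
      (2 * Real.pi * v * Real.cos (2 * Real.pi * (u + v * s))) s := by
    have h := ((((hasDerivAt_id' s).const_mul v).const_add u).const_mul (2 * Real.pi)).sin
    exact h.congr_deriv (by ring)
  rw [← intervalIntegral.integral_const_mul, intervalIntegral.integral_eq_sub_of_hasDerivAt
    (fun s _ ↦ hderiv s) (Continuous.intervalIntegrable (by fun_prop) _ _), mul_zero, add_zero]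

lemma hasSum_integral_mul_cos {c : ℕ → ℝ} (hc : Summable c) (u v : ℕ → ℝ) (a : ℝ) :
    HasSum (fun j ↦ c j * ∫ s in (0 : ℝ)..a, Real.cos (2 * Real.pi * (u j + v j * s)))
      (∫ s in (0 : ℝ)..a, ∑' j, c j * Real.cos (2 * Real.pi * (u j + v j * s))) := by
  have hbound (j : ℕ) (x : ℝ) : ‖c j * Real.cos x‖ ≤ |c j| := by
    rw [norm_mul]
    exact mul_le_of_le_one_right (abs_nonneg _) (Real.abs_cos_le_one _)
  have h := intervalIntegral.hasSum_integral_of_dominated_convergence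
    (μ := volume) (a := 0) (b := a)
    (F := fun j s ↦ c j * Real.cos (2 * Real.pi * (u j + v j * s))) (fun j _ ↦ |c j|)
    (fun j ↦ Continuous.aestronglyMeasurable (by fun_prop))
    (fun j ↦ ae_of_all _ fun _ _ ↦ hbound j _)
    (ae_of_all _ fun _ _ ↦ hc.abs) intervalIntegrable_const
    (ae_of_all _ fun s _ ↦ (Summable.of_norm_bounded hc.abs fun j ↦ hbound j _).hasSum)
  simpa only [intervalIntegral.integral_const_mul] using h

lemma cos_two_pi_mul_add_int (x : ℝ) (n : ℤ) :
    Real.cos (2 * Real.pi * (x + n)) = Real.cos (2 * Real.pi * x) := by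
  rw [mul_add, mul_comm (2 * Real.pi) (n : ℝ), Real.cos_add_int_mul_two_pi]

lemma abs_cos_two_pi_mul_add_sub_le (u h : ℝ) :
    |Real.cos (2 * Real.pi * (u + h)) - Real.cos (2 * Real.pi * u)| ≤ 2 * Real.pi * |h| := by
  refine (Real.abs_cos_sub_cos_le _ _).trans_eq ?_
  rw [← mul_sub, add_sub_cancel_left, abs_mul, abs_of_pos Real.two_pi_pos]

lemma abs_cos_two_pi_mul_add_add_le (u h : ℝ) :
    |Real.cos (2 * Real.pi * (u + h)) + Real.cos (2 * Real.pi * u)| ≤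
      2 * Real.pi * |h - 1 / 2| := by
  have hle := abs_cos_two_pi_mul_add_sub_le (u + 1 / 2) (h - 1 / 2)
  rw [add_add_sub_cancel] at hle
  have hhalf : 2 * Real.pi * (u + 1 / 2) = 2 * Real.pi * u + Real.pi := by ring
  rwa [hhalf, Real.cos_add_pi, sub_neg_eq_add] at hle

lemma abs_sin_pi_mul_le {θ a s : ℝ} (hθ : 0 ≤ θ) (ha : |a| ≤ s) :
    |Real.sin (Real.pi * (θ * a))| ≤ Real.pi * min 1 (θ * s) := by
  rw [mul_min_of_nonneg _ _ Real.pi_pos.le]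
  refine le_min ((Real.abs_sin_le_one _).trans (by linarith [Real.pi_gt_three])) ?_
  refine Real.abs_sin_le_abs.trans ?_
  rw [abs_mul, abs_mul, abs_of_pos Real.pi_pos, abs_of_nonneg hθ]
  gcongr

end Waves

/-- Rational approximations `num j / den j` of `slope` from below, with the amplitudes of the waves
of frequency `(-num j, den j)` that they contribute to the density `ResonantSeries.density`. The
wave is nearly constant along the lines of the given slope, so that it builds up over a long time.
-/
structure ResonantSeries where
  /-- The approximated slope. -/
  slope : ℝ
  /-- The numerators of the approximations. -/
  num : ℕ → ℤ
  /-- The denominators of the approximations. -/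
  den : ℕ → ℕ
  /-- The amplitudes of the waves in the travel time. -/
  amplitude : ℕ → ℝ
  abs_slope_le_one : |slope| ≤ 1
  den_pos : ∀ j, 0 < den j
  amplitude_pos : ∀ j, 0 < amplitude j
  num_lt_den_mul_slope : ∀ j, num j < den j * slope
  den_mul_slope_sub_num_le_one : ∀ j, den j * slope - num j ≤ 1
  summable_amplitude_mul : ∀ r : ℕ,
    Summable fun j ↦ amplitude j * (den j * slope - num j) * (den j : ℝ) ^ r
  tsum_amplitude_mul_le : ∑' j, amplitude j * (den j * slope - num j) ≤ 1 / 100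

namespace ResonantSeries

variable (R : ResonantSeries)

section Density

/-- The small divisor `den j * slope - num j` of the `j`-th approximation. -/
def divisor (j : ℕ) : ℝ := R.den j * R.slope - R.num j

lemma divisor_pos (j : ℕ) : 0 < R.divisor j := sub_pos.2 (R.num_lt_den_mul_slope j)

lemma one_le_den (j : ℕ) : (1 : ℝ) ≤ R.den j := by exact_mod_cast R.den_pos j

lemma abs_num_le (j : ℕ) : |(R.num j : ℝ)| ≤ 2 * R.den j := by
  have hq := R.one_le_den j
  have hqs : |R.den j * R.slope| ≤ R.den j := by
    rw [abs_mul, Nat.abs_cast]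
    exact mul_le_of_le_one_right (Nat.cast_nonneg _) R.abs_slope_le_one
  have hθ := R.den_mul_slope_sub_num_le_one j
  have hθ' := R.num_lt_den_mul_slope j
  rw [abs_le] at hqs ⊢
  constructor <;> linarith [hqs.1, hqs.2]

lemma summable_amplitude_mul_divisor : Summable fun j ↦ R.amplitude j * R.divisor j := by
  simpa [divisor] using R.summable_amplitude_mul 0

/-- The density of the invariant measure of the time change given by the series: each wave of
amplitude `A` in the travel time is the integral along flow lines of a wave of amplitude
`2 * π * A * θ`, where `θ` is the small divisor. -/
noncomputable def density (z : ℝ × ℝ) : ℝ :=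
  1 + ∑' j, 2 * Real.pi * (R.amplitude j * R.divisor j) *
    Real.cos (2 * Real.pi * (R.den j * z.2 - R.num j * z.1))

lemma contDiff_density : ContDiff ℝ ∞ R.density := by
  have hM (j : ℕ) : ‖(2 * Real.pi) • ((R.den j : ℝ) • ContinuousLinearMap.snd ℝ ℝ ℝ -
      (R.num j : ℝ) • ContinuousLinearMap.fst ℝ ℝ ℝ)‖ ≤ 2 * Real.pi * (3 * R.den j) := by
    rw [norm_smul, Real.norm_of_nonneg Real.two_pi_pos.le]
    gcongr
    refine (norm_sub_le _ _).trans ?_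
    rw [norm_smul, norm_smul, Real.norm_natCast, Real.norm_eq_abs]
    have hsnd := mul_le_of_le_one_right (R.den j).cast_nonneg
      (ContinuousLinearMap.norm_snd_le ℝ ℝ ℝ)
    have hfst := mul_le_of_le_one_right (abs_nonneg (R.num j : ℝ))
      (ContinuousLinearMap.norm_fst_le ℝ ℝ ℝ)
    linarith [R.abs_num_le j]
  have hs (r : ℕ) : Summable fun j ↦ |2 * Real.pi * (R.amplitude j * R.divisor j)| *
      (2 * Real.pi * (3 * R.den j)) ^ r := by
    refine ((R.summable_amplitude_mul r).mul_left (2 * Real.pi * (2 * Real.pi * 3) ^ r)).congr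
      fun j ↦ ?_
    have hA := R.amplitude_pos j
    have hθ := R.divisor_pos j
    rw [abs_of_pos (by positivity), ← divisor]
    ring
  convert contDiff_const (c := (1 : ℝ)).add (contDiff_tsum_mul_cos _ _ _ hM hs) using 1
  ext z
  simp [density]

lemma isIntInvariant_density : IsIntInvariant R.density := isIntInvariant_iff.2 fun x y m n ↦ by
  have hphase (j : ℕ) : R.den j * (y + n) - R.num j * (x + m) =
      R.den j * y - R.num j * x + ((R.den j * n - R.num j * m : ℤ) : ℝ) := by
    push_cast
    ring
  simp only [density, hphase, cos_two_pi_mul_add_int]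

lemma abs_density_sub_one_le (z : ℝ × ℝ) : |R.density z - 1| ≤ 1 / 10 := by
  have hbound : |R.density z - 1| ≤ ∑' j, 2 * Real.pi * (R.amplitude j * R.divisor j) := by
    rw [density, add_sub_cancel_left, ← Real.norm_eq_abs]
    refine tsum_of_norm_bounded (R.summable_amplitude_mul_divisor.mul_left _).hasSum fun j ↦ ?_
    have hA := R.amplitude_pos j
    have hθ := R.divisor_pos j
    rw [norm_mul, Real.norm_of_nonneg (by positivity)]
    exact mul_le_of_le_one_right (by positivity) (Real.abs_cos_le_one _)
  have hsum : ∑' j, R.amplitude j * R.divisor j ≤ 1 / 100 := R.tsum_amplitude_mul_le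
  rw [tsum_mul_left] at hbound
  nlinarith [Real.pi_pos, Real.pi_lt_four]

lemma hasSum_integral_density (x y u v a : ℝ) :
    HasSum (fun j ↦ 2 * Real.pi * (R.amplitude j * R.divisor j) * ∫ s in (0 : ℝ)..a,
        Real.cos (2 * Real.pi * (R.den j * y - R.num j * x + (R.den j * v - R.num j * u) * s)))
      ((∫ s in (0 : ℝ)..a, R.density (x + u * s, y + v * s)) - a) := by
  have h := hasSum_integral_mul_cos (R.summable_amplitude_mul_divisor.mul_left (2 * Real.pi))
    (fun j ↦ R.den j * y - R.num j * x) (fun j ↦ R.den j * v - R.num j * u) a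
  convert h using 1
  have hcont : Continuous fun s ↦ R.density (x + u * s, y + v * s) :=
    R.contDiff_density.continuous.comp (by fun_prop)
  have hone : ∫ _ in (0 : ℝ)..a, (1 : ℝ) = a := by simp
  nth_rw 2 [← hone]
  rw [← intervalIntegral.integral_sub (hcont.intervalIntegrable _ _) intervalIntegrable_const]
  refine intervalIntegral.integral_congr fun s _ ↦ ?_
  simp only [density, add_sub_cancel_left]
  congr! 5
  ring

lemma integral_density_vertical (a : ℝ) : ∫ b in (0 : ℝ)..1, R.density (a, b) = 1 := by
  have hterm (j : ℕ) : ∫ s in (0 : ℝ)..1, Real.cos (2 * Real.pi *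
      (R.den j * 0 - R.num j * a + (R.den j * 1 - R.num j * 0) * s)) = 0 := by
    have h := mul_integral_cos_add_mul (R.den j * 0 - R.num j * a) (R.den j * 1 - R.num j * 0) 1
    have hperiod : 2 * Real.pi * (R.den j * 0 - R.num j * a + (R.den j * 1 - R.num j * 0) * 1) =
        2 * Real.pi * (R.den j * 0 - R.num j * a) + R.den j * (2 * Real.pi) := by ring
    rw [hperiod, Real.sin_add_nat_mul_two_pi, sub_self] at h
    refine (mul_eq_zero.1 h).resolve_left (mul_ne_zero Real.two_pi_pos.ne' ?_)
    simpa using (R.den_pos j).ne'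
  have h := R.hasSum_integral_density a 0 0 1 1
  simp only [hterm] at h
  have hsum := h.unique (by simpa only [mul_zero] using hasSum_zero)
  simpa [sub_eq_zero] using hsum

end Density

/-- The time change whose density is the sum of the waves of the series. -/
noncomputable def timeChange : TimeChange where
  slope := R.slope
  abs_slope_le_one := R.abs_slope_le_one
  density := R.density
  contDiff_density := R.contDiff_density
  isIntInvariant_density := R.isIntInvariant_density
  abs_density_sub_one_le := R.abs_density_sub_one_le
  integral_density_vertical := R.integral_density_vertical

section Waves

/-- The contribution of the `j`-th wave to the travel time `R.timeChange.travelTime w a`. -/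
noncomputable def wave (j : ℕ) (w a : ℝ) : ℝ := R.amplitude j *
  (Real.sin (2 * Real.pi * (R.den j * w + R.divisor j * a)) -
    Real.sin (2 * Real.pi * (R.den j * w)))

lemma hasSum_wave (w a : ℝ) :
    HasSum (fun j ↦ R.wave j w a) (R.timeChange.travelTime w a - a) := by
  have h := R.hasSum_integral_density 0 w 1 R.slope a
  simp only [zero_add, one_mul, mul_zero, sub_zero, mul_one] at h
  refine h.congr_fun fun j ↦ ?_
  have hj := mul_integral_cos_add_mul (R.den j * w) (R.divisor j) a
  rw [wave, ← hj, divisor]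
  ring

lemma wave_eq (j : ℕ) (w a : ℝ) : R.wave j w a = 2 * R.amplitude j *
    (Real.sin (Real.pi * (R.divisor j * a)) *
      Real.cos (2 * Real.pi * (R.den j * w) + Real.pi * (R.divisor j * a))) := by
  rw [wave, Real.sin_sub_sin]
  ring_nf

lemma abs_wave_le (j : ℕ) (w : ℝ) {a s : ℝ} (ha : |a| ≤ s) :
    |R.wave j w a| ≤ 2 * Real.pi * (R.amplitude j * min 1 (R.divisor j * s)) := by
  have hA := R.amplitude_pos j
  have hsin := abs_sin_pi_mul_le (R.divisor_pos j).le ha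
  rw [wave_eq, abs_mul, abs_of_pos (by positivity : 0 < 2 * R.amplitude j), abs_mul]
  calc 2 * R.amplitude j * (|Real.sin (Real.pi * (R.divisor j * a))| * _)
      ≤ 2 * R.amplitude j * (Real.pi * min 1 (R.divisor j * s) * 1) := by
        gcongr
        · exact (abs_nonneg _).trans hsin
        · exact Real.abs_cos_le_one _
    _ = 2 * Real.pi * (R.amplitude j * min 1 (R.divisor j * s)) := by ring

/-- The weight of the `j`-th wave in the bounds for the shear up to time `s`: it grows linearly
in `s` and saturates at `den j * amplitude j` at the resonant time `1 / divisor j`. -/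
noncomputable def weight (s : ℝ) (j : ℕ) : ℝ :=
  R.den j * R.amplitude j * min 1 (R.divisor j * s)

lemma abs_wave_sub_wave_le (j : ℕ) (w w' : ℝ) {a s : ℝ} (ha : |a| ≤ s) :
    |R.wave j w a - R.wave j w' a| ≤ 4 * Real.pi ^ 2 * R.weight s j * |w - w'| := by
  have hA := R.amplitude_pos j
  have hsin := abs_sin_pi_mul_le (R.divisor_pos j).le ha
  have hcos := Real.abs_cos_sub_cos_le (2 * Real.pi * (R.den j * w) + Real.pi * (R.divisor j * a))
    (2 * Real.pi * (R.den j * w') + Real.pi * (R.divisor j * a))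
  rw [add_sub_add_right_eq_sub, ← mul_sub, ← mul_sub, abs_mul, abs_of_pos Real.two_pi_pos, abs_mul,
    Nat.abs_cast] at hcos
  rw [wave_eq, wave_eq, ← mul_sub, ← mul_sub, abs_mul,
    abs_of_pos (by positivity : 0 < 2 * R.amplitude j), abs_mul]
  calc 2 * R.amplitude j * (|Real.sin (Real.pi * (R.divisor j * a))| * _)
      ≤ 2 * R.amplitude j * (Real.pi * min 1 (R.divisor j * s) *
          (2 * Real.pi * (R.den j * |w - w'|))) := by
        gcongr
        exact (abs_nonneg _).trans hsin
    _ = 4 * Real.pi ^ 2 * R.weight s j * |w - w'| := by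
        rw [weight]
        ring

end Waves

section Weights

variable {s : ℝ}

lemma weight_nonneg (hs : 0 ≤ s) (j : ℕ) : 0 ≤ R.weight s j := by
  have hA := R.amplitude_pos j
  have hθ := R.divisor_pos j
  exact mul_nonneg (by positivity) (by positivity)

lemma summable_weight (hs : 0 ≤ s) : Summable (R.weight s) := by
  refine Summable.of_nonneg_of_le (R.weight_nonneg hs) (fun j ↦ ?_)
    ((R.summable_amplitude_mul 1).mul_right s)
  have hA := R.amplitude_pos j
  calc R.weight s j ≤ R.den j * R.amplitude j * (R.divisor j * s) :=
        mul_le_mul_of_nonneg_left (min_le_right _ _) (by positivity)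
    _ = R.amplitude j * (R.den j * R.slope - R.num j) * (R.den j : ℝ) ^ 1 * s := by
        rw [divisor]
        ring

/-- The sum of the weights, which bounds the shear of the travel time up to time `s`. -/
noncomputable def totalWeight (s : ℝ) : ℝ := ∑' j, R.weight s j

/-- The sum of the weights of all waves but the `k`-th. -/
noncomputable def offWeight (k : ℕ) (s : ℝ) : ℝ := ∑' j, if j = k then 0 else R.weight s j

lemma totalWeight_nonneg (hs : 0 ≤ s) : 0 ≤ R.totalWeight s := tsum_nonneg (R.weight_nonneg hs)

lemma summable_ite_weight (k : ℕ) (hs : 0 ≤ s) :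
    Summable fun j ↦ if j = k then 0 else R.weight s j :=
  Summable.of_nonneg_of_le (fun j ↦ by split_ifs <;> simp [R.weight_nonneg hs])
    (fun j ↦ by split_ifs <;> simp [R.weight_nonneg hs]) (R.summable_weight hs)

lemma offWeight_nonneg (k : ℕ) (hs : 0 ≤ s) : 0 ≤ R.offWeight k s :=
  tsum_nonneg fun j ↦ by split_ifs <;> simp [R.weight_nonneg hs]

lemma abs_travelTime_sub_travelTime_le (w w' : ℝ) {a : ℝ} (ha : |a| ≤ s) :
    |R.timeChange.travelTime w a - R.timeChange.travelTime w' a| ≤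
      4 * Real.pi ^ 2 * R.totalWeight s * |w - w'| := by
  have h := (R.hasSum_wave w a).sub (R.hasSum_wave w' a)
  rw [sub_sub_sub_cancel_right] at h
  have hbound := ((R.summable_weight ((abs_nonneg a).trans ha)).hasSum.mul_left
    (4 * Real.pi ^ 2)).mul_right |w - w'|
  exact h.norm_le_of_bounded hbound fun j ↦ R.abs_wave_sub_wave_le j w w' ha

lemma abs_travelTime_sub_self_le (w : ℝ) {a : ℝ} (ha : |a| ≤ s) :
    |R.timeChange.travelTime w a - a| ≤ 2 * Real.pi * R.totalWeight s := by
  have hs := (abs_nonneg a).trans ha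
  refine (R.hasSum_wave w a).norm_le_of_bounded ((R.summable_weight hs).hasSum.mul_left _)
    fun j ↦ (R.abs_wave_le j w ha).trans ?_
  have hA := R.amplitude_pos j
  have hθ := R.divisor_pos j
  rw [weight]
  gcongr
  exact le_mul_of_one_le_left hA.le (R.one_le_den j)

lemma abs_travelTime_sub_wave_sub_le (k : ℕ) (w w' : ℝ) {a : ℝ} (ha : |a| ≤ s) :
    |(R.timeChange.travelTime w a - R.wave k w a) -
      (R.timeChange.travelTime w' a - R.wave k w' a)| ≤
      4 * Real.pi ^ 2 * R.offWeight k s * |w - w'| := by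
  have h := hasSum_ite_sub_hasSum ((R.hasSum_wave w a).sub (R.hasSum_wave w' a)) k
  have hbound := ((R.summable_ite_weight k ((abs_nonneg a).trans ha)).hasSum.mul_left
    (4 * Real.pi ^ 2)).mul_right |w - w'|
  have hle := h.norm_le_of_bounded hbound fun j ↦ by
    split_ifs
    · simp
    · exact R.abs_wave_sub_wave_le j w w' ha
  rw [Real.norm_eq_abs, ← offWeight] at hle
  convert hle using 2
  ring

lemma abs_travelTimeDeriv_sub_le (k : ℕ) (w : ℝ) {a : ℝ} (ha : |a| ≤ s) :
    |R.timeChange.travelTimeDeriv w a - R.den k * R.amplitude k * (2 * Real.pi *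
      (Real.cos (2 * Real.pi * (R.den k * w + R.divisor k * a)) -
        Real.cos (2 * Real.pi * (R.den k * w))))| ≤ 4 * Real.pi ^ 2 * R.offWeight k s := by
  have hphase (c : ℝ) : HasDerivAt (fun w ↦ Real.sin (2 * Real.pi * (R.den k * w + c)))
      (Real.cos (2 * Real.pi * (R.den k * w + c)) * (2 * Real.pi * R.den k)) w := by
    simpa using ((((hasDerivAt_id' w).const_mul (R.den k : ℝ)).add_const c).const_mul
      (2 * Real.pi)).sin
  have hwave := ((hphase (R.divisor k * a)).sub (hphase 0)).const_mul (R.amplitude k)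
  simp only [add_zero] at hwave
  have h := (R.timeChange.hasDerivAt_travelTimeDeriv w a).sub hwave
  have hs := (abs_nonneg a).trans ha
  have hle := h.le_of_lip' (mul_nonneg (by positivity) (R.offWeight_nonneg k hs))
    (.of_forall fun w' ↦ R.abs_travelTime_sub_wave_sub_le k w' w ha)
  rw [Real.norm_eq_abs] at hle
  convert hle using 2
  ring

end Weights

section ResonantTime

/-- The time after which the `k`-th wave has advanced by half a period along the flow lines. -/
noncomputable def resonantTime (k : ℕ) : ℕ := ⌈1 / (2 * R.divisor k)⌉₊

/-- A bound for the deviation from half a period of the advance of the `k`-th wave in the resonant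
time. -/
noncomputable def phaseError (k : ℕ) : ℝ :=
  R.divisor k * (3 + 2 * Real.pi * R.totalWeight (1 / R.divisor k))

variable {R} {k : ℕ}

lemma le_resonantTime : 1 / R.divisor k / 2 ≤ R.resonantTime k := by
  rw [div_div, mul_comm]
  exact Nat.le_ceil _

lemma resonantTime_le : R.resonantTime k ≤ 1 / R.divisor k / 2 + 1 := by
  rw [div_div, mul_comm]
  have hθ := R.divisor_pos k
  exact (Nat.ceil_lt_add_one (by positivity)).le

lemma log_resonantTime_add_one_le (hk : R.divisor k ≤ 1 / 10) :
    Real.log (R.resonantTime k + 1) ≤ Real.log (1 / R.divisor k) := by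
  have hθ : 10 ≤ 1 / R.divisor k := by
    simpa using one_div_le_one_div_of_le (R.divisor_pos k) hk
  exact Real.log_le_log (by positivity) (by linarith [R.resonantTime_le (k := k)])

lemma abs_le_of_travelTime_eq_add_resonantTime (hk : R.divisor k ≤ 1 / 10) {w x a : ℝ}
    (ha : a ∈ Icc (0 : ℝ) 1)
    (hx : R.timeChange.travelTime w x = R.timeChange.travelTime w a + R.resonantTime k) :
    |x| ≤ 1 / R.divisor k := by
  have hθ : 10 ≤ 1 / R.divisor k := by
    simpa using one_div_le_one_div_of_le (R.divisor_pos k) hk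
  have hle := R.timeChange.mul_abs_sub_le_abs_travelTime_sub w x a
  rw [hx, add_sub_cancel_left, Nat.abs_cast] at hle
  have htri : |x| ≤ |x - a| + |a| := by simpa using abs_add_le (x - a) a
  rw [abs_of_nonneg ha.1] at htri
  linarith [ha.2, R.resonantTime_le (k := k)]

lemma abs_divisor_mul_sub_half_le (hk : R.divisor k ≤ 1 / 10) {w x a : ℝ}
    (ha : a ∈ Icc (0 : ℝ) 1)
    (hx : R.timeChange.travelTime w x = R.timeChange.travelTime w a + R.resonantTime k) :
    |R.divisor k * x - 1 / 2| ≤ R.phaseError k := by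
  have hθ := R.divisor_pos k
  have hdev := R.abs_travelTime_sub_self_le w (abs_le_of_travelTime_eq_add_resonantTime hk ha hx)
  have ha0 := R.timeChange.mul_sub_le_travelTime_sub w ha.1
  have ha1 := R.timeChange.travelTime_sub_le_mul_sub w ha.1
  rw [TimeChange.travelTime_zero] at ha0 ha1
  have hphase : R.divisor k * x - 1 / 2 = R.divisor k * (x - 1 / R.divisor k / 2) := by field_simp
  rw [hphase, abs_mul, abs_of_pos hθ, phaseError]
  gcongr
  rw [hx] at hdev
  rw [abs_le] at hdev ⊢
  constructor <;>
    linarith [hdev.1, hdev.2, ha.1, ha.2, R.le_resonantTime (k := k), R.resonantTime_le (k := k)]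

end ResonantTime

section Shear

/-- A bound for the deviation of the shear at the resonant time from a single wave, relative to the
amplitude of that wave. -/
noncomputable def distortion (k : ℕ) : ℝ :=
  8 * Real.pi ^ 2 * (R.offWeight k (1 / R.divisor k) / (R.den k * R.amplitude k)) +
    4 * Real.pi ^ 2 * (R.phaseError k + R.divisor k)

variable {R} {k : ℕ}

lemma abs_travelTimeDeriv_le (w : ℝ) {a s : ℝ} (ha : |a| ≤ s) :
    |R.timeChange.travelTimeDeriv w a| ≤ 4 * Real.pi ^ 2 *
      (R.offWeight k s + R.den k * R.amplitude k * |R.divisor k * a|) := by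
  have hL : 0 ≤ R.den k * R.amplitude k := mul_nonneg (Nat.cast_nonneg _) (R.amplitude_pos k).le
  have hderiv := R.abs_travelTimeDeriv_sub_le k w ha
  have hcos := mul_le_mul_of_nonneg_left
    (abs_cos_two_pi_mul_add_sub_le (R.den k * w) (R.divisor k * a))
    (mul_nonneg hL Real.two_pi_pos.le)
  rw [← abs_of_nonneg (mul_nonneg hL Real.two_pi_pos.le), ← abs_mul,
    abs_of_nonneg (mul_nonneg hL Real.two_pi_pos.le)] at hcos
  rw [abs_le] at hderiv hcos ⊢
  constructor <;> linarith [hderiv.1, hderiv.2, hcos.1, hcos.2]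

lemma abs_travelTimeDeriv_add_le (w : ℝ) {a s : ℝ} (ha : |a| ≤ s) :
    |R.timeChange.travelTimeDeriv w a + R.den k * R.amplitude k *
      (4 * Real.pi * Real.cos (2 * Real.pi * (R.den k * w)))| ≤ 4 * Real.pi ^ 2 *
      (R.offWeight k s + R.den k * R.amplitude k * |R.divisor k * a - 1 / 2|) := by
  have hL : 0 ≤ R.den k * R.amplitude k := mul_nonneg (Nat.cast_nonneg _) (R.amplitude_pos k).le
  have hderiv := R.abs_travelTimeDeriv_sub_le k w ha
  have hcos := mul_le_mul_of_nonneg_left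
    (abs_cos_two_pi_mul_add_add_le (R.den k * w) (R.divisor k * a))
    (mul_nonneg hL Real.two_pi_pos.le)
  rw [← abs_of_nonneg (mul_nonneg hL Real.two_pi_pos.le), ← abs_mul,
    abs_of_nonneg (mul_nonneg hL Real.two_pi_pos.le)] at hcos
  rw [abs_le] at hderiv hcos ⊢
  constructor <;> linarith [hderiv.1, hderiv.2, hcos.1, hcos.2]

lemma abs_flowShear_sub_le (hk : R.divisor k ≤ 1 / 10) {a : ℝ} (ha : a ∈ Icc (0 : ℝ) 1) (b : ℝ) :
    |R.timeChange.flowShear (R.resonantTime k) (a, b) - R.den k * R.amplitude k *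
      (-4 * Real.pi * Real.cos (2 * Real.pi * (R.den k * (b - R.slope * a))))| ≤
      R.distortion k * (R.den k * R.amplitude k) := by
  have hθ := R.divisor_pos k
  have hA := R.amplitude_pos k
  have hq := R.one_le_den k
  set w := b - R.slope * a
  set x := (R.timeChange.flow (R.resonantTime k) (a, b)).1
  set L := R.den k * R.amplitude k with hL
  have hL0 : 0 < L := by positivity
  have hxa : R.timeChange.travelTime w x = R.timeChange.travelTime w a + R.resonantTime k :=
    R.timeChange.travelTime_flow_fst _ (a, b)
  have ha_le : |a| ≤ 1 / R.divisor k := by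
    rw [abs_of_nonneg ha.1]
    exact ha.2.trans (by rw [le_div_iff₀ hθ]; linarith)
  have hx_deriv := R.abs_travelTimeDeriv_add_le (k := k) w
    (abs_le_of_travelTime_eq_add_resonantTime hk ha hxa)
  have ha_deriv := R.abs_travelTimeDeriv_le (k := k) w ha_le
  have hphase := abs_divisor_mul_sub_half_le hk ha hxa
  have ha_phase : |R.divisor k * a| ≤ R.divisor k := by
    rw [abs_mul, abs_of_pos hθ, abs_of_nonneg ha.1]
    exact mul_le_of_le_one_right hθ.le ha.2
  have hshear : R.timeChange.flowShear (R.resonantTime k) (a, b) - L *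
      (-4 * Real.pi * Real.cos (2 * Real.pi * (R.den k * w))) =
      R.timeChange.travelTimeDeriv w x + L * (4 * Real.pi *
        Real.cos (2 * Real.pi * (R.den k * w))) - R.timeChange.travelTimeDeriv w a := by
    rw [show R.timeChange.flowShear (R.resonantTime k) (a, b) =
      R.timeChange.travelTimeDeriv w x - R.timeChange.travelTimeDeriv w a from rfl]
    ring
  rw [hshear]
  calc _ ≤ 4 * Real.pi ^ 2 * (R.offWeight k (1 / R.divisor k) + L * R.phaseError k) +
        4 * Real.pi ^ 2 * (R.offWeight k (1 / R.divisor k) + L * R.divisor k) :=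
        (abs_sub _ _).trans (add_le_add (hx_deriv.trans (by gcongr)) (ha_deriv.trans (by gcongr)))
    _ = R.distortion k * L := by
        rw [distortion, ← hL]
        field_simp [hL0.ne']
        ring

end Shear

section Spread

lemma mul_amplitude_le_abs_wave_sub_wave (k : ℕ) {a : ℝ}
    (ha : |R.divisor k * a - 1 / 2| ≤ 1 / 100) :
    13 / 10 * R.amplitude k ≤ |R.wave k 0 a - R.wave k (1 / (4 * R.den k)) a| := by
  have hA := R.amplitude_pos k
  have hq := R.one_le_den k
  set y := 2 * Real.pi * (R.divisor k * a - 1 / 2) with hy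
  have hy_le : |y| ≤ 1 / 10 := by
    rw [hy, abs_mul, abs_of_pos Real.two_pi_pos]
    nlinarith [Real.pi_pos, Real.pi_lt_four, abs_nonneg (R.divisor k * a - 1 / 2)]
  have hphase : 2 * Real.pi * (R.divisor k * a) = y + Real.pi := by
    rw [hy]
    ring
  have hquarter : 2 * Real.pi * (R.den k * (1 / (4 * R.den k))) = Real.pi / 2 := by
    field_simp
    ring
  have hwave : R.wave k 0 a - R.wave k (1 / (4 * R.den k)) a =
      R.amplitude k * (1 + Real.cos y - Real.sin y) := by
    rw [wave, wave, mul_zero, zero_add, mul_zero, Real.sin_zero, mul_add, hquarter, hphase,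
      Real.sin_add_pi, Real.sin_pi_div_two, ← add_comm (y + Real.pi), Real.sin_add_pi_div_two,
      Real.cos_add_pi]
    ring
  have hcos := Real.one_sub_sq_div_two_le_cos (x := y)
  have hsin := (abs_le.1 (Real.abs_sin_le_abs.trans hy_le)).2
  have hsq : y ^ 2 ≤ (1 / 10) ^ 2 := sq_le_sq' (abs_le.1 hy_le).1 (abs_le.1 hy_le).2
  rw [hwave, mul_comm]
  exact (mul_le_mul_of_nonneg_left (by linarith) hA.le).trans (le_abs_self _)

lemma amplitude_le_abs_position_sub {k : ℕ} (hk : R.divisor k ≤ 1 / 10)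
    (hphase : R.phaseError k ≤ 1 / 100)
    (hoff : Real.pi ^ 2 * (R.offWeight k (1 / R.divisor k) / (R.den k * R.amplitude k)) ≤ 1 / 10) :
    R.amplitude k ≤ |R.timeChange.position 0 (R.resonantTime k) -
      R.timeChange.position (1 / (4 * R.den k)) (R.resonantTime k)| := by
  have hA := R.amplitude_pos k
  have hq := R.one_le_den k
  set n : ℝ := (R.resonantTime k : ℝ)
  set w : ℝ := 1 / (4 * R.den k) with hw
  set x := R.timeChange.position 0 n
  have hx : R.timeChange.travelTime 0 x = R.timeChange.travelTime 0 0 + n := by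
    rw [TimeChange.travelTime_position, TimeChange.travelTime_zero, zero_add]
  have h01 : (0 : ℝ) ∈ Icc (0 : ℝ) 1 := ⟨le_rfl, zero_le_one⟩
  have hwave := R.mul_amplitude_le_abs_wave_sub_wave k
    ((abs_divisor_mul_sub_half_le hk h01 hx).trans hphase)
  have hrem := R.abs_travelTime_sub_wave_sub_le k 0 w
    (abs_le_of_travelTime_eq_add_resonantTime hk h01 hx)
  have hrem_le : 4 * Real.pi ^ 2 * R.offWeight k (1 / R.divisor k) * |0 - w| ≤
      1 / 10 * R.amplitude k := by
    rw [zero_sub, abs_neg, abs_of_pos (by positivity : 0 < w)]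
    calc _ = Real.pi ^ 2 * (R.offWeight k (1 / R.divisor k) / (R.den k * R.amplitude k)) *
          R.amplitude k := by
          rw [hw]
          field_simp
      _ ≤ _ := by gcongr
  have htri := abs_sub (R.timeChange.travelTime 0 x - R.timeChange.travelTime w x)
    (R.timeChange.travelTime 0 x - R.wave k 0 x - (R.timeChange.travelTime w x - R.wave k w x))
  rw [sub_sub_sub_comm, sub_sub_cancel, sub_sub_cancel] at htri
  have hle := R.timeChange.abs_travelTime_sub_le_mul_abs_sub w (R.timeChange.position w n) x
  have harrive : R.timeChange.travelTime w (R.timeChange.position w n) =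
      R.timeChange.travelTime 0 x := by
    rw [TimeChange.travelTime_position, TimeChange.travelTime_position]
  rw [harrive, abs_sub_comm _ x] at hle
  rw [← hw] at hwave
  linarith

end Spread

end ResonantSeries

lemma irrational_of_tendsto_zero {x : ℝ} {p : ℕ → ℤ} {q : ℕ → ℕ} (hpos : ∀ j, 0 < q j * x - p j)
    (h : Tendsto (fun j ↦ q j * x - p j) atTop (𝓝 0)) : Irrational x := by
  rintro ⟨r, rfl⟩
  have hden : (0 : ℝ) < r.den := mod_cast r.den_pos
  have hlim := h.const_mul (r.den : ℝ)
  rw [mul_zero] at hlim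
  obtain ⟨j, hj⟩ := (hlim.eventually (gt_mem_nhds one_pos)).exists
  have hj0 := mul_pos hden (hpos j)
  have hint : (r.den : ℝ) * (q j * r - p j) = ((q j * r.num - r.den * p j : ℤ) : ℝ) := by
    have hr : (r.den : ℝ) * r = r.num := mod_cast Rat.den_mul_eq_num r
    push_cast
    linear_combination (q j : ℝ) * hr
  rw [hint] at hj hj0
  norm_cast at hj hj0
  lia

namespace ResonantSeries

/-- The growth conditions under which the `k`-th wave dominates the shear at its resonant time,
while the shear up to time `s` is at most of the order of `log s`. -/
structure IsResonant (R : ResonantSeries) : Prop where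
  tendsto_divisor : Tendsto R.divisor atTop (𝓝 0)
  exists_totalWeight_le : ∃ C, ∀ s, 1 ≤ s → R.totalWeight s ≤ C * (1 + Real.log s)
  tendsto_offWeight : Tendsto
    (fun k ↦ R.offWeight k (1 / R.divisor k) / (R.den k * R.amplitude k)) atTop (𝓝 0)
  tendsto_amplitude_div : ∀ t : ℝ, 0 ≤ t → t < 1 →
    Tendsto (fun k ↦ R.amplitude k / Real.log (1 / R.divisor k) ^ t) atTop atTop

namespace IsResonant

variable {R : ResonantSeries} (hR : R.IsResonant)

include hR

lemma irrational_slope : Irrational R.slope :=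
  irrational_of_tendsto_zero R.divisor_pos hR.tendsto_divisor

lemma tendsto_amplitude : Tendsto R.amplitude atTop atTop := by
  simpa using hR.tendsto_amplitude_div 0 le_rfl one_pos

lemma tendsto_den_mul_amplitude : Tendsto (fun k ↦ R.den k * R.amplitude k) atTop atTop :=
  tendsto_atTop_mono (fun k ↦ le_mul_of_one_le_left (R.amplitude_pos k).le (R.one_le_den k))
    hR.tendsto_amplitude

lemma eventually_divisor_le {c : ℝ} (hc : 0 < c) : ∀ᶠ k in atTop, R.divisor k ≤ c :=
  hR.tendsto_divisor.eventually (ge_mem_nhds hc)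

lemma tendsto_phaseError : Tendsto R.phaseError atTop (𝓝 0) := by
  obtain ⟨C, hC⟩ := hR.exists_totalWeight_le
  have hlog := (Real.continuous_mul_log.tendsto 0).comp hR.tendsto_divisor
  have hlim := (hR.tendsto_divisor.mul_const (3 + 2 * Real.pi * C)).sub
    (hlog.const_mul (2 * Real.pi * C))
  rw [zero_mul, zero_mul, mul_zero, sub_zero] at hlim
  refine squeeze_zero' (.of_forall fun k ↦ ?_) ?_ hlim
  · have hθ := R.divisor_pos k
    have hW := R.totalWeight_nonneg (by positivity : 0 ≤ 1 / R.divisor k)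
    unfold phaseError
    positivity
  · filter_upwards [hR.eventually_divisor_le one_pos] with k hk
    have hθ := R.divisor_pos k
    have hCk := hC (1 / R.divisor k) (by rwa [le_div_iff₀ hθ, one_mul])
    rw [one_div, Real.log_inv] at hCk
    calc R.phaseError k
        ≤ R.divisor k * (3 + 2 * Real.pi * (C * (1 + -Real.log (R.divisor k)))) := by
          rw [phaseError, one_div]
          gcongr
      _ = _ := by
          rw [Function.comp_apply]
          ring

lemma tendsto_distortion : Tendsto R.distortion atTop (𝓝 0) := by
  have hlim := (hR.tendsto_offWeight.const_mul (8 * Real.pi ^ 2)).add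
    ((hR.tendsto_phaseError.add hR.tendsto_divisor).const_mul (4 * Real.pi ^ 2))
  rwa [add_zero, mul_zero, mul_zero, add_zero] at hlim

theorem weaklyMixing_torusFlow :
    WeaklyMixing (R.timeChange.torusFlow 1) (volume : Measure Torus2) := by
  refine R.timeChange.weaklyMixing_torusFlow hR.irrational_slope (N := R.resonantTime) (q := R.den)
    (η := R.distortion) (fun k ↦ (R.den_pos k).ne') hR.tendsto_den_mul_amplitude ?_
    hR.tendsto_distortion ?_
  · refine hR.tendsto_amplitude.inv_tendsto_atTop.congr fun k ↦ ?_
    have hq := R.one_le_den k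
    have hA := R.amplitude_pos k
    simp only [Pi.inv_apply]
    field_simp
  · filter_upwards [hR.eventually_divisor_le (c := 1 / 10) (by norm_num)] with k hk a ha b
    exact abs_flowShear_sub_le hk ha b

lemma exists_abs_travelTime_sub_travelTime_le : ∃ C, ∀ n : ℕ, 1 ≤ n → ∀ w w' a : ℝ, |a| ≤ 4 * n →
    |R.timeChange.travelTime w a - R.timeChange.travelTime w' a| ≤
      C * (1 + Real.log n) * |w - w'| := by
  obtain ⟨C, hC⟩ := hR.exists_totalWeight_le
  have hC0 : 0 ≤ C := by simpa using (R.totalWeight_nonneg zero_le_one).trans (hC 1 le_rfl)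
  refine ⟨12 * Real.pi ^ 2 * C, fun n hn w w' a ha ↦ ?_⟩
  have hn1 : (1 : ℝ) ≤ n := mod_cast hn
  have hlog : 1 + Real.log (4 * n) ≤ 3 * (1 + Real.log n) := by
    have hlog4 : Real.log 4 ≤ 2 := by
      rw [show (4 : ℝ) = 2 ^ 2 by norm_num, Real.log_pow, Nat.cast_ofNat]
      linarith [Real.log_two_lt_d9]
    rw [Real.log_mul (by norm_num) (by positivity)]
    linarith [Real.log_nonneg hn1]
  calc _ ≤ 4 * Real.pi ^ 2 * R.totalWeight (4 * n) * |w - w'| :=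
        R.abs_travelTime_sub_travelTime_le w w' ha
    _ ≤ 4 * Real.pi ^ 2 * (C * (3 * (1 + Real.log n))) * |w - w'| := by
        gcongr
        exact (hC _ (by linarith)).trans (by gcongr)
    _ = _ := by ring

lemma eventually_log_rpow_le_abs_position_sub {t : ℝ} (ht : 0 < t) (ht1 : t < 1) :
    ∀ᶠ k in atTop, Real.log (R.resonantTime k + 1) ^ t ≤
      |R.timeChange.position 0 (R.resonantTime k) -
        R.timeChange.position (1 / (4 * R.den k)) (R.resonantTime k)| := by
  have hoff := hR.tendsto_offWeight.const_mul (Real.pi ^ 2)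
  rw [mul_zero] at hoff
  filter_upwards [hR.eventually_divisor_le (c := 1 / 10) (by norm_num),
    hR.tendsto_phaseError.eventually (ge_mem_nhds (by norm_num : (0 : ℝ) < 1 / 100)),
    hoff.eventually (ge_mem_nhds (by norm_num : (0 : ℝ) < 1 / 10)),
    (hR.tendsto_amplitude_div t ht.le ht1).eventually_ge_atTop 1] with k hk hphase hoff hA
  refine le_trans ?_ (R.amplitude_le_abs_position_sub hk hphase hoff)
  have hlog : 0 < Real.log (1 / R.divisor k) :=
    Real.log_pos (by rw [lt_div_iff₀ (R.divisor_pos k)]; linarith)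
  rw [le_div_iff₀ (by positivity), one_mul] at hA
  refine le_trans ?_ hA
  exact Real.rpow_le_rpow (Real.log_nonneg (by simp)) (log_resonantTime_add_one_le hk) ht.le

lemma tendsto_resonantTime : Tendsto R.resonantTime atTop atTop := by
  have hlim : Tendsto (fun k ↦ 1 / R.divisor k / 2) atTop atTop := by
    refine Tendsto.atTop_div_const two_pos ?_
    simp only [one_div]
    exact tendsto_inv_nhdsGT_zero.comp (tendsto_nhdsWithin_iff.2
      ⟨hR.tendsto_divisor, .of_forall R.divisor_pos⟩)
  exact tendsto_natCast_atTop_iff.1 (tendsto_atTop_mono (fun k ↦ le_resonantTime) hlim)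

theorem hasUpperTopSlowEntropy_torusFlow :
    HasUpperTopSlowEntropy (R.timeChange.torusFlow 1) logScale 1 := by
  obtain ⟨C, hC⟩ := hR.exists_abs_travelTime_sub_travelTime_le
  exact R.timeChange.hasUpperTopSlowEntropy_torusFlow hC hR.tendsto_resonantTime (fun _ ↦ 0) _
    fun t ht ht1 ↦ hR.eventually_log_rpow_le_abs_position_sub ht ht1

end IsResonant

end ResonantSeries

section Tower

/-- The exponents of the denominators `towerDen`, chosen so that `towerDen (j + 1)` is
`2 ^ towerWeight j`. -/
def towerExp : ℕ → ℕ
  | 0 => 4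
  | j + 1 => 2 ^ 2 ^ towerExp j

/-- The denominators of the approximations of `towerSlope`. Each is divisible by the previous one.
-/
def towerDen (j : ℕ) : ℕ := 2 ^ towerExp j

/-- The product of the denominator and the amplitude of the `j`-th wave of `towerSeries`. -/
def towerWeight (j : ℕ) : ℕ := 2 ^ towerDen j

/-- A slope which is approximated superexponentially well by its partial sums. -/
noncomputable def towerSlope : ℝ := ∑' i, (towerDen i : ℝ)⁻¹

/-- The numerator of the `j`-th partial sum of `towerSlope` over `towerDen j`. -/
def towerNum (j : ℕ) : ℤ := ∑ i ∈ Finset.range (j + 1), 2 ^ (towerExp j - towerExp i)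

/-- The small divisor `towerDen j * towerSlope - towerNum j`, written as a tail of `towerSlope`. -/
noncomputable def towerDivisor (j : ℕ) : ℝ := towerDen j * ∑' i, (towerDen (i + (j + 1)) : ℝ)⁻¹

section Growth

lemma towerDen_succ (j : ℕ) : towerDen (j + 1) = 2 ^ towerWeight j := rfl

lemma towerDen_lt_towerWeight (j : ℕ) : towerDen j < towerWeight j := Nat.lt_two_pow_self

lemma towerExp_strictMono : StrictMono towerExp := strictMono_nat_of_lt_succ fun j ↦
  (Nat.lt_two_pow_self (n := towerExp j)).trans (towerDen_lt_towerWeight j)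

lemma towerDen_strictMono : StrictMono towerDen :=
  (pow_right_strictMono₀ one_lt_two).comp towerExp_strictMono

lemma towerWeight_strictMono : StrictMono towerWeight :=
  (pow_right_strictMono₀ one_lt_two).comp towerDen_strictMono

lemma sixteen_add_le_towerDen (j : ℕ) : 16 + j ≤ towerDen j :=
  add_comm 16 j ▸ towerDen_strictMono.add_le_nat j 0

lemma towerDen_pos (j : ℕ) : (0 : ℝ) < towerDen j :=
  Nat.cast_pos.2 (Nat.two_pow_pos _)

lemma towerWeight_pos (j : ℕ) : (0 : ℝ) < towerWeight j :=
  Nat.cast_pos.2 (Nat.two_pow_pos _)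

lemma cast_towerDen_le_towerWeight (j : ℕ) : (towerDen j : ℝ) ≤ towerWeight j := by
  exact_mod_cast (towerDen_lt_towerWeight j).le

lemma cast_towerDen_succ (j : ℕ) : (towerDen (j + 1) : ℝ) = 2 ^ towerWeight j := by
  rw [towerDen_succ, Nat.cast_pow, Nat.cast_ofNat]

lemma cast_towerWeight (j : ℕ) : (towerWeight j : ℝ) = 2 ^ towerDen j := by
  rw [towerWeight, Nat.cast_pow, Nat.cast_ofNat]

lemma tendsto_towerWeight : Tendsto towerWeight atTop atTop :=
  towerWeight_strictMono.tendsto_atTop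

lemma two_mul_towerDen_le (j : ℕ) : 2 * towerDen j ≤ towerWeight j :=
  Nat.mul_le_pow (by decide) _

lemma ten_add_towerDen_add_le (j : ℕ) : 10 + towerDen j + j ≤ towerWeight j := by
  have hden := sixteen_add_le_towerDen j
  have hweight := two_mul_towerDen_le j
  omega

lemma sum_towerWeight_le (k : ℕ) : ∑ j ∈ Finset.range k, (towerWeight j : ℝ) ≤ towerDen k := by
  induction k with
  | zero => simp
  | succ k ih =>
    have hle : 2 * (towerWeight k : ℝ) ≤ towerDen (k + 1) := by
      exact_mod_cast Nat.mul_le_pow (by decide : 2 ≠ 1) (towerWeight k)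
    rw [Finset.sum_range_succ]
    linarith [cast_towerDen_le_towerWeight k]

lemma towerDen_sq_le (j : ℕ) : (towerDen j : ℝ) ^ 2 ≤ 2 ^ towerWeight j := by
  have hexp : towerExp j < towerDen j := Nat.lt_two_pow_self
  have hle : towerExp j * 2 ≤ towerWeight j := by linarith [two_mul_towerDen_le j]
  rw [towerDen, Nat.cast_pow, Nat.cast_ofNat, ← pow_mul]
  exact pow_le_pow_right₀ one_le_two hle

lemma summable_towerWeight_pow_mul_pow (r : ℕ) {x : ℝ} (hx : ‖x‖ < 1) :
    Summable fun j ↦ (towerWeight j : ℝ) ^ r * x ^ towerWeight j :=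
  (summable_pow_mul_geometric_of_norm_lt_one r hx).comp_injective
    towerWeight_strictMono.injective

end Growth

section Divisor

lemma inv_towerDen_add_le (j i : ℕ) :
    (towerDen (i + j) : ℝ)⁻¹ ≤ (towerDen j : ℝ)⁻¹ * (1 / 2) ^ i := by
  have hle : towerDen j * 2 ^ i ≤ towerDen (i + j) := by
    rw [towerDen, towerDen, ← pow_add, add_comm, add_comm i]
    exact Nat.pow_le_pow_right two_pos (add_comm i _ ▸ towerExp_strictMono.add_le_nat i j)
  rw [one_div, inv_pow, ← mul_inv]
  have := towerDen_pos j
  exact inv_anti₀ (by positivity) (by exact_mod_cast hle)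

lemma summable_inv_towerDen_add (j : ℕ) : Summable fun i ↦ (towerDen (i + j) : ℝ)⁻¹ :=
  Summable.of_nonneg_of_le (fun _ ↦ by positivity) (inv_towerDen_add_le j)
    (summable_geometric_two.mul_left _)

lemma tsum_inv_towerDen_add_le (j : ℕ) :
    ∑' i, (towerDen (i + j) : ℝ)⁻¹ ≤ 2 * (towerDen j : ℝ)⁻¹ := by
  refine ((summable_inv_towerDen_add j).tsum_le_tsum (inv_towerDen_add_le j)
    (summable_geometric_two.mul_left _)).trans_eq ?_
  rw [tsum_mul_left, tsum_geometric_two, mul_comm]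

lemma abs_towerSlope_le_one : |towerSlope| ≤ 1 := by
  rw [abs_of_nonneg (tsum_nonneg fun i ↦ by positivity)]
  refine (tsum_inv_towerDen_add_le 0).trans ?_
  norm_num [towerDen, towerExp]

lemma cast_towerNum (j : ℕ) :
    (towerNum j : ℝ) = towerDen j * ∑ i ∈ Finset.range (j + 1), (towerDen i : ℝ)⁻¹ := by
  rw [towerNum, Int.cast_sum, Finset.mul_sum]
  refine Finset.sum_congr rfl fun i hi ↦ ?_
  have hle : towerExp i ≤ towerExp j :=
    towerExp_strictMono.monotone (Finset.mem_range_succ_iff.1 hi)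
  simp only [towerDen, Int.cast_pow, Int.cast_ofNat, Nat.cast_pow, Nat.cast_ofNat]
  exact pow_sub₀ _ two_ne_zero hle

lemma towerDen_mul_towerSlope_sub_towerNum (j : ℕ) :
    towerDen j * towerSlope - towerNum j = towerDivisor j := by
  have hs : Summable fun i ↦ (towerDen i : ℝ)⁻¹ := summable_inv_towerDen_add 0
  rw [cast_towerNum, towerDivisor, towerSlope, ← hs.sum_add_tsum_nat_add (j + 1)]
  ring

lemma towerDivisor_le (j : ℕ) : towerDivisor j ≤ 2 * towerDen j * (2 ^ towerWeight j)⁻¹ := by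
  rw [mul_comm 2, mul_assoc, towerDivisor, ← cast_towerDen_succ]
  exact mul_le_mul_of_nonneg_left (tsum_inv_towerDen_add_le (j + 1)) (towerDen_pos j).le

lemma le_towerDivisor (j : ℕ) : towerDen j * (2 ^ towerWeight j)⁻¹ ≤ towerDivisor j := by
  have hle := (summable_inv_towerDen_add (j + 1)).le_tsum 0 fun i _ ↦ by positivity
  rw [zero_add, cast_towerDen_succ] at hle
  exact mul_le_mul_of_nonneg_left hle (towerDen_pos j).le

lemma towerDivisor_pos (j : ℕ) : 0 < towerDivisor j := by
  have := towerDen_pos j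
  exact lt_of_lt_of_le (by positivity) (le_towerDivisor j)

lemma one_div_towerDivisor_le (j : ℕ) : 1 / towerDivisor j ≤ 2 ^ towerWeight j := by
  have hden : (1 : ℝ) ≤ towerDen j := Nat.one_le_cast.2 (Nat.two_pow_pos _)
  rw [one_div]
  refine inv_le_of_inv_le₀ (by positivity) ((le_mul_of_one_le_left ?_ hden).trans
    (le_towerDivisor j))
  positivity

end Divisor

section Amplitude

/-- The amplitude of the `j`-th wave of `towerSeries`. -/
noncomputable def towerAmplitude (j : ℕ) : ℝ := towerWeight j / towerDen j

lemma towerDen_mul_towerAmplitude (j : ℕ) :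
    (towerDen j : ℝ) * towerAmplitude j = towerWeight j :=
  mul_div_cancel₀ _ (towerDen_pos j).ne'

lemma one_le_towerAmplitude (j : ℕ) : 1 ≤ towerAmplitude j :=
  (one_le_div (towerDen_pos j)).2 (cast_towerDen_le_towerWeight j)

lemma towerAmplitude_pos (j : ℕ) : 0 < towerAmplitude j :=
  one_pos.trans_le (one_le_towerAmplitude j)

lemma towerAmplitude_mul_towerDivisor_le (j : ℕ) :
    towerAmplitude j * towerDivisor j ≤ 2 * towerWeight j * (2 ^ towerWeight j)⁻¹ := calc
  towerAmplitude j * towerDivisor j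
    ≤ towerAmplitude j * (2 * towerDen j * (2 ^ towerWeight j)⁻¹) :=
      mul_le_mul_of_nonneg_left (towerDivisor_le j) (towerAmplitude_pos j).le
  _ = 2 * (towerDen j * towerAmplitude j) * (2 ^ towerWeight j)⁻¹ := by ring
  _ = 2 * towerWeight j * (2 ^ towerWeight j)⁻¹ := by rw [towerDen_mul_towerAmplitude]

lemma towerAmplitude_mul_towerDivisor_le_geometric (j : ℕ) :
    towerAmplitude j * towerDivisor j ≤ 1 / 512 * (1 / 2) ^ j := by
  refine (towerAmplitude_mul_towerDivisor_le j).trans ?_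
  have hpow : (2 : ℝ) ^ (10 + towerDen j + j) ≤ 2 ^ towerWeight j :=
    pow_le_pow_right₀ one_le_two (ten_add_towerDen_add_le j)
  rw [cast_towerWeight, ← div_eq_mul_inv, div_le_iff₀ (by positivity)]
  refine le_trans (le_of_eq ?_) (mul_le_mul_of_nonneg_left hpow (by positivity))
  rw [pow_add, pow_add, one_div_pow]
  field_simp
  norm_num

lemma towerAmplitude_mul_towerDivisor_mul_pow_le (r j : ℕ) :
    towerAmplitude j * towerDivisor j * (towerDen j : ℝ) ^ r ≤
      2 * ((towerWeight j : ℝ) ^ (r + 1) * (1 / 2) ^ towerWeight j) := calc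
  towerAmplitude j * towerDivisor j * (towerDen j : ℝ) ^ r
    ≤ 2 * towerWeight j * (2 ^ towerWeight j)⁻¹ * (towerWeight j : ℝ) ^ r := by
      have hden := cast_towerDen_le_towerWeight j
      have hle := towerAmplitude_mul_towerDivisor_le j
      gcongr
  _ = 2 * ((towerWeight j : ℝ) ^ (r + 1) * (1 / 2) ^ towerWeight j) := by
      rw [one_div_pow]
      ring

lemma summable_towerAmplitude_mul_towerDivisor_mul_pow (r : ℕ) :
    Summable fun j ↦ towerAmplitude j * towerDivisor j * (towerDen j : ℝ) ^ r := by
  refine Summable.of_nonneg_of_le (fun j ↦ ?_) (towerAmplitude_mul_towerDivisor_mul_pow_le r)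
    ((summable_towerWeight_pow_mul_pow (r + 1) (by norm_num)).mul_left 2)
  exact mul_nonneg (mul_pos (towerAmplitude_pos j) (towerDivisor_pos j)).le (by positivity)

lemma tsum_towerAmplitude_mul_towerDivisor_le :
    ∑' j, towerAmplitude j * towerDivisor j ≤ 1 / 100 := by
  have hs : Summable fun j ↦ towerAmplitude j * towerDivisor j := by
    simpa using summable_towerAmplitude_mul_towerDivisor_mul_pow 0
  refine (hs.tsum_le_tsum towerAmplitude_mul_towerDivisor_le_geometric
    (summable_geometric_two.mul_left _)).trans ?_
  rw [tsum_mul_left, tsum_geometric_two]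
  norm_num

lemma towerDivisor_le_geometric (j : ℕ) : towerDivisor j ≤ 1 / 512 * (1 / 2) ^ j :=
  (le_mul_of_one_le_left (towerDivisor_pos j).le (one_le_towerAmplitude j)).trans
    (towerAmplitude_mul_towerDivisor_le_geometric j)

lemma towerDivisor_le_one (j : ℕ) : towerDivisor j ≤ 1 := by
  have hpow : (1 / 2 : ℝ) ^ j ≤ 1 := pow_le_one₀ (by norm_num) (by norm_num)
  linarith [towerDivisor_le_geometric j]

lemma tendsto_towerDivisor : Tendsto towerDivisor atTop (𝓝 0) := by
  have hgeom := (tendsto_pow_atTop_nhds_zero_of_lt_one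
    (r := (1 / 2 : ℝ)) (by norm_num) (by norm_num)).const_mul (1 / 512)
  rw [mul_zero] at hgeom
  exact squeeze_zero (fun j ↦ (towerDivisor_pos j).le) towerDivisor_le_geometric hgeom

end Amplitude

/-- A series of resonant waves whose denominators grow as a tower of exponentials: consecutive
scales are so far apart that a single wave dominates all the others at its own time scale. -/
noncomputable def towerSeries : ResonantSeries where
  slope := towerSlope
  num := towerNum
  den := towerDen
  amplitude := towerAmplitude
  abs_slope_le_one := abs_towerSlope_le_one
  den_pos _ := Nat.two_pow_pos _
  amplitude_pos := towerAmplitude_pos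
  num_lt_den_mul_slope j := by
    rw [← sub_pos, towerDen_mul_towerSlope_sub_towerNum]
    exact towerDivisor_pos j
  den_mul_slope_sub_num_le_one j := by
    rw [towerDen_mul_towerSlope_sub_towerNum]
    exact towerDivisor_le_one j
  summable_amplitude_mul r := by
    simpa only [towerDen_mul_towerSlope_sub_towerNum] using
      summable_towerAmplitude_mul_towerDivisor_mul_pow r
  tsum_amplitude_mul_le := by
    simpa only [towerDen_mul_towerSlope_sub_towerNum] using
      tsum_towerAmplitude_mul_towerDivisor_le

lemma divisor_towerSeries (j : ℕ) : towerSeries.divisor j = towerDivisor j :=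
  towerDen_mul_towerSlope_sub_towerNum j

lemma weight_towerSeries (s : ℝ) (j : ℕ) :
    towerSeries.weight s j = towerWeight j * min 1 (towerDivisor j * s) := by
  rw [ResonantSeries.weight, divisor_towerSeries]
  exact congrArg (· * _) (towerDen_mul_towerAmplitude j)

section Weight

/-- A summable bound for the weight of the `j`-th wave of `towerSeries` at the times shorter than
`√2 ^ towerWeight j`. -/
noncomputable def towerTail (j : ℕ) : ℝ :=
  2 * ((towerWeight j : ℝ) ^ 2 * (√2)⁻¹ ^ towerWeight j)

lemma towerTail_nonneg (j : ℕ) : 0 ≤ towerTail j := by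
  unfold towerTail
  positivity

lemma summable_towerTail : Summable towerTail := by
  refine (summable_towerWeight_pow_mul_pow 2 ?_).mul_left 2
  rw [norm_inv, Real.norm_of_nonneg (Real.sqrt_nonneg 2)]
  exact inv_lt_one_of_one_lt₀ Real.one_lt_sqrt_two

lemma weight_towerSeries_le_towerWeight (s : ℝ) (j : ℕ) :
    towerSeries.weight s j ≤ towerWeight j := by
  rw [weight_towerSeries]
  exact mul_le_of_le_one_right (towerWeight_pos j).le (min_le_left _ _)

lemma weight_towerSeries_le_towerTail {s : ℝ} (hs : 0 ≤ s) {j : ℕ}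
    (hsj : s ^ 2 ≤ 2 ^ towerWeight j) : towerSeries.weight s j ≤ towerTail j := by
  set w := towerWeight j
  have hsw : s ≤ √2 ^ w := by
    refine le_of_sq_le_sq ?_ (by positivity)
    rwa [← pow_mul, mul_comm, pow_mul, Real.sq_sqrt zero_le_two]
  have hxs : (√2)⁻¹ ^ w * s ≤ 1 := by
    rwa [inv_pow, inv_mul_le_iff₀ (by positivity), mul_one]
  have htwo : ((2 : ℝ) ^ w)⁻¹ = (√2)⁻¹ ^ w * (√2)⁻¹ ^ w := by
    rw [← mul_pow, ← mul_inv, Real.mul_self_sqrt zero_le_two, inv_pow]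
  have hden := cast_towerDen_le_towerWeight j
  calc towerSeries.weight s j = w * min 1 (towerDivisor j * s) := weight_towerSeries s j
    _ ≤ w * (2 * towerDen j * (2 ^ w)⁻¹ * s) := by
        gcongr
        exact (min_le_right _ _).trans (mul_le_mul_of_nonneg_right (towerDivisor_le j) hs)
    _ = 2 * w * towerDen j * (√2)⁻¹ ^ w * ((√2)⁻¹ ^ w * s) := by
        rw [htwo]
        ring
    _ ≤ 2 * w * w * (√2)⁻¹ ^ w * 1 := by gcongr
    _ = towerTail j := by
        rw [towerTail]
        ring

lemma tsum_le_sum_range_add_tsum {f g b : ℕ → ℝ} (hf : ∀ j, 0 ≤ f j) (hb : Summable b)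
    (hb' : ∀ j, 0 ≤ b j) {K : ℕ} (hfg : ∀ j < K, f j ≤ g j) (hfb : ∀ j, K ≤ j → f j ≤ b j) :
    ∑' j, f j ≤ ∑ j ∈ Finset.range K, g j + ∑' j, b j := by
  have hs : Summable fun i ↦ f (i + K) := Summable.of_nonneg_of_le (fun _ ↦ hf _)
    (fun _ ↦ hfb _ (Nat.le_add_left _ _)) ((summable_nat_add_iff K).2 hb)
  rw [← ((summable_nat_add_iff K).1 hs).sum_add_tsum_nat_add K, ← hb.sum_add_tsum_nat_add K]
  have hhead := Finset.sum_le_sum fun j hj ↦ hfg j (Finset.mem_range.1 hj)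
  have htail := hs.tsum_le_tsum (fun i ↦ hfb (i + K) (Nat.le_add_left _ _))
    ((summable_nat_add_iff K).2 hb)
  have hnonneg := Finset.sum_nonneg (s := Finset.range K) fun j _ ↦ hb' j
  linarith

lemma offWeight_towerSeries_le (k : ℕ) :
    towerSeries.offWeight k (1 / towerDivisor k) ≤ towerDen k + ∑' j, towerTail j := by
  have hs : 0 ≤ 1 / towerDivisor k := (one_div_pos.2 (towerDivisor_pos k)).le
  refine (tsum_le_sum_range_add_tsum (g := fun j ↦ (towerWeight j : ℝ)) (K := k) (fun j ↦ ?_)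
    summable_towerTail towerTail_nonneg (fun j _ ↦ ?_) fun j hj ↦ ?_).trans
    (add_le_add_left (sum_towerWeight_le k) _)
  · split_ifs
    exacts [le_rfl, towerSeries.weight_nonneg hs j]
  · split_ifs
    exacts [(towerWeight_pos j).le, weight_towerSeries_le_towerWeight _ j]
  · split_ifs with hjk
    · exact towerTail_nonneg j
    · have hle : 1 / towerDivisor k ≤ towerDen j := by
        refine (one_div_towerDivisor_le k).trans ?_
        rw [← cast_towerDen_succ]
        exact_mod_cast towerDen_strictMono.monotone (by omega : k + 1 ≤ j)
      exact weight_towerSeries_le_towerTail hs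
        ((pow_le_pow_left₀ hs hle 2).trans (towerDen_sq_le j))

lemma tendsto_offWeight_towerSeries :
    Tendsto (fun k ↦ towerSeries.offWeight k (1 / towerDivisor k) / towerWeight k)
      atTop (𝓝 0) := by
  have hlin : Tendsto (fun n : ℕ ↦ (n : ℝ) * (1 / 2 : ℝ) ^ n) atTop (𝓝 0) :=
    tendsto_self_mul_const_pow_of_lt_one (by norm_num) (by norm_num)
  have hconst : Tendsto (fun n : ℕ ↦ (1 / 2 : ℝ) ^ n) atTop (𝓝 0) :=
    tendsto_pow_atTop_nhds_zero_of_lt_one (by norm_num) (by norm_num)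
  have hlim := (hlin.add (hconst.const_mul (∑' j, towerTail j))).comp
    towerDen_strictMono.tendsto_atTop
  rw [mul_zero, add_zero] at hlim
  refine squeeze_zero (fun k ↦ div_nonneg (towerSeries.offWeight_nonneg k
    (one_div_pos.2 (towerDivisor_pos k)).le) (towerWeight_pos k).le) (fun k ↦ ?_) hlim
  calc towerSeries.offWeight k (1 / towerDivisor k) / towerWeight k
      ≤ (towerDen k + ∑' j, towerTail j) / 2 ^ towerDen k := by
        rw [cast_towerWeight]
        gcongr
        exact offWeight_towerSeries_le k
    _ = _ := by
        simp only [Function.comp_apply, one_div_pow]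
        ring

lemma sum_range_succ_towerWeight_le_log {k : ℕ} {s : ℝ} (hk : 2 ^ towerWeight k ≤ s ^ 2) :
    ∑ j ∈ Finset.range (k + 1), (towerWeight j : ℝ) ≤ 4 / Real.log 2 * Real.log s := by
  have hlog := Real.log_le_log (by positivity) hk
  rw [Real.log_pow, Real.log_pow, Nat.cast_ofNat] at hlog
  rw [Finset.sum_range_succ, div_mul_eq_mul_div, le_div_iff₀ (Real.log_pos one_lt_two)]
  have hsum := (sum_towerWeight_le k).trans (cast_towerDen_le_towerWeight k)
  nlinarith [Real.log_pos one_lt_two]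

lemma totalWeight_towerSeries_le {s : ℝ} (hs : 1 ≤ s) :
    towerSeries.totalWeight s ≤ 4 / Real.log 2 * Real.log s + ∑' j, towerTail j := by
  classical
  have hs' : 0 ≤ s := zero_le_one.trans hs
  have hex : ∃ K, s ^ 2 < 2 ^ towerWeight K :=
    (((tendsto_pow_atTop_atTop_of_one_lt one_lt_two).comp
      tendsto_towerWeight).eventually_gt_atTop (s ^ 2)).exists
  have hsum : ∑ j ∈ Finset.range (Nat.find hex), (towerWeight j : ℝ) ≤
      4 / Real.log 2 * Real.log s := by
    rcases hK : Nat.find hex with _ | k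
    · have := Real.log_pos one_lt_two
      have := Real.log_nonneg hs
      rw [Finset.sum_range_zero]
      positivity
    · exact sum_range_succ_towerWeight_le_log
        (not_lt.1 (Nat.find_min hex (hK ▸ Nat.lt_succ_self k)))
  refine (tsum_le_sum_range_add_tsum (fun j ↦ towerSeries.weight_nonneg hs' j)
    summable_towerTail towerTail_nonneg (fun j _ ↦ weight_towerSeries_le_towerWeight s j)
    fun j hj ↦ ?_).trans (add_le_add_left hsum _)
  exact weight_towerSeries_le_towerTail hs' ((Nat.find_spec hex).le.trans
    (pow_le_pow_right₀ one_le_two (towerWeight_strictMono.monotone hj)))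

lemma exists_totalWeight_towerSeries_le :
    ∃ C, ∀ s, 1 ≤ s → towerSeries.totalWeight s ≤ C * (1 + Real.log s) := by
  refine ⟨4 / Real.log 2 + ∑' j, towerTail j, fun s hs ↦ ?_⟩
  have htail : 0 ≤ ∑' j, towerTail j := tsum_nonneg towerTail_nonneg
  have hfour : 0 ≤ 4 / Real.log 2 := by have := Real.log_pos one_lt_two; positivity
  nlinarith [totalWeight_towerSeries_le hs, mul_nonneg htail (Real.log_nonneg hs)]

end Weight

section Amplitude

lemma exp_mul_rpow_towerWeight (t : ℝ) (k : ℕ) :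
    Real.exp (Real.log 2 * (1 - t) * towerDen k) * (towerWeight k : ℝ) ^ t = towerWeight k := by
  have hexp : (towerWeight k : ℝ) = Real.exp (Real.log 2 * towerDen k) := by
    rw [cast_towerWeight, ← Real.rpow_natCast, Real.rpow_def_of_pos two_pos]
  rw [hexp, ← Real.exp_mul, ← Real.exp_add]
  congr 1
  ring

lemma log_one_div_towerDivisor_le (k : ℕ) : Real.log (1 / towerDivisor k) ≤ towerWeight k := by
  have hlog := Real.log_le_log (one_div_pos.2 (towerDivisor_pos k)) (one_div_towerDivisor_le k)
  rw [Real.log_pow] at hlog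
  have hlog_two : Real.log 2 ≤ 1 := Real.log_two_lt_d9.le.trans (by norm_num)
  exact hlog.trans (mul_le_of_le_one_right (towerWeight_pos k).le hlog_two)

lemma tendsto_towerAmplitude_div {t : ℝ} (ht : 0 ≤ t) (ht' : t < 1) :
    Tendsto (fun k ↦ towerAmplitude k / Real.log (1 / towerDivisor k) ^ t) atTop atTop := by
  have hden : Tendsto (fun k ↦ (towerDen k : ℝ)) atTop atTop :=
    tendsto_natCast_atTop_atTop.comp towerDen_strictMono.tendsto_atTop
  have hexp := (tendsto_exp_mul_div_rpow_atTop 1 (Real.log 2 * (1 - t))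
    (mul_pos (Real.log_pos one_lt_two) (sub_pos.2 ht'))).comp hden
  refine tendsto_atTop_mono' _ ?_ hexp
  filter_upwards [tendsto_towerDivisor.eventually (gt_mem_nhds one_pos)] with k hk
  have hlog : 0 < Real.log (1 / towerDivisor k) :=
    Real.log_pos ((one_lt_div (towerDivisor_pos k)).2 hk)
  have hrpow := Real.rpow_le_rpow hlog.le (log_one_div_towerDivisor_le k) ht
  rw [Function.comp_apply, Real.rpow_one, le_div_iff₀ (Real.rpow_pos_of_pos hlog t),
    div_mul_eq_mul_div, towerAmplitude]
  refine div_le_div_of_nonneg_right ?_ (towerDen_pos k).le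
  exact (mul_le_mul_of_nonneg_left hrpow (Real.exp_pos _).le).trans_eq
    (exp_mul_rpow_towerWeight t k)

end Amplitude

lemma isResonant_towerSeries : towerSeries.IsResonant where
  tendsto_divisor := tendsto_towerDivisor.congr fun j ↦ (divisor_towerSeries j).symm
  exists_totalWeight_le := exists_totalWeight_towerSeries_le
  tendsto_offWeight := by
    simp only [divisor_towerSeries]
    exact tendsto_offWeight_towerSeries.congr fun k ↦
      congrArg (_ / ·) (towerDen_mul_towerAmplitude k).symm
  tendsto_amplitude_div t ht ht' := by
    simp only [divisor_towerSeries]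
    exact tendsto_towerAmplitude_div ht ht'

end Tower

/-- There exists a weakly mixing `C^∞` volume-preserving diffeomorphism `T`
of `𝕋²` whose upper topological slow entropy with respect to the logarithmic scaling
family `a^{ln}_m(t) = (ln m)^t` equals `1`. -/
theorem stmt1 :
    ∃ T : Torus2 → Torus2,
      IsCkTorusDiffeo ⊤ T ∧
      MeasurePreserving T (volume : Measure Torus2) volume ∧
      WeaklyMixing T (volume : Measure Torus2) ∧
      HasUpperTopSlowEntropy T logScale 1 := by
  exact ⟨towerSeries.timeChange.torusFlow 1,
    towerSeries.timeChange.isCkTorusDiffeo_torusFlow 1,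
    towerSeries.timeChange.measurePreserving_torusFlow 1,
    isResonant_towerSeries.weaklyMixing_torusFlow,
    isResonant_towerSeries.hasUpperTopSlowEntropy_torusFlow⟩
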